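/- arXiv:0905.4553 — 3 statements merged into one kernel-verified Lean document; each statement's English description precedes it below -/
import Mathlib

section
/- Let f : ℝ → ℝ be C³ with antiderivative F (F' = f, F(0) = 0), V(s; a, c) = F(s) − (c/2)s² − a·s, and let u(x; a, E, c) be a periodic traveling wave family of the gKdV equation: Ω ⊆ ℝ³ open; u_− < u_+ C¹ on Ω with V(u_±; a, c) = E, ∂V/∂s(u_−; a, c) < 0, ∂V/∂s(u_+; a, c) > 0, V(·; a, c) < E on (u_−, u_+); T(a,E,c) > 0 C¹; u jointly C³ with u_xx + f(u) − c·u = a, (1/2)u_x² + F(u) − (c/2)u² − a·u = E, u(x + T) = u(x), u(0) = u_−, u_x(0) = 0; M = ∫₀^T u dx, P = ∫₀^T u² dx. For (μ, k) ∈ ℂ × ℝ let Y(x; μ, k) solve Y_x = H(x; μ, k)·Y, Y(0) = I, where H has rows (0, 1, 0), (0, 0, 1), (−μ − f''(u(x))·u_x(x), c + k² − f'(u(x)), 0), and let D(μ, k) = det(Y(T; μ, k) − I). Fix (a₀, E₀, c₀) ∈ Ω and suppose that at this point the Jacobian determinants satisfy {T,M,P}_{a,E,c} > 0 and {T,M}_{a,E}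 > 0. Then there exists k₀ > 0 such that for every real k with 0 < |k| < k₀ there exists μ ∈ ℂ with Re μ > 0 and D(μ, k) = 0. -/
/-!
For real `μ` the Evans function is real, and it changes sign on the positive real axis at distance
of order `|k|` from the origin.

Write `𝓛ₖ = -∂² + c + k² - f'(u)`, so that the spectral problem is `(𝓛ₖ v)' = μ v`. Two of the
three jumps of a solution over one period are known exactly (`Profile.jump_L`, `Profile.jump_v`):
integrating the equation gives the jump of `𝓛ₖ v` as `μ ∫ v`, and pairing `𝓛ₖ v` with the
translation mode `u'` gives the jump of `v` through `k² ∫ u' v` and `μ ∫ u v`. Hence the determinant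
of the jumps of three solutions is `-μ / u''(0)` times a determinant of averages (`det_jump`), and
the averages are needed to leading order only.

At `μ = k = 0` the solutions are `u'`, `u_a`, `u_E`, and `𝓛₀ u_c = -u` corrects the first one.
Along a ray `μ = z |k|` the solutions with the corresponding initial data stay within `O(k²)` of
`u' - μ u_c` and within `O(k)` of `u_a` and `u_E` by Grönwall (`translation_column`,
`variation_column`). The jumps of `∂ₓ u_a`, `∂ₓ u_E`, `∂ₓ u_c` are `-u''(0)` times the derivatives
of the period, since `u'` vanishes at both ends for every parameter value. The initial data have
determinant tending to `-1`, by the energy relation differentiated in `E`. This yields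
(`evans_expansion`)

  `D(z |k|, k) = z (‖u'‖² {T,M} - ½ z² {T,M,P}) |k|³ + o(|k|³)`.

Both Jacobians being positive, the coefficient is positive for small `z > 0` and negative for
large `z`, so for small `k ≠ 0` the continuous function `D(·, k)` has a zero between two rays
(`exists_positive_root`).

The families of waves enter only through `family_variation`, `family_energy` and `family_mass`,
which differentiate the profile equation, the energy relation, and `T`, `M`, `P` along a direction
in parameter space.
-/

open MeasureTheory intervalIntegral

namespace GZK

open Set Filter Topology

/-! ### The linear problem and a Grönwall estimate -/

/-- `(v₀, v₁, v₂) = (v, v', v'')` solves `v''' = (r - μ) v + (q + κ) v' + g`. With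
`q = c - f'(u)`, `r = q'`, `κ = k²` and `g = 0` this is the spectral problem `(𝓛ₖ v)' = μ v`. -/
structure ForcedSol (r q : ℝ → ℝ) (μ κ : ℝ) (g v₀ v₁ v₂ : ℝ → ℝ) : Prop where
  d₀ : ∀ x, HasDerivAt v₀ (v₁ x) x
  d₁ : ∀ x, HasDerivAt v₁ (v₂ x) x
  d₂ : ∀ x, HasDerivAt v₂ ((r x - μ) * v₀ x + (q x + κ) * v₁ x + g x) x

lemma ForcedSol.cont₀ {r q : ℝ → ℝ} {μ κ : ℝ} {g v₀ v₁ v₂ : ℝ → ℝ}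
    (h : ForcedSol r q μ κ g v₀ v₁ v₂) : Continuous v₀ :=
  continuous_iff_continuousAt.2 fun x => (h.d₀ x).continuousAt

/-- Grönwall estimate: with zero initial data the response is bounded by the forcing, uniformly
for `μ` and `κ` in a bounded set. -/
lemma forced_bound {r q : ℝ → ℝ} (hr : Continuous r) (hq : Continuous q) {T : ℝ} (hT : 0 < T)
    (R : ℝ) : ∃ C, 0 ≤ C ∧ ∀ (μ κ ε : ℝ) (g e₀ e₁ e₂ : ℝ → ℝ), |μ| ≤ R → |κ| ≤ R →
      ForcedSol r q μ κ g e₀ e₁ e₂ → e₀ 0 = 0 → e₁ 0 = 0 → e₂ 0 = 0 →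
      (∀ x ∈ Icc 0 T, |g x| ≤ ε) →
      ∀ x ∈ Icc 0 T, |e₀ x| ≤ C * ε ∧ |e₁ x| ≤ C * ε ∧ |e₂ x| ≤ C * ε := by
  obtain ⟨Kr, hKr⟩ := (isCompact_Icc (a := (0:ℝ)) (b := T)).exists_bound_of_continuousOn
    hr.continuousOn
  obtain ⟨Kq, hKq⟩ := (isCompact_Icc (a := (0:ℝ)) (b := T)).exists_bound_of_continuousOn
    hq.continuousOn
  set K : ℝ := |Kr| + |Kq| + 2 * |R| + 1 with hK
  have hKpos : 0 < K := by positivity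
  refine ⟨Real.exp (K * T) / K, by positivity, ?_⟩
  intro μ κ ε g e₀ e₁ e₂ hμ hκ hs h0 h1 h2 hg x hx
  have hε : 0 ≤ ε := (abs_nonneg _).trans (hg 0 ⟨le_rfl, hT.le⟩)
  set F : ℝ → ℝ × ℝ × ℝ := fun x => (e₀ x, e₁ x, e₂ x)
  have hF : ∀ x, HasDerivAt F (e₁ x, e₂ x, (r x - μ) * e₀ x + (q x + κ) * e₁ x + g x) x :=
    fun x => (hs.d₀ x).prodMk ((hs.d₁ x).prodMk (hs.d₂ x))
  have key := norm_le_gronwallBound_of_norm_deriv_right_le (f := F) (δ := 0) (K := K) (ε := ε)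
    (a := 0) (b := T) (fun x _ => (hF x).continuousAt.continuousWithinAt)
    (fun x _ => (hF x).hasDerivWithinAt) (by simp [F, h0, h1, h2]) (by
      intro y hy
      have hy' : y ∈ Icc 0 T := ⟨hy.1, hy.2.le⟩
      have n0 : |e₀ y| ≤ ‖F y‖ := norm_fst_le (F y)
      have n1 : |e₁ y| ≤ ‖F y‖ := (norm_fst_le (F y).2).trans (norm_snd_le (F y))
      have n2 : |e₂ y| ≤ ‖F y‖ := (norm_snd_le (F y).2).trans (norm_snd_le (F y))
      have hn : 0 ≤ ‖F y‖ := norm_nonneg _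
      have b1 : |r y - μ| ≤ |Kr| + |R| := by
        have := hKr y hy'
        rw [Real.norm_eq_abs] at this
        calc |r y - μ| ≤ |r y| + |μ| := abs_sub _ _
          _ ≤ _ := add_le_add (this.trans (le_abs_self _)) (hμ.trans (le_abs_self _))
      have b2 : |q y + κ| ≤ |Kq| + |R| := by
        have := hKq y hy'
        rw [Real.norm_eq_abs] at this
        calc |q y + κ| ≤ |q y| + |κ| := abs_add_le _ _
          _ ≤ _ := add_le_add (this.trans (le_abs_self _)) (hκ.trans (le_abs_self _))
      have h1K : ‖F y‖ ≤ K * ‖F y‖ + ε := by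
        have : 1 ≤ K := by
          rw [hK]; linarith [abs_nonneg Kr, abs_nonneg Kq, abs_nonneg R]
        nlinarith
      have h3 : |(r y - μ) * e₀ y + (q y + κ) * e₁ y + g y| ≤ K * ‖F y‖ + ε := by
        calc _ ≤ |(r y - μ) * e₀ y| + |(q y + κ) * e₁ y| + |g y| := abs_add_three _ _ _
          _ ≤ (|Kr| + |R|) * ‖F y‖ + (|Kq| + |R|) * ‖F y‖ + ε := by
            rw [abs_mul, abs_mul]
            gcongr
            exact hg y hy'
          _ ≤ K * ‖F y‖ + ε := by rw [hK]; nlinarith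
      exact norm_prod_le_iff.2 ⟨n1.trans h1K, norm_prod_le_iff.2 ⟨n2.trans h1K, h3⟩⟩) x hx
  have hb : gronwallBound 0 K ε (x - 0) ≤ Real.exp (K * T) / K * ε := by
    rw [gronwallBound_of_K_ne_0 hKpos.ne']
    simp only [sub_zero, zero_mul, zero_add]
    have : Real.exp (K * x) ≤ Real.exp (K * T) :=
      Real.exp_le_exp.2 (mul_le_mul_of_nonneg_left hx.2 hKpos.le)
    calc ε / K * (Real.exp (K * x) - 1) ≤ ε / K * Real.exp (K * T) := by gcongr; linarith
      _ = _ := by ring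
  have n0 : |e₀ x| ≤ ‖F x‖ := norm_fst_le (F x)
  have n1 : |e₁ x| ≤ ‖F x‖ := (norm_fst_le (F x).2).trans (norm_snd_le (F x))
  have n2 : |e₂ x| ≤ ‖F x‖ := (norm_snd_le (F x).2).trans (norm_snd_le (F x))
  have := key.trans hb
  exact ⟨n0.trans this, n1.trans this, n2.trans this⟩

/-! ### Exact identities for the jumps over one period -/

/-- The profile `φ = u` at a fixed parameter value with `ψ = u'`, `σ = u''`, the potential
`q = c - f'(u)` of the linearization and `r = q'`, all `T`-periodic, with the phase normalized by
`u'(0) = 0`. -/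
structure Profile (φ ψ σ q r : ℝ → ℝ) (T : ℝ) : Prop where
  dφ : ∀ x, HasDerivAt φ (ψ x) x
  dψ : ∀ x, HasDerivAt ψ (σ x) x
  dσ : ∀ x, HasDerivAt σ (q x * ψ x) x
  dq : ∀ x, HasDerivAt q (r x) x
  cr : Continuous r
  Tpos : 0 < T
  pφ : φ T = φ 0
  ψ0 : ψ 0 = 0
  ψT : ψ T = 0
  pσ : σ T = σ 0
  pq : q T = q 0

/-- `α` is a parameter derivative of the profile and `β = α'`: it satisfies `𝓛₀ α = -s`, and
`τ` is the corresponding derivative of the period. The field `jump` is the derivative of the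
statement that `u'` vanishes at both ends of the period, with `σ₀ = u''(0)`. -/
structure Variation (q s : ℝ → ℝ) (σ₀ T : ℝ) (α β : ℝ → ℝ) (τ : ℝ) : Prop where
  dα : ∀ x, HasDerivAt α (β x) x
  dβ : ∀ x, HasDerivAt β (q x * α x + s x) x
  jump : β T - β 0 = -τ * σ₀

namespace Profile

variable {φ ψ σ q r : ℝ → ℝ} {T : ℝ}

lemma cφ (W : Profile φ ψ σ q r T) : Continuous φ :=
  continuous_iff_continuousAt.2 fun x => (W.dφ x).continuousAt
lemma cψ (W : Profile φ ψ σ q r T) : Continuous ψ :=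
  continuous_iff_continuousAt.2 fun x => (W.dψ x).continuousAt
lemma cσ (W : Profile φ ψ σ q r T) : Continuous σ :=
  continuous_iff_continuousAt.2 fun x => (W.dσ x).continuousAt
lemma cq (W : Profile φ ψ σ q r T) : Continuous q :=
  continuous_iff_continuousAt.2 fun x => (W.dq x).continuousAt

/-- Exact solvability condition from the conservation law `(𝓛ₖ v)' = μ v`. -/
lemma jump_L (W : Profile φ ψ σ q r T) {μ κ : ℝ} {v₀ v₁ v₂ : ℝ → ℝ}
    (h : ForcedSol r q μ κ 0 v₀ v₁ v₂) :
    -(v₂ T - v₂ 0) + (q 0 + κ) * (v₀ T - v₀ 0) = μ * ∫ x in (0:ℝ)..T, v₀ x := by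
  have hd : ∀ x, HasDerivAt (fun x => -v₂ x + (q x + κ) * v₀ x) (μ * v₀ x) x := by
    intro x
    have := (h.d₂ x).neg.add (((W.dq x).add_const κ).mul (h.d₀ x))
    refine this.congr_deriv ?_
    simp only [Pi.zero_apply]
    ring
  have := intervalIntegral.integral_eq_sub_of_hasDerivAt (a := 0) (b := T) (fun x _ => hd x)
    ((continuous_const.mul h.cont₀).intervalIntegrable _ _)
  rw [intervalIntegral.integral_const_mul, W.pq] at this
  rw [this]; ring

/-- Exact solvability condition from pairing the equation with the translation mode `ψ = u'`. -/
lemma jump_v (W : Profile φ ψ σ q r T) {μ κ : ℝ} {v₀ v₁ v₂ : ℝ → ℝ}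
    (h : ForcedSol r q μ κ 0 v₀ v₁ v₂) :
    σ 0 * (v₀ T - v₀ 0) - φ 0 * (μ * ∫ x in (0:ℝ)..T, v₀ x) =
      -κ * (∫ x in (0:ℝ)..T, ψ x * v₀ x) - μ * ∫ x in (0:ℝ)..T, φ x * v₀ x := by
  have hd : ∀ x, HasDerivAt
      (fun x => -(ψ x * v₁ x) + σ x * v₀ x - φ x * (-v₂ x + (q x + κ) * v₀ x))
      (-κ * (ψ x * v₀ x) - μ * (φ x * v₀ x)) x := by
    intro x
    have hL := (h.d₂ x).neg.add (((W.dq x).add_const κ).mul (h.d₀ x))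
    have := ((((W.dψ x).mul (h.d₁ x)).neg).add ((W.dσ x).mul (h.d₀ x))).sub
      ((W.dφ x).mul hL)
    refine this.congr_deriv ?_
    simp only [Pi.zero_apply, Pi.add_apply, Pi.neg_apply, Pi.mul_apply]
    ring
  have c1 : Continuous fun x => ψ x * v₀ x := W.cψ.mul h.cont₀
  have c2 : Continuous fun x => φ x * v₀ x := W.cφ.mul h.cont₀
  have := intervalIntegral.integral_eq_sub_of_hasDerivAt (a := 0) (b := T) (fun x _ => hd x)
    (((continuous_const.mul c1).sub (continuous_const.mul c2)).intervalIntegrable _ _)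
  have i1 : IntervalIntegrable (fun x => -κ * (ψ x * v₀ x)) volume 0 T :=
    (continuous_const.mul c1).intervalIntegrable _ _
  have i2 : IntervalIntegrable (fun x => μ * (φ x * v₀ x)) volume 0 T :=
    (continuous_const.mul c2).intervalIntegrable _ _
  rw [intervalIntegral.integral_sub i1 i2, intervalIntegral.integral_const_mul,
    intervalIntegral.integral_const_mul, W.ψ0, W.ψT, W.pσ, W.pq, W.pφ] at this
  rw [this, ← W.jump_L h]; ring

end Profile

/-! ### Approximate solutions along rays -/

/-- Comparison of an exact family of solutions with approximate ones, along `μ = z |k|`,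
`κ = k²`. The residual size `|k|ⁿ` is inherited by the error. -/
lemma approx_bound {r q : ℝ → ℝ} (hr : Continuous r) (hq : Continuous q) {T : ℝ} (hT : 0 < T)
    (z C₀ : ℝ) (n : ℕ) {g v₀ v₁ v₂ a₀ a₁ a₂ : ℝ → ℝ → ℝ}
    (hv : ∀ k, ForcedSol r q (z * |k|) (k ^ 2) 0 (v₀ k) (v₁ k) (v₂ k))
    (ha : ∀ k, ForcedSol r q (z * |k|) (k ^ 2) (g k) (a₀ k) (a₁ k) (a₂ k))
    (i0 : ∀ k, v₀ k 0 = a₀ k 0) (i1 : ∀ k, v₁ k 0 = a₁ k 0) (i2 : ∀ k, v₂ k 0 = a₂ k 0)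
    (hg : ∀ k, |k| ≤ 1 → ∀ x ∈ Icc 0 T, |g k x| ≤ C₀ * |k| ^ n) :
    ∃ C, 0 ≤ C ∧ ∀ k, |k| ≤ 1 → ∀ x ∈ Icc 0 T,
      |v₀ k x - a₀ k x| ≤ C * |k| ^ n ∧ |v₁ k x - a₁ k x| ≤ C * |k| ^ n := by
  obtain ⟨C, hC, H⟩ := forced_bound hr hq hT (|z| + 1)
  refine ⟨C * |C₀|, by positivity, fun k hk x hx => ?_⟩
  have hs : ForcedSol r q (z * |k|) (k ^ 2) (-(g k)) (v₀ k - a₀ k) (v₁ k - a₁ k)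
      (v₂ k - a₂ k) := by
    refine ⟨fun x => ((hv k).d₀ x).sub ((ha k).d₀ x), fun x => ((hv k).d₁ x).sub ((ha k).d₁ x),
      fun x => ?_⟩
    refine (((hv k).d₂ x).sub ((ha k).d₂ x)).congr_deriv ?_
    simp only [Pi.sub_apply, Pi.neg_apply, Pi.zero_apply]
    ring
  have hμ : |z * (|k|)| ≤ |z| + 1 := by
    rw [abs_mul, abs_abs]
    nlinarith [abs_nonneg z, abs_nonneg k]
  have hκ : |k ^ 2| ≤ |z| + 1 := by
    rw [abs_pow]
    nlinarith [abs_nonneg z, abs_nonneg k]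
  obtain ⟨h0, h1, -⟩ := H _ _ (|C₀| * |k| ^ n) _ _ _ _ hμ hκ hs (by simp [i0]) (by simp [i1])
    (by simp [i2]) (fun x hx => by
      rw [Pi.neg_apply, abs_neg]
      exact (hg k hk x hx).trans (by gcongr; exact le_abs_self _)) x hx
  simp only [Pi.sub_apply] at h0 h1
  exact ⟨by rwa [mul_assoc], by rwa [mul_assoc]⟩

lemma tendsto_abs_punctured : Tendsto (fun k : ℝ => |k|) (𝓝[≠] 0) (𝓝 0) := by
  have : Tendsto (fun k : ℝ => |k|) (𝓝 0) (𝓝 |0|) := continuous_abs.tendsto 0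
  rw [abs_zero] at this
  exact this.mono_left nhdsWithin_le_nhds

lemma eventually_small : ∀ᶠ k : ℝ in 𝓝[≠] 0, |k| ≤ 1 ∧ 0 < |k| := by
  filter_upwards [tendsto_abs_punctured.eventually (Iio_mem_nhds one_pos),
    self_mem_nhdsWithin] with k hk hk'
  exact ⟨hk.le, abs_pos.2 hk'⟩

lemma tendsto_of_error {X A : ℝ → ℝ} {C L : ℝ} {m : ℕ}
    (h : ∀ k, |k| ≤ 1 → |X k - A k| ≤ C * |k| ^ (m + 1))
    (hA : Tendsto (fun k => A k / |k| ^ m) (𝓝[≠] 0) (𝓝 L)) :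
    Tendsto (fun k => X k / |k| ^ m) (𝓝[≠] 0) (𝓝 L) := by
  have h0 : Tendsto (fun k => (X k - A k) / |k| ^ m) (𝓝[≠] 0) (𝓝 0) := by
    refine squeeze_zero_norm' (a := fun k => C * |k|) ?_
      (by simpa using tendsto_abs_punctured.const_mul C)
    filter_upwards [eventually_small] with k hk
    rw [norm_div, Real.norm_eq_abs, norm_pow, Real.norm_eq_abs, abs_abs,
      div_le_iff₀ (pow_pos hk.2 _)]
    refine (h k hk.1).trans (le_of_eq ?_)
    ring
  have := h0.add hA
  rw [zero_add] at this
  refine this.congr fun k => ?_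
  ring

lemma integral_error {T C : ℝ} (hT : 0 < T) {h v a : ℝ → ℝ}
    (hh : Continuous h) (hv : Continuous v) (ha : Continuous a) {Kh ε : ℝ}
    (hKh : ∀ x ∈ Icc 0 T, |h x| ≤ Kh) (hva : ∀ x ∈ Icc 0 T, |v x - a x| ≤ C * ε) :
    |(∫ x in (0:ℝ)..T, h x * v x) - ∫ x in (0:ℝ)..T, h x * a x| ≤ (Kh * C * T) * ε := by
  have i1 : IntervalIntegrable (fun x => h x * v x) volume 0 T :=
    (hh.mul hv).intervalIntegrable _ _
  have i2 : IntervalIntegrable (fun x => h x * a x) volume 0 T :=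
    (hh.mul ha).intervalIntegrable _ _
  rw [← intervalIntegral.integral_sub i1 i2]
  have := intervalIntegral.norm_integral_le_of_norm_le_const (a := 0) (b := T)
    (f := fun x => h x * v x - h x * a x) (C := Kh * (C * ε)) (fun x hx => by
      rw [uIoc_of_le hT.le] at hx
      have hx' : x ∈ Icc 0 T := ⟨hx.1.le, hx.2⟩
      rw [← mul_sub, norm_mul]
      exact mul_le_mul (hKh x hx') (hva x hx') (norm_nonneg _)
        ((abs_nonneg _).trans (hKh x hx')))
  rw [sub_zero, abs_of_pos hT] at this
  refine this.trans (le_of_eq ?_)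
  ring

/-- The weighted integrals of an exact family have the limits of those of the approximation. -/
lemma tendsto_integral_of_approx {T C L : ℝ} (hT : 0 < T) {m : ℕ}
    {h : ℝ → ℝ} {v a : ℝ → ℝ → ℝ} (hh : Continuous h) (hv : ∀ k, Continuous (v k))
    (ha : ∀ k, Continuous (a k))
    (hva : ∀ k, |k| ≤ 1 → ∀ x ∈ Icc 0 T, |v k x - a k x| ≤ C * |k| ^ (m + 1))
    (hA : Tendsto (fun k => (∫ x in (0:ℝ)..T, h x * a k x) / |k| ^ m) (𝓝[≠] 0) (𝓝 L)) :
    Tendsto (fun k => (∫ x in (0:ℝ)..T, h x * v k x) / |k| ^ m) (𝓝[≠] 0) (𝓝 L) := by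
  obtain ⟨Kh, hKh⟩ := (isCompact_Icc (a := (0:ℝ)) (b := T)).exists_bound_of_continuousOn
    hh.continuousOn
  exact tendsto_of_error (fun k hk => integral_error hT hh (hv k) (ha k) hKh (hva k hk)) hA

lemma exists_abs_bound {h : ℝ → ℝ} (hh : Continuous h) (T : ℝ) :
    ∃ K, 0 ≤ K ∧ ∀ x ∈ Icc 0 T, |h x| ≤ K := by
  obtain ⟨K, hK⟩ := (isCompact_Icc (a := (0:ℝ)) (b := T)).exists_bound_of_continuousOn
    hh.continuousOn
  exact ⟨|K|, abs_nonneg _, fun x hx => (hK x hx).trans (le_abs_self _)⟩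

lemma Variation.cα {q s α β : ℝ → ℝ} {σ₀ T τ : ℝ} (A : Variation q s σ₀ T α β τ) :
    Continuous α := continuous_iff_continuousAt.2 fun x => (A.dα x).continuousAt

lemma Variation.cβ {q s α β : ℝ → ℝ} {σ₀ T τ : ℝ} (A : Variation q s σ₀ T α β τ) :
    Continuous β := continuous_iff_continuousAt.2 fun x => (A.dβ x).continuousAt

section columns

variable {φ ψ σ q r : ℝ → ℝ} {T : ℝ}

/-- Limits for the solutions that start on a variation `α` with `𝓛₀ α = -s`, `s` constant: such
`α` solve the problem at `μ = k = 0`. -/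
lemma variation_column (W : Profile φ ψ σ q r T) {s z τ : ℝ} {α β : ℝ → ℝ}
    (A : Variation q (fun _ => s) (σ 0) T α β τ) {v₀ v₁ v₂ : ℝ → ℝ → ℝ}
    (hv : ∀ k, ForcedSol r q (z * |k|) (k ^ 2) 0 (v₀ k) (v₁ k) (v₂ k))
    (i0 : ∀ k, v₀ k 0 = α 0) (i1 : ∀ k, v₁ k 0 = β 0) (i2 : ∀ k, v₂ k 0 = q 0 * α 0 + s) :
    Tendsto (fun k => ∫ x in (0:ℝ)..T, φ x * v₀ k x) (𝓝[≠] 0) (𝓝 (∫ x in (0:ℝ)..T, φ x * α x)) ∧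
    Tendsto (fun k => ∫ x in (0:ℝ)..T, ψ x * v₀ k x) (𝓝[≠] 0) (𝓝 (∫ x in (0:ℝ)..T, ψ x * α x)) ∧
    Tendsto (fun k => ∫ x in (0:ℝ)..T, v₀ k x) (𝓝[≠] 0) (𝓝 (∫ x in (0:ℝ)..T, α x)) ∧
    Tendsto (fun k => v₁ k T - v₁ k 0) (𝓝[≠] 0) (𝓝 (-τ * σ 0)) := by
  obtain ⟨Ka, hKa, Ba⟩ := exists_abs_bound A.cα T
  obtain ⟨Kb, hKb, Bb⟩ := exists_abs_bound A.cβ T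
  have ha : ∀ k : ℝ, ForcedSol r q (z * |k|) (k ^ 2)
      (fun x => z * |k| * α x - k ^ 2 * β x) α β (fun x => q x * α x + s) := by
    refine fun k => ⟨A.dα, A.dβ, fun x => ?_⟩
    refine (((W.dq x).mul (A.dα x)).add_const s).congr_deriv ?_
    ring
  obtain ⟨C, -, H⟩ := approx_bound W.cr W.cq W.Tpos z (|z| * Ka + Kb) 1 hv ha i0 i1 i2 (by
    intro k hk x hx
    have h1 : |z * |k| * α x| ≤ |z| * |k| * Ka := by
      rw [abs_mul, abs_mul, abs_abs]
      gcongr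
      exact Ba x hx
    have h2 : |k ^ 2 * β x| ≤ |k| * Kb := by
      rw [abs_mul, abs_pow]
      have : |k| ^ 2 ≤ |k| := by nlinarith [abs_nonneg k]
      gcongr
      exact Bb x hx
    calc _ ≤ |z * |k| * α x| + |k ^ 2 * β x| := abs_sub _ _
      _ ≤ |z| * |k| * Ka + |k| * Kb := add_le_add h1 h2
      _ = _ := by ring)
  have key : ∀ h : ℝ → ℝ, Continuous h →
      Tendsto (fun k => ∫ x in (0:ℝ)..T, h x * v₀ k x) (𝓝[≠] 0)
        (𝓝 (∫ x in (0:ℝ)..T, h x * α x)) := by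
    intro h hh
    have := tendsto_integral_of_approx (m := 0) (L := ∫ x in (0:ℝ)..T, h x * α x) W.Tpos hh
      (fun k => (hv k).cont₀) (fun _ => A.cα) (fun k hk x hx => (H k hk x hx).1)
      (by simp only [pow_zero, div_one]; exact tendsto_const_nhds)
    simpa only [pow_zero, div_one] using this
  refine ⟨key φ W.cφ, key ψ W.cψ, ?_, ?_⟩
  · simpa only [one_mul] using key (fun _ => 1) continuous_const
  · have := tendsto_of_error (X := fun k => v₁ k T - v₁ k 0) (A := fun _ => -τ * σ 0) (C := C)
      (m := 0) (L := -τ * σ 0) (fun k hk => by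
        have := (H k hk T ⟨W.Tpos.le, le_rfl⟩).2
        rw [← A.jump, i1]
        simpa using this) (by simp only [pow_zero, div_one]; exact tendsto_const_nhds)
    simpa only [pow_zero, div_one] using this

/-- Limits for the solution that continues the translation mode: it agrees with `ψ - μ u_c` up to
`O(k²)`, because `(𝓛₀ u_c)' = -ψ`. -/
lemma translation_column (W : Profile φ ψ σ q r T) {z τ : ℝ} {α β : ℝ → ℝ}
    (A : Variation q φ (σ 0) T α β τ) {v₀ v₁ v₂ : ℝ → ℝ → ℝ}
    (hv : ∀ k, ForcedSol r q (z * |k|) (k ^ 2) 0 (v₀ k) (v₁ k) (v₂ k))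
    (i0 : ∀ k, v₀ k 0 = ψ 0 - z * |k| * α 0) (i1 : ∀ k, v₁ k 0 = σ 0 - z * |k| * β 0)
    (i2 : ∀ k, v₂ k 0 = q 0 * ψ 0 - z * |k| * (q 0 * α 0 + φ 0)) :
    Tendsto (fun k => (∫ x in (0:ℝ)..T, φ x * v₀ k x) / |k|) (𝓝[≠] 0)
      (𝓝 (-z * ∫ x in (0:ℝ)..T, φ x * α x)) ∧
    Tendsto (fun k => ∫ x in (0:ℝ)..T, ψ x * v₀ k x) (𝓝[≠] 0) (𝓝 (∫ x in (0:ℝ)..T, ψ x ^ 2)) ∧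
    Tendsto (fun k => (∫ x in (0:ℝ)..T, v₀ k x) / |k|) (𝓝[≠] 0)
      (𝓝 (-z * ∫ x in (0:ℝ)..T, α x)) ∧
    Tendsto (fun k => (v₁ k T - v₁ k 0) / |k|) (𝓝[≠] 0) (𝓝 (z * τ * σ 0)) := by
  obtain ⟨Ka, hKa, Ba⟩ := exists_abs_bound A.cα T
  obtain ⟨Kb, hKb, Bb⟩ := exists_abs_bound A.cβ T
  obtain ⟨Ks, hKs, Bs⟩ := exists_abs_bound W.cσ T
  have ha : ∀ k : ℝ, ForcedSol r q (z * |k|) (k ^ 2)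
      (fun x => -((z * |k|) ^ 2 * α x + k ^ 2 * (σ x - z * |k| * β x)))
      (fun x => ψ x - z * |k| * α x) (fun x => σ x - z * |k| * β x)
      (fun x => q x * ψ x - z * |k| * (q x * α x + φ x)) := by
    refine fun k => ⟨fun x => (W.dψ x).sub ((A.dα x).const_mul _),
      fun x => (W.dσ x).sub ((A.dβ x).const_mul _), fun x => ?_⟩
    refine (((W.dq x).mul (W.dψ x)).sub
      ((((W.dq x).mul (A.dα x)).add (W.dφ x)).const_mul (z * |k|))).congr_deriv ?_
    ring
  have hc : ∀ k : ℝ, Continuous fun x => ψ x - z * |k| * α x := fun k =>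
    W.cψ.sub (continuous_const.mul A.cα)
  obtain ⟨C, hC, H⟩ := approx_bound W.cr W.cq W.Tpos z (z ^ 2 * Ka + (Ks + |z| * Kb)) 2 hv ha
    i0 i1 i2 (by
    intro k hk x hx
    have h1 : |(z * |k|) ^ 2 * α x| ≤ z ^ 2 * |k| ^ 2 * Ka := by
      rw [abs_mul, abs_of_nonneg (sq_nonneg _), mul_pow]
      gcongr
      exact Ba x hx
    have h2 : |σ x - z * |k| * β x| ≤ Ks + |z| * Kb := by
      refine (abs_sub _ _).trans (add_le_add (Bs x hx) ?_)
      rw [abs_mul, abs_mul, abs_abs]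
      calc |z| * |k| * |β x| ≤ |z| * 1 * Kb := by gcongr; exact Bb x hx
        _ = _ := by ring
    have h3 : |k ^ 2 * (σ x - z * |k| * β x)| ≤ |k| ^ 2 * (Ks + |z| * Kb) := by
      rw [abs_mul, abs_pow]
      gcongr
    rw [abs_neg]
    calc _ ≤ _ := abs_add_le _ _
      _ ≤ z ^ 2 * |k| ^ 2 * Ka + |k| ^ 2 * (Ks + |z| * Kb) := add_le_add h1 h3
      _ = _ := by ring)
  have hψ : (∫ x in (0:ℝ)..T, ψ x) = 0 := by
    rw [intervalIntegral.integral_eq_sub_of_hasDerivAt (fun x _ => W.dφ x)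
      (W.cψ.intervalIntegrable _ _), W.pφ, sub_self]
  have hφψ : (∫ x in (0:ℝ)..T, φ x * ψ x) = 0 := by
    have hd : ∀ x, HasDerivAt (fun x => φ x * φ x / 2) (φ x * ψ x) x := fun x =>
      (((W.dφ x).mul (W.dφ x)).div_const 2).congr_deriv (by ring)
    rw [intervalIntegral.integral_eq_sub_of_hasDerivAt (fun x _ => hd x)
      ((W.cφ.mul W.cψ).intervalIntegrable _ _), W.pφ, sub_self]
  have split : ∀ h : ℝ → ℝ, Continuous h → ∀ k : ℝ,
      (∫ x in (0:ℝ)..T, h x * (ψ x - z * |k| * α x)) =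
        (∫ x in (0:ℝ)..T, h x * ψ x) - z * |k| * ∫ x in (0:ℝ)..T, h x * α x := by
    intro h hh k
    have j1 : IntervalIntegrable (fun x => h x * ψ x) volume 0 T :=
      (hh.mul W.cψ).intervalIntegrable _ _
    have j2 : IntervalIntegrable (fun x => z * |k| * (h x * α x)) volume 0 T :=
      (continuous_const.mul (hh.mul A.cα)).intervalIntegrable _ _
    rw [← intervalIntegral.integral_const_mul, ← intervalIntegral.integral_sub j1 j2]
    congr 1
    ext x
    ring
  have key : ∀ h : ℝ → ℝ, Continuous h → (∫ x in (0:ℝ)..T, h x * ψ x) = 0 →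
      Tendsto (fun k => (∫ x in (0:ℝ)..T, h x * v₀ k x) / |k|) (𝓝[≠] 0)
        (𝓝 (-z * ∫ x in (0:ℝ)..T, h x * α x)) := by
    intro h hh h0
    have := tendsto_integral_of_approx (m := 1) (L := -z * ∫ x in (0:ℝ)..T, h x * α x) W.Tpos hh
      (fun k => (hv k).cont₀) hc (fun k hk x hx => (H k hk x hx).1) (by
        refine tendsto_const_nhds.congr' ?_
        filter_upwards [eventually_small] with k hk
        rw [split h hh, h0, pow_one]
        field_simp [hk.2.ne']
        ring)
    simpa only [pow_one] using this
  refine ⟨key φ W.cφ hφψ, ?_, ?_, ?_⟩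
  · have := tendsto_integral_of_approx (m := 0) (C := C) (L := ∫ x in (0:ℝ)..T, ψ x ^ 2)
      W.Tpos W.cψ (fun k => (hv k).cont₀) hc (fun k hk x hx => by
        refine ((H k hk x hx).1).trans ?_
        have : |k| ^ 2 ≤ |k| := by nlinarith [abs_nonneg k]
        rw [zero_add, pow_one]
        gcongr) (by
        simp only [pow_zero, div_one]
        have h1 := (((tendsto_abs_punctured.const_mul z).mul_const
          (∫ x in (0:ℝ)..T, ψ x * α x)).const_sub (∫ x in (0:ℝ)..T, ψ x * ψ x))
        simp only [mul_zero, zero_mul, sub_zero] at h1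
        simp only [pow_two]
        refine h1.congr fun k => ?_
        rw [split ψ W.cψ])
    simpa only [pow_zero, div_one] using this
  · simpa only [one_mul] using key (fun _ => 1) continuous_const (by simpa using hψ)
  · have := tendsto_of_error (X := fun k => v₁ k T - v₁ k 0)
      (A := fun k => z * |k| * (τ * σ 0)) (C := C) (m := 1) (L := z * τ * σ 0) (fun k hk => by
        have := (H k hk T ⟨W.Tpos.le, le_rfl⟩).2
        refine le_trans (le_of_eq ?_) this
        congr 1
        rw [i1, W.pσ]
        linear_combination (-(z * |k|)) * A.jump) (by
        refine tendsto_const_nhds.congr' ?_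
        filter_upwards [eventually_small] with k hk
        rw [pow_one]
        field_simp [hk.2.ne'])
    simpa only [pow_one] using this

end columns

/-! ### Expansion of the Evans function and the sign change -/

lemma tendsto_det3 {l : Filter ℝ} {A : ℝ → Matrix (Fin 3) (Fin 3) ℝ} {B : Matrix (Fin 3) (Fin 3) ℝ}
    (h : ∀ i j, Tendsto (fun k => A k i j) l (𝓝 (B i j))) :
    Tendsto (fun k => (A k).det) l (𝓝 B.det) :=
  ((continuous_id.matrix_det).tendsto B).comp (tendsto_pi_nhds.2 fun i => tendsto_pi_nhds.2 (h i))

/-- Solutions are preserved by right multiplication of a matrix of solutions by a constant matrix: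
the columns are linear combinations. -/
lemma ForcedSol.comb {r q : ℝ → ℝ} {μ κ : ℝ} {Y : ℝ → Matrix (Fin 3) (Fin 3) ℝ}
    (h : ∀ j, ForcedSol r q μ κ 0 (fun x => Y x 0 j) (fun x => Y x 1 j) (fun x => Y x 2 j))
    (W : Matrix (Fin 3) (Fin 3) ℝ) (j : Fin 3) :
    ForcedSol r q μ κ 0 (fun x => (Y x * W) 0 j) (fun x => (Y x * W) 1 j)
      (fun x => (Y x * W) 2 j) := by
  simp only [Matrix.mul_apply, Fin.sum_univ_three]
  refine ⟨fun x => ?_, fun x => ?_, fun x => ?_⟩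
  · exact ((((h 0).d₀ x).mul_const _).add (((h 1).d₀ x).mul_const _)).add
      (((h 2).d₀ x).mul_const _)
  · exact ((((h 0).d₁ x).mul_const _).add (((h 1).d₁ x).mul_const _)).add
      (((h 2).d₁ x).mul_const _)
  · refine (((((h 0).d₂ x).mul_const (W 0 j)).add (((h 1).d₂ x).mul_const (W 1 j))).add
      (((h 2).d₂ x).mul_const (W 2 j))).congr_deriv ?_
    simp only [Pi.zero_apply]
    ring

section core

variable {φ ψ σ q r : ℝ → ℝ} {T : ℝ}

/-- The two exact solvability conditions turn the determinant of the jumps of three solutions into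
`-μ/σ₀` times a determinant of averages. -/
lemma det_jump (W : Profile φ ψ σ q r T) {μ κ : ℝ} {V : ℝ → Matrix (Fin 3) (Fin 3) ℝ}
    (h : ∀ j, ForcedSol r q μ κ 0 (fun x => V x 0 j) (fun x => V x 1 j) (fun x => V x 2 j)) :
    σ 0 * (V T - V 0).det = -μ * (Matrix.of ![
      fun j => -κ * (∫ x in (0:ℝ)..T, ψ x * V x 0 j) - μ * ∫ x in (0:ℝ)..T, φ x * V x 0 j,
      fun j => V T 1 j - V 0 1 j,
      fun j => ∫ x in (0:ℝ)..T, V x 0 j]).det := by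
  have e1 := fun j => W.jump_L (h j)
  have e2 := fun j => W.jump_v (h j)
  simp only [Matrix.det_fin_three, Matrix.sub_apply, Matrix.of_apply, Matrix.cons_val]
  simp only [← e2]
  have f2 : ∀ j, V T 2 j - V 0 2 j = (q 0 + κ) * (V T 0 j - V 0 0 j)
      - μ * ∫ x in (0:ℝ)..T, V x 0 j := fun j => by linear_combination -(e1 j)
  simp only [f2]
  ring

/-- Leading-order expansion of the Evans function along the rays `μ = z |k|`:
`D(z |k|, k) = z (‖ψ‖² J₂ - z² J₃) |k|³ + o(|k|³)`, where `J₂` and `J₃` are the determinants of the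
variations of `(T, ∫u)` and of `(T, ∫u, ½∫u²)`, the integrals being varied over a fixed
interval. -/
lemma evans_expansion (W : Profile φ ψ σ q r T) {αa βa αE βE αc βc : ℝ → ℝ} {τa τE τc : ℝ}
    (Aa : Variation q (fun _ => 1) (σ 0) T αa βa τa)
    (AE : Variation q (fun _ => 0) (σ 0) T αE βE τE)
    (Ac : Variation q φ (σ 0) T αc βc τc) (hE : σ 0 * αE 0 = -1)
    {Y : ℝ → ℝ → ℝ → Matrix (Fin 3) (Fin 3) ℝ} (hY0 : ∀ μ k, Y μ k 0 = 1)
    (hY : ∀ μ k j, ForcedSol r q μ (k ^ 2) 0 (fun x => Y μ k x 0 j) (fun x => Y μ k x 1 j)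
      (fun x => Y μ k x 2 j)) (z : ℝ) :
    Tendsto (fun k => (Y (z * |k|) k T - 1).det / |k| ^ 3) (𝓝[≠] 0)
      (𝓝 (z * ((∫ x in (0:ℝ)..T, ψ x ^ 2) *
          (τa * (∫ x in (0:ℝ)..T, αE x) - τE * ∫ x in (0:ℝ)..T, αa x)
        - z ^ 2 * (!![τa, τE, τc;
            ∫ x in (0:ℝ)..T, αa x, ∫ x in (0:ℝ)..T, αE x, ∫ x in (0:ℝ)..T, αc x;
            ∫ x in (0:ℝ)..T, φ x * αa x, ∫ x in (0:ℝ)..T, φ x * αE x,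
              ∫ x in (0:ℝ)..T, φ x * αc x] : Matrix (Fin 3) (Fin 3) ℝ).det))) := by
  have hσ : σ 0 ≠ 0 := by
    intro h
    rw [h, zero_mul] at hE
    norm_num at hE
  -- initial data of `u' - μ u_c`, `u_a` and `u_E`, as columns
  set W0 : ℝ → Matrix (Fin 3) (Fin 3) ℝ := fun k =>
    !![ψ 0 - z * |k| * αc 0, αa 0, αE 0;
       σ 0 - z * |k| * βc 0, βa 0, βE 0;
       q 0 * ψ 0 - z * |k| * (q 0 * αc 0 + φ 0), q 0 * αa 0 + 1, q 0 * αE 0 + 0] with hW0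
  have hsol : ∀ j k, ForcedSol r q (z * |k|) (k ^ 2) 0
      (fun x => (Y (z * |k|) k x * W0 k) 0 j) (fun x => (Y (z * |k|) k x * W0 k) 1 j)
      (fun x => (Y (z * |k|) k x * W0 k) 2 j) := fun j k => ForcedSol.comb (hY _ k) _ j
  have hinit : ∀ k, Y (z * |k|) k 0 * W0 k = W0 k := fun k => by rw [hY0, one_mul]
  obtain ⟨c1, c2, c3, c4⟩ := translation_column W Ac (hsol 0)
    (fun k => by simp only [hinit]; rfl) (fun k => by simp only [hinit]; rfl)
    (fun k => by simp only [hinit]; rfl)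
  obtain ⟨a1, a2, a3, a4⟩ := variation_column W Aa (hsol 1)
    (fun k => by simp only [hinit]; rfl) (fun k => by simp only [hinit]; rfl)
    (fun k => by simp only [hinit]; rfl)
  obtain ⟨b1, b2, b3, b4⟩ := variation_column W AE (hsol 2)
    (fun k => by simp only [hinit]; rfl) (fun k => by simp only [hinit]; rfl)
    (fun k => by simp only [hinit]; rfl)
  have ht := tendsto_abs_punctured
  -- the first row and the first column have been divided by `|k|`
  set R : ℝ → Matrix (Fin 3) (Fin 3) ℝ := fun k =>
    !![-(∫ x in (0:ℝ)..T, ψ x * (Y (z * |k|) k x * W0 k) 0 0)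
          - z * ((∫ x in (0:ℝ)..T, φ x * (Y (z * |k|) k x * W0 k) 0 0) / |k|),
        -(|k| * ∫ x in (0:ℝ)..T, ψ x * (Y (z * |k|) k x * W0 k) 0 1)
          - z * (∫ x in (0:ℝ)..T, φ x * (Y (z * |k|) k x * W0 k) 0 1),
        -(|k| * ∫ x in (0:ℝ)..T, ψ x * (Y (z * |k|) k x * W0 k) 0 2)
          - z * (∫ x in (0:ℝ)..T, φ x * (Y (z * |k|) k x * W0 k) 0 2);
       ((Y (z * |k|) k T * W0 k) 1 0 - (Y (z * |k|) k 0 * W0 k) 1 0) / |k|,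
        (Y (z * |k|) k T * W0 k) 1 1 - (Y (z * |k|) k 0 * W0 k) 1 1,
        (Y (z * |k|) k T * W0 k) 1 2 - (Y (z * |k|) k 0 * W0 k) 1 2;
       (∫ x in (0:ℝ)..T, (Y (z * |k|) k x * W0 k) 0 0) / |k|,
        ∫ x in (0:ℝ)..T, (Y (z * |k|) k x * W0 k) 0 1,
        ∫ x in (0:ℝ)..T, (Y (z * |k|) k x * W0 k) 0 2] with hR
  have hRlim := tendsto_det3 (l := 𝓝[≠] 0) (A := R) (B :=
    !![-(∫ x in (0:ℝ)..T, ψ x ^ 2) - z * (-z * ∫ x in (0:ℝ)..T, φ x * αc x),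
        -(0 * ∫ x in (0:ℝ)..T, ψ x * αa x) - z * ∫ x in (0:ℝ)..T, φ x * αa x,
        -(0 * ∫ x in (0:ℝ)..T, ψ x * αE x) - z * ∫ x in (0:ℝ)..T, φ x * αE x;
       z * τc * σ 0, -τa * σ 0, -τE * σ 0;
       -z * ∫ x in (0:ℝ)..T, αc x, ∫ x in (0:ℝ)..T, αa x, ∫ x in (0:ℝ)..T, αE x]) (by
    intro i j
    fin_cases i <;> fin_cases j
    · exact c2.neg.sub (c1.const_mul z)
    · exact (ht.mul a2).neg.sub (a1.const_mul z)
    · exact (ht.mul b2).neg.sub (b1.const_mul z)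
    · exact c4
    · exact a4
    · exact b4
    · exact c3
    · exact a3
    · exact b3)
  have hW0lim := tendsto_det3 (l := 𝓝[≠] 0) (A := W0) (B :=
    !![ψ 0 - z * 0 * αc 0, αa 0, αE 0;
       σ 0 - z * 0 * βc 0, βa 0, βE 0;
       q 0 * ψ 0 - z * 0 * (q 0 * αc 0 + φ 0), q 0 * αa 0 + 1, q 0 * αE 0 + 0]) (by
    intro i j
    fin_cases i <;> fin_cases j
    · exact ((ht.const_mul z).mul_const _).const_sub _
    · exact tendsto_const_nhds
    · exact tendsto_const_nhds
    · exact ((ht.const_mul z).mul_const _).const_sub _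
    · exact tendsto_const_nhds
    · exact tendsto_const_nhds
    · exact ((ht.const_mul z).mul_const _).const_sub _
    · exact tendsto_const_nhds
    · exact tendsto_const_nhds)
  have hdet1 : (!![ψ 0 - z * 0 * αc 0, αa 0, αE 0;
       σ 0 - z * 0 * βc 0, βa 0, βE 0;
       q 0 * ψ 0 - z * 0 * (q 0 * αc 0 + φ 0), q 0 * αa 0 + 1, q 0 * αE 0 + 0] :
       Matrix (Fin 3) (Fin 3) ℝ).det = -1 := by
    rw [W.ψ0]
    simp only [Matrix.det_fin_three, Matrix.of_apply, Matrix.cons_val]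
    linear_combination hE
  rw [hdet1] at hW0lim
  have hlim := (hRlim.const_mul (-z / σ 0)).div hW0lim (by norm_num)
  have hev : ∀ᶠ k : ℝ in 𝓝[≠] 0, (W0 k).det ≠ 0 :=
    hW0lim.eventually_ne (by norm_num)
  refine Tendsto.congr' ?_ (hlim.trans (le_of_eq (congrArg 𝓝 ?_)))
  · filter_upwards [hev, eventually_small] with k hk ht
    have hkk := ht.2.ne'
    have h1 := det_jump W (V := fun x => Y (z * |k|) k x * W0 k) (fun j => hsol j k)
    have h2 : (Y (z * |k|) k T * W0 k - Y (z * |k|) k 0 * W0 k).det =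
        (Y (z * |k|) k T - 1).det * (W0 k).det := by
      rw [← Matrix.det_mul, sub_mul, hY0]
    rw [h2] at h1
    have h3 : (Matrix.of ![
      fun j => -k ^ 2 * (∫ x in (0:ℝ)..T, ψ x * (Y (z * |k|) k x * W0 k) 0 j) -
        z * |k| * ∫ x in (0:ℝ)..T, φ x * (Y (z * |k|) k x * W0 k) 0 j,
      fun j => (Y (z * |k|) k T * W0 k) 1 j - (Y (z * |k|) k 0 * W0 k) 1 j,
      fun j => ∫ x in (0:ℝ)..T, (Y (z * |k|) k x * W0 k) 0 j] :
        Matrix (Fin 3) (Fin 3) ℝ).det = |k| ^ 2 * (R k).det := by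
      simp only [hR, Matrix.det_fin_three, Matrix.of_apply, Matrix.cons_val]
      rw [← sq_abs k]
      field_simp
    rw [h3] at h1
    simp only [Pi.div_apply]
    field_simp
    linear_combination -h1
  · simp only [Matrix.det_fin_three, Matrix.of_apply, Matrix.cons_val]
    field_simp
    ring

/-- The Evans function depends continuously on `μ`: the difference of two solutions is forced by
`(μ₀ - μ) v`. -/
lemma evans_continuous (hr : Continuous r) (hq : Continuous q) (hT : 0 < T)
    {Y : ℝ → ℝ → ℝ → Matrix (Fin 3) (Fin 3) ℝ} (hY0 : ∀ μ k, Y μ k 0 = 1)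
    (hY : ∀ μ k j, ForcedSol r q μ (k ^ 2) 0 (fun x => Y μ k x 0 j) (fun x => Y μ k x 1 j)
      (fun x => Y μ k x 2 j)) (k : ℝ) :
    Continuous fun μ => (Y μ k T - 1).det := by
  have hc : Continuous fun μ => Y μ k T := by
    refine continuous_iff_continuousAt.2 fun μ₀ => ?_
    obtain ⟨C, hC, H⟩ := forced_bound hr hq hT (max (|μ₀| + 1) |k ^ 2|)
    have main : ∀ i j, Tendsto (fun μ => Y μ k T i j) (𝓝 μ₀) (𝓝 (Y μ₀ k T i j)) := by
      intro i j
      obtain ⟨B, hB, HB⟩ := exists_abs_bound (hY μ₀ k j).cont₀ T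
      rw [tendsto_iff_norm_sub_tendsto_zero]
      refine squeeze_zero' (g := fun μ => C * (|μ₀ - μ| * B)) (.of_forall fun _ => norm_nonneg _)
        ?_ ?_
      · filter_upwards [Metric.ball_mem_nhds μ₀ one_pos] with μ hμ
        rw [Metric.mem_ball, Real.dist_eq] at hμ
        have hs : ForcedSol r q μ (k ^ 2) (fun x => (μ₀ - μ) * Y μ₀ k x 0 j)
            (fun x => Y μ k x 0 j - Y μ₀ k x 0 j) (fun x => Y μ k x 1 j - Y μ₀ k x 1 j)
            (fun x => Y μ k x 2 j - Y μ₀ k x 2 j) := by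
          refine ⟨fun x => ((hY μ k j).d₀ x).sub ((hY μ₀ k j).d₀ x),
            fun x => ((hY μ k j).d₁ x).sub ((hY μ₀ k j).d₁ x), fun x => ?_⟩
          refine (((hY μ k j).d₂ x).sub ((hY μ₀ k j).d₂ x)).congr_deriv ?_
          simp only [Pi.zero_apply]
          ring
        have hμ' : |μ| ≤ |μ₀| + 1 := by
          have := abs_sub_abs_le_abs_sub μ μ₀
          linarith
        obtain ⟨h0, h1, h2⟩ := H μ (k ^ 2) (|μ₀ - μ| * B) _ _ _ _ (hμ'.trans (le_max_left _ _))
          (le_max_right _ _) hs (by simp [hY0]) (by simp [hY0]) (by simp [hY0]) (fun x hx => by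
            rw [abs_mul]
            gcongr
            exact HB x hx) T ⟨hT.le, le_rfl⟩
        fin_cases i
        · exact h0
        · exact h1
        · exact h2
      · have : Continuous fun μ => C * (|μ₀ - μ| * B) := by fun_prop
        simpa using this.tendsto μ₀
    exact tendsto_pi_nhds.2 fun i => tendsto_pi_nhds.2 (main i)
  exact (hc.sub continuous_const).matrix_det

/-- The expansion changes sign between two rays, so the intermediate value theorem gives a
positive root. -/
lemma exists_positive_root (W : Profile φ ψ σ q r T) {αa βa αE βE αc βc : ℝ → ℝ} {τa τE τc : ℝ}
    (Aa : Variation q (fun _ => 1) (σ 0) T αa βa τa)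
    (AE : Variation q (fun _ => 0) (σ 0) T αE βE τE)
    (Ac : Variation q φ (σ 0) T αc βc τc) (hE : σ 0 * αE 0 = -1)
    {Y : ℝ → ℝ → ℝ → Matrix (Fin 3) (Fin 3) ℝ} (hY0 : ∀ μ k, Y μ k 0 = 1)
    (hY : ∀ μ k j, ForcedSol r q μ (k ^ 2) 0 (fun x => Y μ k x 0 j) (fun x => Y μ k x 1 j)
      (fun x => Y μ k x 2 j))
    (J2 : 0 < τa * (∫ x in (0:ℝ)..T, αE x) - τE * ∫ x in (0:ℝ)..T, αa x)
    (J3 : 0 < (!![τa, τE, τc;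
            ∫ x in (0:ℝ)..T, αa x, ∫ x in (0:ℝ)..T, αE x, ∫ x in (0:ℝ)..T, αc x;
            ∫ x in (0:ℝ)..T, φ x * αa x, ∫ x in (0:ℝ)..T, φ x * αE x,
              ∫ x in (0:ℝ)..T, φ x * αc x] : Matrix (Fin 3) (Fin 3) ℝ).det) :
    ∃ k₀ > 0, ∀ k : ℝ, 0 < |k| → |k| < k₀ → ∃ μ : ℝ, 0 < μ ∧ (Y μ k T - 1).det = 0 := by
  have hσ : σ 0 ≠ 0 := by
    intro h
    rw [h, zero_mul] at hE
    norm_num at hE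
  have N : 0 < ∫ x in (0:ℝ)..T, ψ x ^ 2 := by
    have hne : ∃ x ∈ Icc 0 T, ψ x ≠ 0 := by
      by_contra! hcon
      -- a profile constant on `[0, T]` would have vanishing right derivative of `ψ` at `0`
      have h1 : HasDerivWithinAt ψ (σ 0) (Icc 0 T) 0 := (W.dψ 0).hasDerivWithinAt
      have h2 : HasDerivWithinAt ψ 0 (Icc 0 T) 0 :=
        (hasDerivWithinAt_const (0:ℝ) (Icc 0 T) (0:ℝ)).congr hcon W.ψ0
      exact hσ ((uniqueDiffOn_Icc W.Tpos 0 ⟨le_rfl, W.Tpos.le⟩).eq_deriv _ h1 h2)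
    obtain ⟨x, hx, hne⟩ := hne
    exact intervalIntegral.integral_pos W.Tpos (W.cψ.pow 2).continuousOn
      (fun y _ => sq_nonneg _) ⟨x, hx, by positivity⟩
  have hexp := evans_expansion W Aa AE Ac hE hY0 hY
  set n := ∫ x in (0:ℝ)..T, ψ x ^ 2
  set j2 := τa * (∫ x in (0:ℝ)..T, αE x) - τE * ∫ x in (0:ℝ)..T, αa x
  generalize (!![τa, τE, τc;
            ∫ x in (0:ℝ)..T, αa x, ∫ x in (0:ℝ)..T, αE x, ∫ x in (0:ℝ)..T, αc x;
            ∫ x in (0:ℝ)..T, φ x * αa x, ∫ x in (0:ℝ)..T, φ x * αE x,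
              ∫ x in (0:ℝ)..T, φ x * αc x] : Matrix (Fin 3) (Fin 3) ℝ).det = j3 at J3 hexp
  -- `z₀` is the slope at which the leading coefficient vanishes; `z₀ / 2` and `2 z₀` straddle it
  set z₀ := Real.sqrt (n * j2 / j3) with hz₀
  have hz₀pos : 0 < z₀ := Real.sqrt_pos.2 (by positivity)
  have hz₀sq : z₀ ^ 2 * j3 = n * j2 := by
    rw [hz₀, Real.sq_sqrt (by positivity)]
    field_simp
  have p1 : 0 < z₀ / 2 * (n * j2 - (z₀ / 2) ^ 2 * j3) := by
    have : 0 < n * j2 := by positivity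
    refine mul_pos (by positivity) ?_
    nlinarith
  have p2 : 2 * z₀ * (n * j2 - (2 * z₀) ^ 2 * j3) < 0 := by
    have : 0 < n * j2 := by positivity
    refine mul_neg_of_pos_of_neg (by positivity) ?_
    nlinarith
  have e1 := (hexp (z₀ / 2)).eventually (lt_mem_nhds p1)
  have e2 := (hexp (2 * z₀)).eventually (gt_mem_nhds p2)
  have e := e1.and e2
  rw [eventually_nhdsWithin_iff, Metric.eventually_nhds_iff] at e
  obtain ⟨k₀, hk₀, H⟩ := e
  refine ⟨k₀, hk₀, fun k hk hlt => ?_⟩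
  obtain ⟨h1, h2⟩ := H (by simpa [Real.dist_eq] using hlt) (by simpa using hk)
  have hk3 : 0 < |k| ^ 3 := by positivity
  have h1' : 0 < (Y (z₀ / 2 * |k|) k T - 1).det := by
    rcases div_pos_iff.1 h1 with h | h
    · exact h.1
    · exact absurd hk3 h.2.not_gt
  have h2' : (Y (2 * z₀ * |k|) k T - 1).det < 0 := by
    rcases div_neg_iff.1 h2 with h | h
    · exact absurd hk3 h.2.not_gt
    · exact h.1
  have hle : z₀ / 2 * |k| ≤ 2 * z₀ * |k| := by
    gcongr
    linarith
  obtain ⟨μ, hμ, hroot⟩ := intermediate_value_Icc' hle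
    (evans_continuous W.cr W.cq W.Tpos hY0 hY k).continuousOn ⟨h2'.le, h1'.le⟩
  exact ⟨μ, lt_of_lt_of_le (by positivity) hμ.1, hroot⟩

end core

/-! ### Differentiation with respect to the parameters -/

section parameters

variable {Ω : Set (ℝ × ℝ × ℝ)}

lemma mem_nhds_cylinder (hΩ : IsOpen Ω) {p : ℝ × ℝ × ℝ} (hp : p ∈ Ω) (x : ℝ) :
    ((univ : Set ℝ) ×ˢ Ω) ∈ 𝓝 (x, p) :=
  (isOpen_univ.prod hΩ).mem_nhds ⟨mem_univ _, hp⟩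

lemma contDiffOn_partial (hΩ : IsOpen Ω) {G : ℝ × ℝ × ℝ × ℝ → ℝ} {m n : WithTop ℕ∞}
    (hG : ContDiffOn ℝ n G ((univ : Set ℝ) ×ˢ Ω)) (hmn : m + 1 ≤ n) (w : ℝ × ℝ × ℝ × ℝ) :
    ContDiffOn ℝ m (fun z => fderiv ℝ G z w) ((univ : Set ℝ) ×ˢ Ω) :=
  (hG.fderiv_of_isOpen (isOpen_univ.prod hΩ) hmn).clm_apply contDiffOn_const

/-- `∂ₓ` commutes with the parameter derivative in the direction `w`. -/
lemma hasDerivAt_mixed (hΩ : IsOpen Ω) {G : ℝ × ℝ × ℝ × ℝ → ℝ}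
    (hG : ContDiffOn ℝ 2 G ((univ : Set ℝ) ×ˢ Ω)) {p : ℝ × ℝ × ℝ} (hp : p ∈ Ω)
    (w : ℝ × ℝ × ℝ) (x : ℝ) :
    HasDerivAt (fun y => fderiv ℝ G (y, p) (0, w))
      (fderiv ℝ (fun z => fderiv ℝ G z (1, 0)) (x, p) (0, w)) x := by
  have hat : ContDiffAt ℝ 2 G (x, p) := hG.contDiffAt (mem_nhds_cylinder hΩ hp x)
  have hd : DifferentiableAt ℝ (fderiv ℝ G) (x, p) :=
    (hat.fderiv_right (m := 1) (by norm_num)).differentiableAt one_ne_zero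
  have hline : HasDerivAt (fun y : ℝ => (y, p)) (1, 0) x :=
    (hasDerivAt_id x).prodMk (hasDerivAt_const x p)
  have h1 : HasDerivAt (fun y => fderiv ℝ G (y, p)) (fderiv ℝ (fderiv ℝ G) (x, p) (1, 0)) x :=
    hd.hasFDerivAt.comp_hasDerivAt x hline
  have h2 := h1.clm_apply (hasDerivAt_const x ((0 : ℝ), w))
  refine h2.congr_deriv ?_
  rw [fderiv_clm_apply hd (differentiableAt_const _)]
  simp only [map_zero, add_zero, fderiv_const_apply, ContinuousLinearMap.comp_zero, zero_add,
    ContinuousLinearMap.flip_apply]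
  exact (hat.isSymmSndFDerivAt (by simp)).eq (1, 0) (0, w)

lemma hasDerivAt_line (p w : ℝ × ℝ × ℝ) (s : ℝ) : HasDerivAt (fun s : ℝ => p + s • w) w s := by
  simpa using ((hasDerivAt_id s).smul_const w).const_add p

/-- Differentiation of an integral over a full period whose length depends on the parameters. -/
lemma leibniz (hΩ : IsOpen Ω) {G : ℝ × ℝ × ℝ × ℝ → ℝ}
    (hG : ContDiffOn ℝ 1 G ((univ : Set ℝ) ×ˢ Ω)) {T : ℝ × ℝ × ℝ → ℝ} (hT : ContDiffOn ℝ 1 T Ω)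
    {p : ℝ × ℝ × ℝ} (hp : p ∈ Ω) (w : ℝ × ℝ × ℝ) :
    HasDerivAt (fun s : ℝ => ∫ x in (0:ℝ)..T (p + s • w), G (x, p + s • w))
      (fderiv ℝ T p w * G (T p, p) + ∫ x in (0:ℝ)..T p, fderiv ℝ G (x, p) (0, w)) 0 := by
  -- rescaling the integration variable to `[0, 1]` fixes the domain of integration
  set γ : ℝ → ℝ × ℝ × ℝ := fun s => p + s • w with hγ
  have hγ0 : γ 0 = p := by simp [hγ]
  have hγc : Continuous γ := by fun_prop
  obtain ⟨δ, hδ, hball⟩ : ∃ δ > 0, Metric.closedBall (0:ℝ) δ ⊆ γ ⁻¹' Ω := by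
    have : γ ⁻¹' Ω ∈ 𝓝 (0:ℝ) := (hΩ.preimage hγc).mem_nhds (by simpa [hγ0] using hp)
    exact Metric.nhds_basis_closedBall.mem_iff.1 this
  set B := Metric.closedBall (0:ℝ) δ with hB
  have hTc : ContinuousOn (fun s => T (γ s)) B :=
    hT.continuousOn.comp hγc.continuousOn hball
  have hT'c : ContinuousOn (fun s => fderiv ℝ T (γ s) w) B :=
    ((hT.continuousOn_fderiv_of_isOpen hΩ le_rfl).comp hγc.continuousOn hball).clm_apply
      continuousOn_const
  have hTd : ∀ s ∈ B, HasDerivAt (fun s => T (γ s)) (fderiv ℝ T (γ s) w) s := fun s hs =>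
    ((hT.contDiffAt (hΩ.mem_nhds (hball hs))).differentiableAt one_ne_zero).hasFDerivAt.comp_hasDerivAt
      s (hasDerivAt_line p w s)
  have hGd : ∀ x s, s ∈ B → HasFDerivAt G (fderiv ℝ G (x, γ s)) (x, γ s) := fun x s hs =>
    ((hG.contDiffAt (mem_nhds_cylinder hΩ (hball hs) x)).differentiableAt one_ne_zero).hasFDerivAt
  set g' : ℝ → ℝ → ℝ := fun s t =>
    fderiv ℝ G (T (γ s) * t, γ s) (fderiv ℝ T (γ s) w * t, w) with hg'
  have hmap : ContinuousOn (fun z : ℝ × ℝ => (T (γ z.1) * z.2, γ z.1)) (B ×ˢ Icc (0:ℝ) 1) := by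
    refine ContinuousOn.prodMk (ContinuousOn.mul ?_ continuousOn_snd) ?_
    · exact hTc.comp continuousOn_fst fun z hz => hz.1
    · exact (hγc.comp continuous_fst).continuousOn
  have hg'c : ContinuousOn (fun z : ℝ × ℝ => g' z.1 z.2) (B ×ˢ Icc (0:ℝ) 1) := by
    refine ContinuousOn.clm_apply ?_ ?_
    · exact (hG.continuousOn_fderiv_of_isOpen (isOpen_univ.prod hΩ) le_rfl).comp hmap
        fun z hz => ⟨mem_univ _, hball hz.1⟩
    · exact ContinuousOn.prodMk ((hT'c.comp continuousOn_fst fun z hz => hz.1).mul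
        continuousOn_snd) continuousOn_const
  obtain ⟨K, hK⟩ := ((isCompact_closedBall (0:ℝ) δ).prod
    (isCompact_Icc (a := (0:ℝ)) (b := 1))).exists_bound_of_continuousOn hg'c
  have hGc : ∀ s ∈ B, Continuous fun t : ℝ => G (T (γ s) * t, γ s) := by
    intro s hs
    refine continuous_iff_continuousAt.2 fun t => ?_
    exact ContinuousAt.comp (f := fun t : ℝ => (T (γ s) * t, γ s)) (hGd _ s hs).continuousAt
      (by fun_prop)
  have h0B : (0:ℝ) ∈ B := Metric.mem_closedBall_self hδ.le
  have hsub : ∀ t ∈ uIoc (0:ℝ) 1, t ∈ Icc (0:ℝ) 1 := fun t ht => by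
    rw [uIoc_of_le zero_le_one] at ht
    exact ⟨ht.1.le, ht.2⟩
  have hg_zero_cont : ContinuousOn (g' 0) (Icc (0:ℝ) 1) :=
    hg'c.comp (f := fun t => ((0:ℝ), t)) (by fun_prop) fun t ht => ⟨h0B, ht⟩
  have hd := (intervalIntegral.hasDerivAt_integral_of_dominated_loc_of_deriv_le
    (F := fun s t => G (T (γ s) * t, γ s)) (F' := g') (x₀ := 0) (a := 0) (b := 1) (μ := volume)
    (bound := fun _ => K) (Metric.closedBall_mem_nhds (0:ℝ) hδ)
    (by
      filter_upwards [Metric.closedBall_mem_nhds (0:ℝ) hδ] with s hs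
      exact (hGc s hs).aestronglyMeasurable)
    ((hGc 0 h0B).intervalIntegrable _ _)
    ((hg_zero_cont.mono hsub).aestronglyMeasurable measurableSet_uIoc)
    (.of_forall fun t ht s hs => hK (s, t) ⟨hs, hsub t ht⟩)
    intervalIntegrable_const
    (.of_forall fun t ht s hs => (hGd _ s hs).comp_hasDerivAt s
      (((hTd s hs).mul_const t).prodMk (hasDerivAt_line p w s)))).2
  have hprod := (hTd 0 h0B).mul hd
  have heq : (fun s : ℝ => ∫ x in (0:ℝ)..T (γ s), G (x, γ s)) =
      (fun s => T (γ s)) * fun s => ∫ t in (0:ℝ)..1, G (T (γ s) * t, γ s) := by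
    ext s
    have := intervalIntegral.mul_integral_comp_mul_left (a := 0) (b := 1)
      (f := fun x => G (x, γ s)) (c := T (γ s))
    simp only [mul_zero, mul_one] at this
    exact this.symm
  rw [heq]
  refine hprod.congr_deriv ?_
  rw [hγ0]
  -- integration by parts in the contribution of the moving endpoint
  have hx : ∀ x, HasFDerivAt G (fderiv ℝ G (x, p)) (x, p) := fun x => by
    have := hGd x 0 h0B
    rwa [hγ0] at this
  have hline : ∀ t : ℝ, HasDerivAt (fun t : ℝ => (T p * t, p)) (T p, 0) t := fun t => by
    have := ((hasDerivAt_id t).const_mul (T p)).prodMk (hasDerivAt_const t p)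
    simpa using this
  have hfc : ∀ v : ℝ × ℝ × ℝ × ℝ, Continuous fun x : ℝ => fderiv ℝ G (x, p) v := fun v => by
    have := (hG.continuousOn_fderiv_of_isOpen (isOpen_univ.prod hΩ) le_rfl).comp
      (f := fun x : ℝ => (x, p)) (s := univ) (by fun_prop) fun x _ => ⟨mem_univ _, hp⟩
    exact (continuousOn_univ.1 this).clm_apply continuous_const
  have hparts : ∀ t, HasDerivAt (fun t : ℝ => t * G (T p * t, p))
      (G (T p * t, p) + t * (T p * fderiv ℝ G (T p * t, p) (1, 0))) t := fun t => by
    have h1 := (hasDerivAt_id t).mul ((hx (T p * t)).comp_hasDerivAt t (hline t))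
    refine h1.congr_deriv ?_
    have : ((T p, 0) : ℝ × ℝ × ℝ × ℝ) = T p • (1, 0) := by simp
    rw [this, map_smul]
    simp
  have hc1 : Continuous fun t : ℝ => G (T p * t, p) := by
    have := hGc 0 h0B
    rwa [hγ0] at this
  have hc2 : ∀ v, Continuous fun t : ℝ => fderiv ℝ G (T p * t, p) v := fun v =>
    (hfc v).comp (continuous_const.mul continuous_id)
  have hc3 : Continuous fun t : ℝ => t * (T p * fderiv ℝ G (T p * t, p) (1, 0)) :=
    continuous_id.mul (continuous_const.mul (hc2 _))
  have hint := intervalIntegral.integral_eq_sub_of_hasDerivAt (a := 0) (b := 1)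
    (fun t _ => hparts t) ((hc1.add hc3).intervalIntegrable _ _)
  rw [intervalIntegral.integral_add (hc1.intervalIntegrable _ _)
    (hc3.intervalIntegrable _ _)] at hint
  simp only [mul_one, one_mul, zero_mul, sub_zero] at hint
  have hsplit : (∫ t in (0:ℝ)..1, g' 0 t) =
      (∫ t in (0:ℝ)..1, fderiv ℝ T p w * (t * fderiv ℝ G (T p * t, p) (1, 0))) +
        ∫ t in (0:ℝ)..1, fderiv ℝ G (T p * t, p) (0, w) := by
    have i1 : IntervalIntegrable (fun t => fderiv ℝ T p w * (t * fderiv ℝ G (T p * t, p) (1, 0)))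
        volume 0 1 :=
      (continuous_const.mul (continuous_id.mul (hc2 _))).intervalIntegrable _ _
    have i2 : IntervalIntegrable (fun t => fderiv ℝ G (T p * t, p) (0, w)) volume 0 1 :=
      (hc2 _).intervalIntegrable _ _
    rw [← intervalIntegral.integral_add i1 i2]
    congr 1
    ext t
    simp only [hg', hγ0]
    have : ((fderiv ℝ T p w * t, w) : ℝ × ℝ × ℝ × ℝ) =
        (fderiv ℝ T p w * t) • (1, 0) + (0, w) := by simp
    rw [this, map_add, map_smul, smul_eq_mul, mul_assoc]
  have hscale := intervalIntegral.mul_integral_comp_mul_left (a := 0) (b := 1)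
      (f := fun x => fderiv ℝ G (x, p) (0, w)) (c := T p)
  simp only [mul_zero, mul_one] at hscale
  have hm : (∫ t in (0:ℝ)..1, t * (T p * fderiv ℝ G (T p * t, p) (1, 0))) =
      T p * ∫ t in (0:ℝ)..1, t * fderiv ℝ G (T p * t, p) (1, 0) := by
    rw [← intervalIntegral.integral_const_mul]
    congr 1
    ext t
    ring
  rw [hm] at hint
  rw [hsplit, intervalIntegral.integral_const_mul, ← hscale, ← hint]
  ring

end parameters

/-! ### Variations of a family of periodic waves -/

section family

variable {Ω : Set (ℝ × ℝ × ℝ)} {U : ℝ × ℝ × ℝ × ℝ → ℝ} {T : ℝ × ℝ × ℝ → ℝ} {f : ℝ → ℝ}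

/-- The parameter derivative of the wave in a direction `w` solves the linearized profile equation,
and its derivative fails to be periodic exactly by the variation of the period. -/
lemma family_variation (hΩ : IsOpen Ω) (hf : ContDiff ℝ 3 f) (hT : ContDiffOn ℝ 1 T Ω)
    (hU : ContDiffOn ℝ 3 U ((univ : Set ℝ) ×ˢ Ω))
    (h2 : ∀ x, ∀ p ∈ Ω, fderiv ℝ (fun z => fderiv ℝ U z (1, 0)) (x, p) (1, 0) =
      p.1 + p.2.2 * U (x, p) - f (U (x, p)))
    (h0 : ∀ p ∈ Ω, fderiv ℝ U (0, p) (1, 0) = 0)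
    (hT0 : ∀ p ∈ Ω, fderiv ℝ U (T p, p) (1, 0) = 0)
    {p : ℝ × ℝ × ℝ} (hp : p ∈ Ω) (hper : U (T p, p) = U (0, p)) (w : ℝ × ℝ × ℝ) :
    Variation (fun x => p.2.2 - deriv f (U (x, p))) (fun x => w.1 + w.2.2 * U (x, p))
      (p.1 + p.2.2 * U (0, p) - f (U (0, p))) (T p)
      (fun x => fderiv ℝ U (x, p) (0, w))
      (fun x => fderiv ℝ (fun z => fderiv ℝ U z (1, 0)) (x, p) (0, w))
      (fderiv ℝ T p w) := by
  have hUx : ContDiffOn ℝ 2 (fun z => fderiv ℝ U z (1, 0)) ((univ : Set ℝ) ×ˢ Ω) :=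
    contDiffOn_partial hΩ hU (by norm_num) _
  have hUxd : ∀ x, DifferentiableAt ℝ (fun z => fderiv ℝ U z (1, 0)) (x, p) := fun x =>
    (hUx.contDiffAt (mem_nhds_cylinder hΩ hp x)).differentiableAt (by norm_num)
  have hUd : ∀ x, DifferentiableAt ℝ U (x, p) := fun x =>
    (hU.contDiffAt (mem_nhds_cylinder hΩ hp x)).differentiableAt (by norm_num)
  have hev : ∀ᶠ s : ℝ in 𝓝 0, p + s • w ∈ Ω := by
    have hc : ContinuousAt (fun s : ℝ => p + s • w) 0 := by fun_prop
    exact hc.eventually_mem (hΩ.mem_nhds (by simpa using hp))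
  have hline : HasDerivAt (fun s : ℝ => p + s • w) w 0 := hasDerivAt_line p w 0
  refine ⟨fun x => hasDerivAt_mixed hΩ (hU.of_le (by norm_num)) hp w x, fun x => ?_, ?_⟩
  · refine (hasDerivAt_mixed hΩ hUx hp w x).congr_deriv ?_
    have heq : (fun z => fderiv ℝ (fun z => fderiv ℝ U z (1, 0)) z (1, 0)) =ᶠ[𝓝 (x, p)]
        fun z => z.2.1 + z.2.2.2 * U z - f (U z) := by
      filter_upwards [mem_nhds_cylinder hΩ hp x] with z hz
      exact h2 z.1 z.2 hz.2
    rw [heq.fderiv_eq]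
    have hfd : HasDerivAt f (deriv f (U (x, p))) (U (x, p)) :=
      (hf.differentiable (by norm_num)).differentiableAt.hasDerivAt
    have hd : HasFDerivAt (fun z : ℝ × ℝ × ℝ × ℝ => z.2) (ContinuousLinearMap.snd ℝ ℝ (ℝ × ℝ × ℝ))
        (x, p) := hasFDerivAt_snd
    have hd1 := hd.fst
    have hd3 := hd.snd.snd
    have := ((hd1.add (hd3.mul (hUd x).hasFDerivAt)).sub
      (hfd.comp_hasFDerivAt _ (hUd x).hasFDerivAt)).fderiv
    have h' : (fun z : ℝ × ℝ × ℝ × ℝ => z.2.1 + z.2.2.2 * U z - f (U z)) =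
      ((fun z => z.2.1) + (fun z => z.2.2.2) * U - f ∘ U) := rfl
    rw [h', this]
    simp
    ring
  · have hTd : HasDerivAt (fun s : ℝ => T (p + s • w)) (fderiv ℝ T p w) 0 := by
      refine HasFDerivAt.comp_hasDerivAt (f := fun s : ℝ => p + s • w) 0 ?_ hline
      simpa using ((hT.contDiffAt (hΩ.mem_nhds hp)).differentiableAt one_ne_zero).hasFDerivAt
    -- both ends of the period are zeros `S` of `∂ₓ U`; differentiating this relation gives the jump
    have key : ∀ (S : ℝ × ℝ × ℝ → ℝ) (S' : ℝ),
        HasDerivAt (fun s : ℝ => S (p + s • w)) S' 0 →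
        (∀ p' ∈ Ω, fderiv ℝ U (S p', p') (1, 0) = 0) →
        S' * fderiv ℝ (fun z => fderiv ℝ U z (1, 0)) (S p, p) (1, 0) +
          fderiv ℝ (fun z => fderiv ℝ U z (1, 0)) (S p, p) (0, w) = 0 := by
      intro S S' hS hz
      have h1 : HasDerivAt (fun s : ℝ => fderiv ℝ U (S (p + s • w), p + s • w) (1, 0))
          (fderiv ℝ (fun z => fderiv ℝ U z (1, 0)) (S p, p) (S', w)) 0 := by
        refine HasFDerivAt.comp_hasDerivAt (f := fun s : ℝ => (S (p + s • w), p + s • w))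
          (l := fun z => fderiv ℝ U z (1, 0)) 0 ?_ (hS.prodMk hline)
        simpa using (hUxd (S p)).hasFDerivAt
      have h2 : HasDerivAt (fun s : ℝ => fderiv ℝ U (S (p + s • w), p + s • w) (1, 0)) 0 0 := by
        refine (hasDerivAt_const (0:ℝ) (0:ℝ)).congr_of_eventuallyEq ?_
        filter_upwards [hev] with s hs using hz _ hs
      have h3 := h1.unique h2
      have : ((S', w) : ℝ × ℝ × ℝ × ℝ) = S' • (1, 0) + (0, w) := by simp
      rwa [this, map_add, map_smul, smul_eq_mul] at h3
    have k1 := key T _ hTd hT0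
    have k2 := key (fun _ => 0) 0 (hasDerivAt_const _ _) h0
    rw [h2 _ _ hp, hper] at k1
    linarith

/-- The derivative of the energy relation at the turning point, in the direction of `E`: as `u'`
vanishes there for all parameters, it reads `u''(0) u_E(0) = -1`. -/
lemma family_energy (hΩ : IsOpen Ω) {F : ℝ → ℝ} (hF : ∀ s, HasDerivAt F (f s) s)
    (hU : ContDiffOn ℝ 3 U ((univ : Set ℝ) ×ˢ Ω))
    (hen : ∀ p ∈ Ω, F (U (0, p)) - p.2.2 / 2 * U (0, p) ^ 2 - p.1 * U (0, p) = p.2.1)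
    {p : ℝ × ℝ × ℝ} (hp : p ∈ Ω) :
    (p.1 + p.2.2 * U (0, p) - f (U (0, p))) * fderiv ℝ U (0, p) (0, (0, 1, 0)) = -1 := by
  have hline : HasDerivAt (fun s : ℝ => p + s • ((0, 1, 0) : ℝ × ℝ × ℝ)) (0, 1, 0) 0 :=
    hasDerivAt_line p _ 0
  have hev : ∀ᶠ s : ℝ in 𝓝 0, p + s • ((0, 1, 0) : ℝ × ℝ × ℝ) ∈ Ω := by
    have hc : ContinuousAt (fun s : ℝ => p + s • ((0, 1, 0) : ℝ × ℝ × ℝ)) 0 := by fun_prop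
    exact hc.eventually_mem (hΩ.mem_nhds (by simpa using hp))
  have hu : HasDerivAt (fun s : ℝ => U (0, p + s • ((0, 1, 0) : ℝ × ℝ × ℝ)))
      (fderiv ℝ U (0, p) (0, (0, 1, 0))) 0 := by
    refine HasFDerivAt.comp_hasDerivAt (f := fun s : ℝ => ((0:ℝ), p + s • ((0, 1, 0) : ℝ × ℝ × ℝ)))
      0 ?_ ((hasDerivAt_const _ _).prodMk hline)
    simpa using ((hU.contDiffAt (mem_nhds_cylinder hΩ hp 0)).differentiableAt
      (by norm_num)).hasFDerivAt
  have h1 := (((hF _).comp (0:ℝ) hu).sub ((hu.pow 2).const_mul (p.2.2 / 2))).sub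
    (hu.const_mul p.1)
  have h2 : HasDerivAt (fun s : ℝ => p.2.1 + s) 1 0 := (hasDerivAt_id _).const_add _
  have h3 := h1.unique (h2.congr_of_eventuallyEq (by
    filter_upwards [hev] with s hs
    have := hen _ hs
    simpa using this))
  simp at h3
  linarith

/-- The derivatives of period, mass and momentum along the direction `w`. -/
lemma family_mass (hΩ : IsOpen Ω) (hT : ContDiffOn ℝ 1 T Ω)
    (hU : ContDiffOn ℝ 3 U ((univ : Set ℝ) ×ˢ Ω))
    {p : ℝ × ℝ × ℝ} (hp : p ∈ Ω) (hper : U (T p, p) = U (0, p)) (w : ℝ × ℝ × ℝ) :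
    HasDerivAt (fun s : ℝ => T (p + s • w)) (fderiv ℝ T p w) 0 ∧
    HasDerivAt (fun s : ℝ => ∫ x in (0:ℝ)..T (p + s • w), U (x, p + s • w))
      (fderiv ℝ T p w * U (0, p) + ∫ x in (0:ℝ)..T p, fderiv ℝ U (x, p) (0, w)) 0 ∧
    HasDerivAt (fun s : ℝ => ∫ x in (0:ℝ)..T (p + s • w), U (x, p + s • w) ^ 2)
      (fderiv ℝ T p w * U (0, p) ^ 2 +
        2 * ∫ x in (0:ℝ)..T p, U (x, p) * fderiv ℝ U (x, p) (0, w)) 0 := by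
  refine ⟨?_, ?_, ?_⟩
  · refine HasFDerivAt.comp_hasDerivAt (f := fun s : ℝ => p + s • w) 0 ?_ (hasDerivAt_line p w 0)
    simpa using ((hT.contDiffAt (hΩ.mem_nhds hp)).differentiableAt one_ne_zero).hasFDerivAt
  · rw [← hper]
    exact leibniz hΩ (hU.of_le (by norm_num)) hT hp w
  · have h := leibniz hΩ (G := fun z => U z ^ 2) ((hU.of_le (by norm_num)).pow 2) hT hp w
    refine h.congr_deriv ?_
    rw [hper, ← intervalIntegral.integral_const_mul]
    congr 2
    ext x
    have hd : DifferentiableAt ℝ U (x, p) :=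
      (hU.contDiffAt (mem_nhds_cylinder hΩ hp x)).differentiableAt (by norm_num)
    rw [(hd.hasFDerivAt.pow 2).fderiv]
    simp [mul_assoc]

end family

/-! ### Reality of the Evans function -/

/-- For real `μ` the fundamental matrix is real at `T`: its imaginary part solves the homogeneous
problem with zero initial data. Hence the Evans function is the determinant of its real part. -/
lemma real_fundamental {q r : ℝ → ℝ} (hr : Continuous r) (hq : Continuous q) {T : ℝ} (hT : 0 < T)
    {Y : ℝ → Matrix (Fin 3) (Fin 3) ℂ} {μ κ : ℝ} (hY0 : Y 0 = 1)
    (h0 : ∀ j x, HasDerivAt (fun y => Y y 0 j) (Y x 1 j) x)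
    (h1 : ∀ j x, HasDerivAt (fun y => Y y 1 j) (Y x 2 j) x)
    (h2 : ∀ j x, HasDerivAt (fun y => Y y 2 j)
      (((r x - μ : ℝ) : ℂ) * Y x 0 j + ((q x + κ : ℝ) : ℂ) * Y x 1 j) x) :
    (∀ j, ForcedSol r q μ κ 0 (fun x => (Y x 0 j).re) (fun x => (Y x 1 j).re)
      (fun x => (Y x 2 j).re)) ∧
    (Y T - 1).det = (((Y T).map Complex.re - 1).det : ℝ) := by
  have hre : ∀ {g : ℝ → ℂ} {g' : ℂ} {x : ℝ}, HasDerivAt g g' x →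
      HasDerivAt (fun y => (g y).re) g'.re x := fun h =>
    Complex.reCLM.hasFDerivAt.comp_hasDerivAt _ h
  have him : ∀ {g : ℝ → ℂ} {g' : ℂ} {x : ℝ}, HasDerivAt g g' x →
      HasDerivAt (fun y => (g y).im) g'.im x := fun h =>
    Complex.imCLM.hasFDerivAt.comp_hasDerivAt _ h
  refine ⟨fun j => ⟨fun x => hre (h0 j x), fun x => hre (h1 j x), fun x => ?_⟩, ?_⟩
  · refine (hre (h2 j x)).congr_deriv ?_
    rw [Complex.add_re, Complex.re_ofReal_mul, Complex.re_ofReal_mul]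
    simp
  · have hsol : ∀ j, ForcedSol r q μ κ 0 (fun x => (Y x 0 j).im) (fun x => (Y x 1 j).im)
        (fun x => (Y x 2 j).im) := fun j =>
      ⟨fun x => him (h0 j x), fun x => him (h1 j x), fun x => by
        refine (him (h2 j x)).congr_deriv ?_
        rw [Complex.add_im, Complex.im_ofReal_mul, Complex.im_ofReal_mul]
        simp⟩
    obtain ⟨C, -, hC⟩ := forced_bound hr hq hT (max |μ| |κ|)
    have hi0 : ∀ i j, ((1 : Matrix (Fin 3) (Fin 3) ℂ) i j).im = 0 := fun i j => by
      rw [Matrix.one_apply]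
      split_ifs <;> simp
    have hz : ∀ i j, (Y T i j).im = 0 := fun i j => by
      have := hC μ κ 0 0 _ _ _ (le_max_left _ _) (le_max_right _ _) (hsol j)
        (by rw [hY0]; exact hi0 _ _) (by rw [hY0]; exact hi0 _ _) (by rw [hY0]; exact hi0 _ _)
        (fun x _ => by simp) T ⟨hT.le, le_rfl⟩
      simp only [mul_zero, abs_nonpos_iff] at this
      fin_cases i
      exacts [this.1, this.2.1, this.2.2]
    have : Y T - 1 = ((Y T).map Complex.re - 1).map Complex.ofRealHom := by
      rw [Matrix.map_sub _ (map_sub Complex.ofRealHom)]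
      ext i j
      simp only [Matrix.sub_apply, Matrix.map_apply, Matrix.map_one, map_zero, map_one]
      congr 1
      exact Complex.ext (by simp) (by simp [hz])
    rw [this]
    exact (RingHom.map_det Complex.ofRealHom _).symm

end GZK

/-- Transverse instability criterion for periodic gKdV waves in the
generalized Zakharov–Kuznetsov equation: if `{T,M,P}_{a,E,c} > 0` and `{T,M}_{a,E} > 0`,
then for every small nonzero transverse wavenumber `k` the periodic Evans function
`D(·,k)` has a root with positive real part. -/
theorem gZK_transverse_instability
    (f F : ℝ → ℝ) (hf : ContDiff ℝ 3 f)
    (hF : ∀ s, HasDerivAt F (f s) s) (hF0 : F 0 = 0)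
    (V : ℝ → ℝ → ℝ → ℝ) (hV : ∀ s a c, V s a c = F s - c/2 * s^2 - a * s)
    (Ω : Set (ℝ × ℝ × ℝ)) (hΩ : IsOpen Ω)
    (um up : ℝ × ℝ × ℝ → ℝ)
    (hum : ContDiffOn ℝ 1 um Ω) (hup : ContDiffOn ℝ 1 up Ω)
    (horder : ∀ p ∈ Ω, um p < up p)
    (hVm : ∀ a E c : ℝ, (a, E, c) ∈ Ω → V (um (a, E, c)) a c = E)
    (hVp : ∀ a E c : ℝ, (a, E, c) ∈ Ω → V (up (a, E, c)) a c = E)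
    (hVm' : ∀ a E c : ℝ, (a, E, c) ∈ Ω → deriv (fun s => V s a c) (um (a, E, c)) < 0)
    (hVp' : ∀ a E c : ℝ, (a, E, c) ∈ Ω → 0 < deriv (fun s => V s a c) (up (a, E, c)))
    (hbelow : ∀ a E c : ℝ, (a, E, c) ∈ Ω →
      ∀ s ∈ Set.Ioo (um (a, E, c)) (up (a, E, c)), V s a c < E)
    (T : ℝ × ℝ × ℝ → ℝ) (hT : ContDiffOn ℝ 1 T Ω) (hTpos : ∀ p ∈ Ω, 0 < T p)
    (u : ℝ → ℝ → ℝ → ℝ → ℝ)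
    (hu : ContDiffOn ℝ 3 (fun q : ℝ × ℝ × ℝ × ℝ => u q.1 q.2.1 q.2.2.1 q.2.2.2)
      ((Set.univ : Set ℝ) ×ˢ Ω))
    (hprofile : ∀ a E c : ℝ, (a, E, c) ∈ Ω → ∀ x : ℝ,
      deriv (deriv (fun y => u y a E c)) x + f (u x a E c) - c * u x a E c = a)
    (henergy : ∀ a E c : ℝ, (a, E, c) ∈ Ω → ∀ x : ℝ,
      1/2 * (deriv (fun y => u y a E c) x)^2 + F (u x a E c)
        - c/2 * (u x a E c)^2 - a * u x a E c = E)
    (hperiodic : ∀ a E c : ℝ, (a, E, c) ∈ Ω → ∀ x : ℝ,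
      u (x + T (a, E, c)) a E c = u x a E c)
    (hinit : ∀ a E c : ℝ, (a, E, c) ∈ Ω → u 0 a E c = um (a, E, c))
    (hinit' : ∀ a E c : ℝ, (a, E, c) ∈ Ω → deriv (fun y => u y a E c) 0 = 0)
    (M P : ℝ × ℝ × ℝ → ℝ)
    (hM : ∀ q : ℝ × ℝ × ℝ, M q = ∫ x in (0:ℝ)..(T q), u x q.1 q.2.1 q.2.2)
    (hP : ∀ q : ℝ × ℝ × ℝ, P q = ∫ x in (0:ℝ)..(T q), (u x q.1 q.2.1 q.2.2)^2)
    (a E c : ℝ) (hmem : (a, E, c) ∈ Ω)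
    (Hm : ℂ → ℝ → ℝ → Matrix (Fin 3) (Fin 3) ℂ)
    (hHm : ∀ (μ : ℂ) (k x : ℝ), Hm μ k x =
      !![0, 1, 0;
         0, 0, 1;
         -μ - ((deriv (deriv f) (u x a E c) * deriv (fun y => u y a E c) x : ℝ) : ℂ),
           ((c + k^2 - deriv f (u x a E c) : ℝ) : ℂ), 0])
    (Y : ℂ → ℝ → ℝ → Matrix (Fin 3) (Fin 3) ℂ)
    (hY0 : ∀ (μ : ℂ) (k : ℝ), Y μ k 0 = 1)
    (hYode : ∀ (μ : ℂ) (k x : ℝ) (i j : Fin 3),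
      HasDerivAt (fun y => Y μ k y i j) ((Hm μ k x * Y μ k x) i j) x)
    (D : ℂ → ℝ → ℂ)
    (hD : ∀ (μ : ℂ) (k : ℝ), D μ k = Matrix.det (Y μ k (T (a, E, c)) - 1))
    (hJ3 : 0 < Matrix.det
      !![deriv (fun a' => T (a', E, c)) a, deriv (fun E' => T (a, E', c)) E,
           deriv (fun c' => T (a, E, c')) c;
         deriv (fun a' => M (a', E, c)) a, deriv (fun E' => M (a, E', c)) E,
           deriv (fun c' => M (a, E, c')) c;
         deriv (fun a' => P (a', E, c)) a, deriv (fun E' => P (a, E', c)) E,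
           deriv (fun c' => P (a, E, c')) c])
    (hJ2 : 0 < deriv (fun a' => T (a', E, c)) a * deriv (fun E' => M (a, E', c)) E
      - deriv (fun E' => T (a, E', c)) E * deriv (fun a' => M (a', E, c)) a) :
    ∃ k₀ > 0, ∀ k : ℝ, 0 < |k| → |k| < k₀ →
      ∃ μ : ℂ, 0 < μ.re ∧ D μ k = 0 := by
  set U : ℝ × ℝ × ℝ × ℝ → ℝ := fun q => u q.1 q.2.1 q.2.2.1 q.2.2.2 with hUdef
  have hUd : ∀ x : ℝ, ∀ p ∈ Ω, HasFDerivAt U (fderiv ℝ U (x, p)) (x, p) := fun x p hp =>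
    ((hu.contDiffAt (GZK.mem_nhds_cylinder hΩ hp x)).differentiableAt (by norm_num)).hasFDerivAt
  have hline : ∀ (x : ℝ) (p : ℝ × ℝ × ℝ), HasDerivAt (fun y : ℝ => (y, p)) (1, 0) x := fun x p =>
    (hasDerivAt_id x).prodMk (hasDerivAt_const x p)
  have hUx : ContDiffOn ℝ 2 (fun z => fderiv ℝ U z (1, 0)) ((Set.univ : Set ℝ) ×ˢ Ω) :=
    GZK.contDiffOn_partial hΩ hu (by norm_num) _
  have hd1 : ∀ x : ℝ, ∀ p ∈ Ω,
      HasDerivAt (fun y => u y p.1 p.2.1 p.2.2) (fderiv ℝ U (x, p) (1, 0)) x := fun x p hp =>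
    HasFDerivAt.comp_hasDerivAt (f := fun y : ℝ => (y, p)) (l := U) x (hUd x p hp) (hline x p)
  have hderiv : ∀ p ∈ Ω, deriv (fun y => u y p.1 p.2.1 p.2.2) =
      fun x => fderiv ℝ U (x, p) (1, 0) := fun p hp => by
    ext x
    exact (hd1 x p hp).deriv
  have hd2' : ∀ x : ℝ, ∀ p ∈ Ω, HasDerivAt (fun x => fderiv ℝ U (x, p) (1, 0))
      (fderiv ℝ (fun z => fderiv ℝ U z (1, 0)) (x, p) (1, 0)) x := fun x p hp =>
    HasFDerivAt.comp_hasDerivAt (f := fun y : ℝ => (y, p)) (l := fun z => fderiv ℝ U z (1, 0)) x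
      ((hUx.contDiffAt (GZK.mem_nhds_cylinder hΩ hp x)).differentiableAt
        (by norm_num)).hasFDerivAt (hline x p)
  have h2 : ∀ x, ∀ p ∈ Ω, fderiv ℝ (fun z => fderiv ℝ U z (1, 0)) (x, p) (1, 0) =
      p.1 + p.2.2 * U (x, p) - f (U (x, p)) := fun x p hp => by
    have := hprofile p.1 p.2.1 p.2.2 hp x
    rw [hderiv p hp, (hd2' x p hp).deriv] at this
    simp only [hUdef] at this ⊢
    linarith
  have h0 : ∀ p ∈ Ω, fderiv ℝ U (0, p) (1, 0) = 0 := fun p hp => by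
    rw [← (hd1 0 p hp).deriv]
    exact hinit' p.1 p.2.1 p.2.2 hp
  have hT0 : ∀ p ∈ Ω, fderiv ℝ U (T p, p) (1, 0) = 0 := fun p hp => by
    rw [← (hd1 (T p) p hp).deriv, ← hinit' p.1 p.2.1 p.2.2 hp]
    have := deriv_comp_add_const (f := fun y => u y p.1 p.2.1 p.2.2) (a := T p) (x := 0)
    rw [zero_add] at this
    rw [← this]
    congr 1
    ext y
    exact hperiodic p.1 p.2.1 p.2.2 hp y
  have hper : ∀ p ∈ Ω, U (T p, p) = U (0, p) := fun p hp => by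
    have := hperiodic p.1 p.2.1 p.2.2 hp 0
    rwa [zero_add] at this
  have hen : ∀ p ∈ Ω, F (U (0, p)) - p.2.2 / 2 * U (0, p) ^ 2 - p.1 * U (0, p) = p.2.1 :=
    fun p hp => by
      have := henergy p.1 p.2.1 p.2.2 hp 0
      rw [hinit' p.1 p.2.1 p.2.2 hp] at this
      simp only [hUdef]
      linarith
  obtain ⟨p, hpdef⟩ : ∃ p : ℝ × ℝ × ℝ, p = (a, E, c) := ⟨_, rfl⟩
  have hp : p ∈ Ω := hpdef ▸ hmem
  have hfd : ∀ y, HasDerivAt f (deriv f y) y := fun y =>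
    (hf.differentiable (by norm_num)).differentiableAt.hasDerivAt
  have hf' : ContDiff ℝ 2 (deriv f) := (show ContDiff ℝ (2 + 1) f by norm_num [hf]).deriv'
  have hfd' : ∀ y, HasDerivAt (deriv f) (deriv (deriv f) y) y := fun y =>
    (hf'.differentiable (by norm_num)).differentiableAt.hasDerivAt
  have hf'' : Continuous (deriv (deriv f)) :=
    ContDiff.continuous (n := 1)
      (ContDiff.deriv' (show ContDiff ℝ (1 + 1) (deriv f) by norm_num [hf']))
  have hφ : ∀ x, HasDerivAt (fun x => U (x, p)) (fderiv ℝ U (x, p) (1, 0)) x :=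
    fun x => hd1 x p hp
  have hψ : ∀ x, HasDerivAt (fun x => fderiv ℝ U (x, p) (1, 0))
      (p.1 + p.2.2 * U (x, p) - f (U (x, p))) x := fun x =>
    (hd2' x p hp).congr_deriv (h2 x p hp)
  have hφc : Continuous fun x => U (x, p) := continuous_iff_continuousAt.2 fun x =>
    (hφ x).continuousAt
  have hψc : Continuous fun x => fderiv ℝ U (x, p) (1, 0) := continuous_iff_continuousAt.2 fun x =>
    (hψ x).continuousAt
  have W : GZK.Profile (fun x => U (x, p)) (fun x => fderiv ℝ U (x, p) (1, 0))
      (fun x => p.1 + p.2.2 * U (x, p) - f (U (x, p))) (fun x => p.2.2 - deriv f (U (x, p)))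
      (fun x => -(deriv (deriv f) (U (x, p)) * fderiv ℝ U (x, p) (1, 0))) (T p) :=
    { dφ := hφ
      dψ := hψ
      dσ := fun x => (((hφ x).const_mul p.2.2).const_add p.1 |>.sub
        ((hfd _).comp x (hφ x))).congr_deriv (by ring)
      dq := fun x => ((hfd' _).comp x (hφ x)).const_sub _
      cr := ((hf''.comp hφc).mul hψc).neg
      Tpos := hTpos p hp
      pφ := hper p hp
      ψ0 := h0 p hp
      ψT := hT0 p hp
      pσ := by simp only [hper p hp]
      pq := by simp only [hper p hp] }
  have hvar := GZK.family_variation hΩ hf hT hu h2 h0 hT0 hp (hper p hp)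
  have Aa := hvar (1, 0, 0)
  have AE := hvar (0, 1, 0)
  have Ac := hvar (0, 0, 1)
  simp only [zero_mul, add_zero, zero_add, one_mul] at Aa AE Ac
  have hE := GZK.family_energy hΩ hF hu hen hp
  have hmass := GZK.family_mass hΩ hT hu hp (hper p hp)
  -- partial derivatives along coordinate lines are derivatives in coordinate directions
  have hslice : ∀ {G : ℝ → ℝ} {m : ℝ} (b : ℝ), HasDerivAt G m 0 →
      deriv (fun b' => G (b' - b)) b = m := fun {G m} b h => by
    refine HasDerivAt.deriv (HasDerivAt.comp_sub_const b b ?_)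
    rwa [sub_self]
  have ea : ∀ (G : ℝ × ℝ × ℝ → ℝ) (m : ℝ),
      HasDerivAt (fun s : ℝ => G (p + s • ((1, 0, 0) : ℝ × ℝ × ℝ))) m 0 →
      deriv (fun a' => G (a', E, c)) a = m := fun G m h => by
    simpa [hpdef] using hslice a h
  have eE : ∀ (G : ℝ × ℝ × ℝ → ℝ) (m : ℝ),
      HasDerivAt (fun s : ℝ => G (p + s • ((0, 1, 0) : ℝ × ℝ × ℝ))) m 0 →
      deriv (fun E' => G (a, E', c)) E = m := fun G m h => by
    simpa [hpdef] using hslice E h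
  have ec : ∀ (G : ℝ × ℝ × ℝ → ℝ) (m : ℝ),
      HasDerivAt (fun s : ℝ => G (p + s • ((0, 0, 1) : ℝ × ℝ × ℝ))) m 0 →
      deriv (fun c' => G (a, E, c')) c = m := fun G m h => by
    simpa [hpdef] using hslice c h
  have hTd := fun w => (hmass w).1
  have hMd : ∀ w : ℝ × ℝ × ℝ, HasDerivAt (fun s : ℝ => M (p + s • w))
      (fderiv ℝ T p w * U (0, p) + ∫ x in (0:ℝ)..T p, fderiv ℝ U (x, p) (0, w)) 0 := fun w => by
    simp only [hM]
    exact (hmass w).2.1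
  have hPd : ∀ w : ℝ × ℝ × ℝ, HasDerivAt (fun s : ℝ => P (p + s • w))
      (fderiv ℝ T p w * U (0, p) ^ 2 +
        2 * ∫ x in (0:ℝ)..T p, U (x, p) * fderiv ℝ U (x, p) (0, w)) 0 := fun w => by
    simp only [hP]
    exact (hmass w).2.2
  rw [ea T _ (hTd _), eE T _ (hTd _), ea M _ (hMd _), eE M _ (hMd _)] at hJ2
  rw [ea T _ (hTd _), eE T _ (hTd _), ec T _ (hTd _), ea M _ (hMd _), eE M _ (hMd _),
    ec M _ (hMd _), ea P _ (hPd _), eE P _ (hPd _), ec P _ (hPd _)] at hJ3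
  have hkU : deriv (fun y => u y a E c) = fun x => fderiv ℝ U (x, p) (1, 0) := by
    rw [← hderiv p hp, hpdef]
  have hreal := fun (μ k : ℝ) => GZK.real_fundamental (μ := μ) (κ := k ^ 2) (Y := Y μ k)
    W.cr (q := fun x => p.2.2 - deriv f (U (x, p)))
    (continuous_const.sub (hf'.continuous.comp hφc)) W.Tpos (hY0 μ k)
    (fun j x => by
      refine (hYode μ k x 0 j).congr_deriv ?_
      simp [hHm, Matrix.mul_apply, Fin.sum_univ_three])
    (fun j x => by
      refine (hYode μ k x 1 j).congr_deriv ?_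
      simp [hHm, Matrix.mul_apply, Fin.sum_univ_three])
    (fun j x => by
      refine (hYode μ k x 2 j).congr_deriv ?_
      rw [hHm, hkU]
      simp [Matrix.mul_apply, Fin.sum_univ_three, hpdef, hUdef]
      ring)
  obtain ⟨k₀, hk₀, hroot⟩ := GZK.exists_positive_root W Aa AE Ac hE
    (Y := fun μ k x => (Y μ k x).map Complex.re)
    (fun μ k => by
      ext i j
      rw [hY0, Matrix.map_apply, Matrix.one_apply, Matrix.one_apply]
      split_ifs <;> simp)
    (fun μ k j => (hreal μ k).1 j) (by linarith) (by
      -- subtracting multiples of the `T` row turns the `M` and `P` rows into averages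
      rw [Matrix.det_fin_three] at hJ3 ⊢
      simp at hJ3 ⊢
      nlinarith)
  refine ⟨k₀, hk₀, fun k hk hkk => ?_⟩
  obtain ⟨μ, hμ, hdet⟩ := hroot k hk hkk
  refine ⟨μ, by simpa using hμ, ?_⟩
  rw [hD, ← hpdef, (hreal μ k).2, hdet, Complex.ofReal_zero]
end

section
/- Let f(s) = s², F(s) = s³/3, and V(s; a, c) = s³/3 − (c/2)s² − a·s, and let u(x; a, E, c) be a periodic traveling wave family of the KdV equation: Ω ⊆ ℝ³ open; u_− < u_+ C¹ on Ω with V(u_±; a, c) = E, ∂V/∂s(u_−; a, c) < 0, ∂V/∂s(u_+; a, c) > 0, V(·; a, c) < E on (u_−, u_+); T(a,E,c) > 0 C¹; u jointly C³ with u_xx + u² − c·u = a, (1/2)u_x² + u³/3 − (c/2)u² − a·u = E, u(x + T) = u(x), u(0) = u_−, u_x(0) = 0; M = ∫₀^T u dx, P = ∫₀^T u² dx. Then at every (a, E, c) ∈ Ω at which the map (a, E, c) ↦ (T, M, P) is differentiable, the Jacobian determinant {T,M,P}_{a,E,c} of (T, M, P) with respect to (a, E, c) is strictly positive. -/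
open MeasureTheory intervalIntegral

/-!
The proof computes the Jacobian from solutions of `L φ = ∂ₓ² φ + (2u - c) φ`, the linearized profile
operator. Write `W = u_xx(0) = a + c β - β²` with `β = u_-`, `D = 4 a + c²`, `e = 6 E + a c` and
`Z(x) = ∫₀ˣ u`. Then

* integrating the profile equation over a period gives `P = a T + c M`;
* `ω = 2 u + x u_x - c`, generated by the scaling and Galilean symmetries, satisfies `L ω = D`;
* `φ = D (Z u_x - 2 u² + 3 c u + 4 a) + e ω` satisfies `L φ = 0`.

If `v` is the derivative of `u` along a direction `(d₁, d₂, d₃)` in `(a, E, c)`-space, then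
`L v = d₁ + d₃ u`, and differentiating `u(x + T) = u(x)` gives `v(T) = v(0)` and `v_x(T) = -T' W`.
Green's identity over one period for the pairs `(φ, v)` and `(ω, v)` therefore expresses `T'` and
`∫₀ᵀ v = M' - β T'` through `T` and `M` (`kdvIdx_green`); every integral that occurs has an
elementary antiderivative in `x, u, u_x, Z` by the profile and energy equations. Substituting,
the Jacobian equals `3 T³ (E - V(M/T)) / (φ(0) W)`.

With `γ < β < α` the roots of `E - V`, one has `W = (α - β)(β - γ)/3` and
`φ(0) = (4/9) (α - γ)² (α - β)(β - γ)`, both positive, and `E - V(M/T) > 0` because the mean `M/T`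
of `u` lies strictly between `β` and `α` (`kdvIdx_bounds`).
-/

/-! ### Differentiation in the parameters -/

open Set Filter Topology in
/-- Leibniz rule for an integral with a moving endpoint and a `C¹` integrand on a strip. -/
theorem kdvIdx_leibniz {f : ℝ → ℝ → ℝ} {S : Set ℝ} (hS : IsOpen S) (h0 : (0 : ℝ) ∈ S)
    (hf : ContDiffOn ℝ 1 (fun q : ℝ × ℝ => f q.1 q.2) (univ ×ˢ S))
    {τ : ℝ → ℝ} {τ' : ℝ} (hτ : HasDerivAt τ τ' 0) :
    HasDerivAt (fun t => ∫ x in (0:ℝ)..(τ t), f x t)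
      (f (τ 0) 0 * τ' + ∫ x in (0:ℝ)..(τ 0), deriv (fun t => f x t) 0) 0 := by
  have hopen : IsOpen ((univ : Set ℝ) ×ˢ S) := isOpen_univ.prod hS
  set F : ℝ × ℝ → ℝ := fun q => f q.1 q.2 with hF
  have hcf : ContinuousOn F (univ ×ˢ S) := hf.continuousOn
  have hdf : ContinuousOn (fderiv ℝ F) (univ ×ˢ S) :=
    hf.continuousOn_fderiv_of_isOpen hopen le_rfl
  have hda : ∀ x, ∀ t ∈ S, HasDerivAt (fun s => f x s) (fderiv ℝ F (x, t) (0, 1)) t := by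
    intro x t ht
    have h1 : HasFDerivAt F (fderiv ℝ F (x, t)) (x, t) :=
      ((hf.differentiableOn one_ne_zero).differentiableAt
        (hopen.mem_nhds ⟨mem_univ _, ht⟩)).hasFDerivAt
    exact h1.comp_hasDerivAt t ((hasDerivAt_const t x).prodMk (hasDerivAt_id t))
  have hcx : ∀ t ∈ S, Continuous (fun x => f x t) := by
    intro t ht
    rw [← continuousOn_univ]
    exact hcf.comp (f := fun x : ℝ => (x, t)) (by fun_prop) (fun x _ => ⟨mem_univ _, ht⟩)
  obtain ⟨δ, hδ, hδS⟩ := Metric.isOpen_iff.1 hS 0 h0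
  have hδ2 : Metric.closedBall (0:ℝ) (δ/2) ⊆ S :=
    (Metric.closedBall_subset_ball (by linarith)).trans hδS
  -- the part of the integral over the fixed interval
  have hA : HasDerivAt (fun t => ∫ x in (0:ℝ)..(τ 0), f x t)
      (∫ x in (0:ℝ)..(τ 0), deriv (fun t => f x t) 0) 0 := by
    have hc : ContinuousOn (fun q : ℝ × ℝ => fderiv ℝ F q (0, 1))
        (uIcc 0 (τ 0) ×ˢ Metric.closedBall (0:ℝ) (δ/2)) :=
      (hdf.clm_apply continuousOn_const).mono (prod_mono (subset_univ _) hδ2)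
    obtain ⟨C, hC⟩ := (isCompact_uIcc.prod (isCompact_closedBall (0:ℝ) (δ/2))).exists_bound_of_continuousOn hc
    have h := intervalIntegral.hasDerivAt_integral_of_dominated_loc_of_deriv_le
      (μ := MeasureTheory.volume) (a := 0) (b := τ 0) (bound := fun _ => C)
      (F := fun t x => f x t) (F' := fun t x => fderiv ℝ F (x, t) (0, 1)) (x₀ := (0:ℝ))
      (s := Metric.closedBall (0:ℝ) (δ/2)) (Metric.closedBall_mem_nhds _ (by linarith))
      (by
        filter_upwards [hS.mem_nhds h0] with t ht
        exact (hcx t ht).aestronglyMeasurable)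
      ((hcx 0 h0).intervalIntegrable _ _)
      (by
        have : Continuous (fun x : ℝ => fderiv ℝ F (x, 0) (0, 1)) := by
          rw [← continuousOn_univ]
          exact (hdf.clm_apply continuousOn_const).comp (f := fun x : ℝ => (x, (0:ℝ)))
            (by fun_prop) (fun x _ => ⟨mem_univ _, h0⟩)
        exact this.aestronglyMeasurable)
      (Eventually.of_forall fun x hx t ht => hC (x, t) ⟨uIoc_subset_uIcc hx, ht⟩)
      (by simp)
      (Eventually.of_forall fun x _ t ht => hda x t (hδ2 ht))
    refine h.2.congr_deriv ?_
    exact intervalIntegral.integral_congr fun x _ => (hda x 0 h0).deriv.symm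
  -- the part over the moving sliver between `τ 0` and `τ t`
  have hB : HasDerivAt (fun t => ∫ x in (τ 0)..(τ t), f x t) (f (τ 0) 0 * τ') 0 := by
    have hlo : (fun t => (∫ x in (τ 0)..(τ t), f x t) - f (τ 0) 0 * (τ t - τ 0))
        =o[𝓝 0] fun t => τ t - τ 0 := by
      rw [Asymptotics.isLittleO_iff]
      intro ε hε
      have hcont : ContinuousAt F (τ 0, 0) :=
        hcf.continuousAt (hopen.mem_nhds ⟨mem_univ _, h0⟩)
      obtain ⟨η, hη, hηF⟩ := Metric.continuousAt_iff.1 hcont ε hε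
      filter_upwards [hS.mem_nhds h0, Metric.ball_mem_nhds (0:ℝ) hη,
        hτ.continuousAt (Metric.ball_mem_nhds (τ 0) hη)] with t htS htη htτ
      have e : (∫ x in (τ 0)..(τ t), f x t) - f (τ 0) 0 * (τ t - τ 0)
          = ∫ x in (τ 0)..(τ t), (f x t - f (τ 0) 0) := by
        rw [intervalIntegral.integral_sub ((hcx t htS).intervalIntegrable _ _) (by simp)]
        simp [mul_comm]
      rw [e]
      refine intervalIntegral.norm_integral_le_of_norm_le_const fun x hx => ?_
      have hx' : |x - τ 0| < η := by
        have h1 := abs_sub_left_of_mem_uIcc (uIoc_subset_uIcc hx)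
        have h2 : |τ t - τ 0| < η := by simpa [Real.dist_eq] using htτ
        linarith
      have : dist (x, t) (τ 0, (0:ℝ)) < η := by
        rw [Prod.dist_eq]
        exact max_lt (by simpa [Real.dist_eq] using hx') (by simpa using htη)
      have := hηF this
      rw [Real.dist_eq] at this
      exact this.le
    have h2 : HasDerivAt (fun t => f (τ 0) 0 * (τ t - τ 0)) (f (τ 0) 0 * τ') 0 :=
      (hτ.sub_const _).const_mul _
    have h3 : HasDerivAt (fun t => (∫ x in (τ 0)..(τ t), f x t) - f (τ 0) 0 * (τ t - τ 0)) 0 0 := by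
      rw [hasDerivAt_iff_isLittleO]
      have hO : (fun t => τ t - τ 0) =O[𝓝 0] fun t => t - 0 := hτ.isBigO_sub
      simpa using hlo.trans_isBigO hO
    have := h3.add h2
    refine (this.congr_deriv (by simp)).congr_of_eventuallyEq (Eventually.of_forall fun t => ?_)
    simp
  refine ((hB.add hA).congr_of_eventuallyEq ?_)
  filter_upwards [hS.mem_nhds h0] with t ht
  simp only [Pi.add_apply]
  rw [add_comm, intervalIntegral.integral_add_adjacent_intervals] <;>
    exact (hcx t ht).intervalIntegrable _ _

open Set Filter Topology in
/-- Total and partial derivatives of a function on the strip `ℝ × S`, in terms of `fderiv`. -/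
theorem kdvIdx_hasFDerivAt {F : ℝ × ℝ → ℝ} {S : Set ℝ} (hS : IsOpen S)
    {n : WithTop ℕ∞} (hn : n ≠ 0)
    (hf : ContDiffOn ℝ n F (univ ×ˢ S)) {x t : ℝ} (ht : t ∈ S) :
    HasFDerivAt F (fderiv ℝ F (x, t)) (x, t) ∧
    HasDerivAt (fun y => F (y, t)) (fderiv ℝ F (x, t) (1, 0)) x ∧
    HasDerivAt (fun s => F (x, s)) (fderiv ℝ F (x, t) (0, 1)) t := by
  have h1 : HasFDerivAt F (fderiv ℝ F (x, t)) (x, t) :=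
    ((hf.differentiableOn hn).differentiableAt
      ((isOpen_univ.prod hS).mem_nhds ⟨mem_univ _, ht⟩)).hasFDerivAt
  exact ⟨h1, h1.comp_hasDerivAt x ((hasDerivAt_id x).prodMk (hasDerivAt_const x t)),
    h1.comp_hasDerivAt t ((hasDerivAt_const t x).prodMk (hasDerivAt_id t))⟩

open Set Filter Topology in
/-- The mixed partial derivatives of a `C²` function on a strip agree. -/
theorem kdvIdx_mixed {F : ℝ × ℝ → ℝ} {S : Set ℝ} (hS : IsOpen S)
    (hf : ContDiffOn ℝ 2 F (univ ×ˢ S)) {x t : ℝ} (ht : t ∈ S) :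
    ∃ m : ℝ, HasDerivAt (fun y => fderiv ℝ F (y, t) (0, 1)) m x ∧
      HasDerivAt (fun s => fderiv ℝ F (x, s) (1, 0)) m t := by
  have hopen : IsOpen ((univ : Set ℝ) ×ˢ S) := isOpen_univ.prod hS
  have hmem : (x, t) ∈ (univ : Set ℝ) ×ˢ S := ⟨mem_univ _, ht⟩
  have hdf : ContDiffOn ℝ 1 (fderiv ℝ F) (univ ×ˢ S) :=
    hf.fderiv_of_isOpen hopen (by norm_num)
  have h2 : HasFDerivAt (fderiv ℝ F) (fderiv ℝ (fderiv ℝ F) (x, t)) (x, t) :=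
    ((hdf.differentiableOn one_ne_zero).differentiableAt (hopen.mem_nhds hmem)).hasFDerivAt
  have hsymm : IsSymmSndFDerivAt ℝ F (x, t) :=
    (hf.contDiffAt (hopen.mem_nhds hmem)).isSymmSndFDerivAt (by simp)
  refine ⟨fderiv ℝ (fderiv ℝ F) (x, t) (1, 0) (0, 1), ?_, ?_⟩
  · have := h2.comp_hasDerivAt x ((hasDerivAt_id x).prodMk (hasDerivAt_const x t))
    simpa using this.clm_apply (hasDerivAt_const x ((0:ℝ), (1:ℝ)))
  · have := h2.comp_hasDerivAt t ((hasDerivAt_const t x).prodMk (hasDerivAt_id t))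
    rw [hsymm (1, 0) (0, 1)]
    simpa using this.clm_apply (hasDerivAt_const t ((1:ℝ), (0:ℝ)))

open Set Filter Topology in
/-- The variation `v = ∂ₜ f(·, 0)` of a family of periodic KdV profiles `f(·, t)` whose parameters
`(a, E, c)` move with velocity `(d₁, d₂, d₃)`. With `w = v'`, the conclusions are the linearized
profile equation, the boundary values of `v` and `w` at the two ends of a period, the value of
`v 0` forced by the energy equation, and the derivative of the mass. -/
theorem kdvIdx_variation {f : ℝ → ℝ → ℝ} {S : Set ℝ} (hS : IsOpen S) (h0 : (0 : ℝ) ∈ S)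
    (hf : ContDiffOn ℝ 3 (fun q : ℝ × ℝ => f q.1 q.2) (univ ×ˢ S))
    {τ : ℝ → ℝ} {τ' : ℝ} (hτ : HasDerivAt τ τ' 0)
    {a E c d₁ d₂ d₃ : ℝ}
    (hprofile : ∀ t ∈ S, ∀ x, deriv (deriv (fun y => f y t)) x + (f x t)^2
      - (c + t * d₃) * f x t = a + t * d₁)
    (henergy : ∀ t ∈ S, ∀ x, 1/2 * (deriv (fun y => f y t) x)^2 + (f x t)^3/3
      - (c + t * d₃)/2 * (f x t)^2 - (a + t * d₁) * f x t = E + t * d₂)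
    (hper : ∀ t ∈ S, ∀ x, f (x + τ t) t = f x t)
    (hinit : ∀ t ∈ S, deriv (fun y => f y t) 0 = 0) :
    ∃ v w : ℝ → ℝ, (∀ x, HasDerivAt v (w x) x) ∧
      (∀ x, HasDerivAt w (d₁ + d₃ * f x 0 + c * v x - 2 * f x 0 * v x) x) ∧
      w 0 = 0 ∧ v (τ 0) = v 0 ∧
      w (τ 0) = -τ' * (a + c * f 0 0 - (f 0 0)^2) ∧
      (a + c * f 0 0 - (f 0 0)^2) * v 0 = -(d₂ + d₁ * f 0 0 + d₃ * (f 0 0)^2 / 2) ∧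
      HasDerivAt (fun t => ∫ x in (0:ℝ)..(τ t), f x t)
        (f 0 0 * τ' + ∫ x in (0:ℝ)..(τ 0), v x) 0 := by
  have hopen : IsOpen ((univ : Set ℝ) ×ˢ S) := isOpen_univ.prod hS
  set F : ℝ × ℝ → ℝ := fun q => f q.1 q.2 with hF
  set G : ℝ × ℝ → ℝ := fun q => fderiv ℝ F q (1, 0) with hG
  have hGc : ContDiffOn ℝ 2 G (univ ×ˢ S) :=
    (hf.fderiv_of_isOpen hopen (by norm_num)).clm_apply contDiffOn_const
  have hf2 : ContDiffOn ℝ 2 F (univ ×ˢ S) := hf.of_le (by norm_num)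
  have hFx : ∀ x, ∀ t ∈ S, HasDerivAt (fun y => f y t) (G (x, t)) x := fun x t ht =>
    (kdvIdx_hasFDerivAt hS (by norm_num) hf ht).2.1
  have hFx' : ∀ t ∈ S, deriv (fun y => f y t) = fun x => G (x, t) := fun t ht =>
    funext fun x => (hFx x t ht).deriv
  have hGx : ∀ x, ∀ t ∈ S, fderiv ℝ G (x, t) (1, 0)
      = a + t * d₁ + (c + t * d₃) * f x t - (f x t)^2 := by
    intro x t ht
    have h1 := (kdvIdx_hasFDerivAt hS (by norm_num) hGc (x := x) ht).2.1
    have h2 := hprofile t ht x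
    rw [hFx' t ht, h1.deriv] at h2
    linarith
  have hFt : ∀ x, ∀ t ∈ S, HasDerivAt (fun s => f x s) (fderiv ℝ F (x, t) (0, 1)) t :=
    fun x t ht => (kdvIdx_hasFDerivAt hS (by norm_num) hf ht).2.2
  have hG0 : ∀ t ∈ S, G (0, t) = 0 := by
    intro t ht
    have := hinit t ht
    rwa [hFx' t ht] at this
  have hfT : f (τ 0) 0 = f 0 0 := by simpa using hper 0 h0 0
  have hGT : ∀ t ∈ S, G (τ t, t) = 0 := by
    intro t ht
    have h1 : HasDerivAt (fun y => f (y + τ t) t) (G (0 + τ t, t)) 0 := by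
      exact HasDerivAt.comp_add_const (0:ℝ) (τ t) (hFx (0 + τ t) t ht)
    have h2 : (fun y => f (y + τ t) t) = fun y => f y t := funext fun y => hper t ht y
    rw [h2] at h1
    have := h1.unique (hFx 0 t ht)
    rw [hG0 t ht] at this
    simpa using this
  have hlin : ∀ (L : ℝ × ℝ →L[ℝ] ℝ) (p q : ℝ), L (p, q) = L (1, 0) * p + L (0, 1) * q := by
    intro L p q
    have : ((p, q) : ℝ × ℝ) = p • ((1:ℝ), (0:ℝ)) + q • ((0:ℝ), (1:ℝ)) := by simp
    rw [this, map_add, map_smul, map_smul]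
    simp [mul_comm]
  have hcurve : HasDerivAt (fun t => (τ t, t)) (τ', (1:ℝ)) 0 := hτ.prodMk (hasDerivAt_id 0)
  have hSn : S ∈ 𝓝 (0:ℝ) := hS.mem_nhds h0
  refine ⟨fun x => fderiv ℝ F (x, 0) (0, 1), fun x => fderiv ℝ G (x, 0) (0, 1),
    ?_, ?_, ?_, ?_, ?_, ?_, ?_⟩
  · intro x
    obtain ⟨m, hm1, hm2⟩ := kdvIdx_mixed hS hf2 (x := x) h0
    have h1 := (kdvIdx_hasFDerivAt hS (by norm_num) hGc (x := x) h0).2.2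
    exact hm1.congr_deriv (hm2.unique h1)
  · intro x
    obtain ⟨m, hm1, hm2⟩ := kdvIdx_mixed hS hGc (x := x) h0
    have hv := hFt x 0 h0
    have hlinear : ∀ k d : ℝ, HasDerivAt (fun t : ℝ => k + t * d) d 0 := fun k d => by
      simpa using ((hasDerivAt_id (0:ℝ)).mul_const d).const_add k
    have h1 : HasDerivAt (fun t => a + t * d₁ + (c + t * d₃) * f x t - (f x t)^2)
        (d₁ + d₃ * f x 0 + c * fderiv ℝ F (x, 0) (0, 1)
          - 2 * f x 0 * fderiv ℝ F (x, 0) (0, 1)) 0 := by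
      refine (((hlinear a d₁).add ((hlinear c d₃).mul hv)).sub (hv.pow 2)).congr_deriv ?_
      simp
      ring
    have h2 : (fun s => fderiv ℝ G (x, s) (1, 0)) =ᶠ[𝓝 0]
        fun t => a + t * d₁ + (c + t * d₃) * f x t - (f x t)^2 := by
      filter_upwards [hSn] with t ht using hGx x t ht
    exact hm1.congr_deriv (hm2.unique (h1.congr_of_eventuallyEq h2))
  · have h1 := (kdvIdx_hasFDerivAt hS (by norm_num) hGc (x := 0) h0).2.2
    have h2 : (fun s => G (0, s)) =ᶠ[𝓝 0] fun _ => (0:ℝ) := by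
      filter_upwards [hSn] with t ht using hG0 t ht
    exact h1.unique ((hasDerivAt_const (0:ℝ) (0:ℝ)).congr_of_eventuallyEq h2)
  · have h1 := (kdvIdx_hasFDerivAt hS (by norm_num) hf (x := τ 0) h0).1.comp_hasDerivAt
      (f := fun t => (τ t, t)) 0 hcurve
    rw [hlin] at h1
    have h2 : (F ∘ fun t => (τ t, t)) =ᶠ[𝓝 0] fun t => f 0 t := by
      filter_upwards [hSn] with t ht
      simpa using hper t ht 0
    have h3 := ((hFt 0 0 h0).congr_of_eventuallyEq h2).unique h1
    have h4 : fderiv ℝ F (τ 0, 0) (1, 0) = 0 := hGT 0 h0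
    rw [h4] at h3
    simpa using h3.symm
  · have h1 := (kdvIdx_hasFDerivAt hS (by norm_num) hGc (x := τ 0) h0).1.comp_hasDerivAt
      (f := fun t => (τ t, t)) 0 hcurve
    rw [hlin] at h1
    have h2 : (G ∘ fun t => (τ t, t)) =ᶠ[𝓝 0] fun _ => (0:ℝ) := by
      filter_upwards [hSn] with t ht
      simpa using hGT t ht
    have h3 := ((hasDerivAt_const (0:ℝ) (0:ℝ)).congr_of_eventuallyEq h2).unique h1
    rw [hGx (τ 0) 0 h0, hfT] at h3
    show fderiv ℝ G (τ 0, 0) (0, 1) = _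
    linear_combination -h3
  · have hv := hFt 0 0 h0
    have hlinear : ∀ k d : ℝ, HasDerivAt (fun t : ℝ => k + t * d) d 0 := fun k d => by
      simpa using ((hasDerivAt_id (0:ℝ)).mul_const d).const_add k
    have h1 := (((hv.pow 3).div_const 3).sub (((hlinear c d₃).div_const 2).mul (hv.pow 2))).sub
      ((hlinear a d₁).mul hv)
    have h2 := (hlinear E d₂).congr_of_eventuallyEq (f₁ := fun t => (f 0 t)^3/3
        - (c + t * d₃)/2 * (f 0 t)^2 - (a + t * d₁) * f 0 t) (by
      filter_upwards [hSn] with t ht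
      have := henergy t ht 0
      rw [hinit t ht] at this
      linarith)
    have h3 := h1.unique h2
    simp at h3
    show _ * fderiv ℝ F (0, 0) (0, 1) = _
    linear_combination -h3
  · have h1 := kdvIdx_leibniz hS h0 (hf.of_le (by norm_num)) hτ
    rw [hfT] at h1
    refine h1.congr_deriv ?_
    rw [intervalIntegral.integral_congr fun x _ => (hFt x 0 h0).deriv]

/-! ### Integral identities over one period -/

theorem kdvIdx_const {F : ℝ → ℝ} (h : ∀ x, HasDerivAt F 0 x) (x y : ℝ) : F x = F y :=
  is_const_of_deriv_eq_zero (fun x => (h x).differentiableAt) (fun x => (h x).deriv) x y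

/-- Integrating the profile equation over a period gives `P = a T + c M`. -/
theorem kdvIdx_momentum {a c T M : ℝ} {U U₁ : ℝ → ℝ}
    (hU : ∀ x, HasDerivAt U (U₁ x) x)
    (hU₁ : ∀ x, HasDerivAt U₁ (a + c * U x - U x ^ 2) x)
    (hU₁T : U₁ T = 0) (hU₁0 : U₁ 0 = 0)
    (hM : M = ∫ x in (0:ℝ)..T, U x) :
    (∫ x in (0:ℝ)..T, U x ^ 2) = a * T + c * M := by
  have hc : Continuous U := continuous_iff_continuousAt.2 fun x => (hU x).continuousAt
  have h := intervalIntegral.integral_eq_sub_of_hasDerivAt (a := 0) (b := T)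
    (fun x _ => hU₁ x) (Continuous.intervalIntegrable (by fun_prop) _ _)
  rw [intervalIntegral.integral_sub (Continuous.intervalIntegrable (by fun_prop) _ _)
    (Continuous.intervalIntegrable (by fun_prop) _ _),
    intervalIntegral.integral_add (Continuous.intervalIntegrable (by fun_prop) _ _)
    (Continuous.intervalIntegrable (by fun_prop) _ _)] at h
  simp only [intervalIntegral.integral_const_mul, intervalIntegral.integral_const,
    smul_eq_mul, ← hM] at h
  linarith

/-- Green's identity over one period for a solution `v` of `v'' + (2 U - c) v = d₁ + d₃ U`, paired
with two explicit functions: the kernel element `φ` and the function `ω = 2 U + x U₁ - c` with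
`ω'' + (2 U - c) ω = 4 a + c ^ 2`. The factor on the left of the first identity is
`φ 0 * U₁'(0) * τ'`. -/
theorem kdvIdx_green {a E c d₁ d₂ d₃ T τ' M β : ℝ} {U U₁ v w : ℝ → ℝ}
    (hU : ∀ x, HasDerivAt U (U₁ x) x)
    (hU₁ : ∀ x, HasDerivAt U₁ (a + c * U x - U x ^ 2) x)
    (hE : ∀ x, U₁ x ^ 2 = 2 * E + 2 * a * U x + c * U x ^ 2 - 2 / 3 * U x ^ 3)
    (hU0 : U 0 = β) (hUT : U T = β) (hU₁0 : U₁ 0 = 0) (hU₁T : U₁ T = 0)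
    (hM : M = ∫ x in (0:ℝ)..T, U x)
    (hv : ∀ x, HasDerivAt v (w x) x)
    (hw : ∀ x, HasDerivAt w (d₁ + d₃ * U x + c * v x - 2 * U x * v x) x)
    (hw0 : w 0 = 0) (hvT : v T = v 0) (hwT : w T = -τ' * (a + c * β - β ^ 2))
    (hv0 : (a + c * β - β ^ 2) * v 0 = -(d₂ + d₁ * β + d₃ * β ^ 2 / 2)) :
    ((4 * a + c^2) * (-2 * β^2 + 3 * c * β + 4 * a) + (6 * E + a * c) * (2 * β - c))
        * (a + c * β - β ^ 2) * τ' =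
      (d₂ + d₁ * β + d₃ * β ^ 2 / 2) * ((4 * a + c^2) * M + (6 * E + a * c) * T)
      - d₁ * ((4 * a + c^2) * (M * β - 3 * (a * T + c * M) + 3 * c * M + 4 * a * T)
          + (6 * E + a * c) * (M + (β - c) * T))
      - d₃ * ((4 * a + c^2) * (M * β^2 / 2
            - 3 / 2 * (2 * E * T + 3 * a * M + 2 * c * (a * T + c * M))
            + 3 * c * (a * T + c * M) + 4 * a * M)
          + (6 * E + a * c) * (3 / 2 * (a * T + c * M) + T * β^2 / 2 - c * M)) ∧
    (4 * a + c^2) * (∫ x in (0:ℝ)..T, v x) =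
      -(d₂ + d₁ * β + d₃ * β ^ 2 / 2) * T + τ' * (a + c * β - β ^ 2) * (2 * β - c)
      + d₁ * (M + (β - c) * T)
      + d₃ * (3 / 2 * (a * T + c * M) + T * β^2 / 2 - c * M) := by
  have hUc : Continuous U := continuous_iff_continuousAt.2 fun x => (hU x).continuousAt
  have hvc : Continuous v := continuous_iff_continuousAt.2 fun x => (hv x).continuousAt
  set Z : ℝ → ℝ := fun x => ∫ y in (0:ℝ)..x, U y with hZdef
  set N : ℝ → ℝ := fun x => ∫ y in (0:ℝ)..x, v y with hNdef
  have hZ : ∀ x, HasDerivAt Z (U x) x := fun x => hUc.integral_hasStrictDerivAt 0 x |>.hasDerivAt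
  have hN : ∀ x, HasDerivAt N (v x) x := fun x => hvc.integral_hasStrictDerivAt 0 x |>.hasDerivAt
  have hZ0 : Z 0 = 0 := by simp [hZdef]
  have hN0 : N 0 = 0 := by simp [hNdef]
  have hZT : Z T = M := hM.symm
  have hid : ∀ x : ℝ, HasDerivAt (fun x : ℝ => x) 1 x := hasDerivAt_id
  have hU₂ : ∀ x, HasDerivAt (fun x => a + c * U x - U x ^ 2) (c * U₁ x - 2 * U x * U₁ x) x := by
    intro x
    refine ((((hU x).const_mul c).const_add a).sub ((hU x).pow 2)).congr_deriv ?_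
    simp
  have hUsq : ∀ x, HasDerivAt (fun x => U x ^ 2) (2 * U x * U₁ x) x := by
    intro x
    refine ((hU x).pow 2).congr_deriv ?_
    simp
  constructor
  · set D := 4 * a + c^2 with hD
    set e := 6 * E + a * c with he
    -- the kernel element `φ`
    have hφ : ∀ x, HasDerivAt
        (fun x => D * (Z x * U₁ x - 2 * U x ^ 2 + 3 * c * U x + 4 * a)
          + e * (x * U₁ x + 2 * U x - c))
        (D * (-3 * U x * U₁ x + Z x * (a + c * U x - U x ^ 2) + 3 * c * U₁ x)
          + e * (3 * U₁ x + x * (a + c * U x - U x ^ 2))) x := by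
      intro x
      refine (((((((hZ x).mul (hU₁ x)).sub ((hUsq x).const_mul 2)).add
        ((hU x).const_mul (3 * c))).add_const (4 * a)).const_mul D).add
        (((((hid x).mul (hU₁ x)).add ((hU x).const_mul 2)).sub_const c).const_mul e)).congr_deriv ?_
      ring
    -- the second derivative of `φ`; modulo the energy equation it is `-(2 U - c) φ`
    have hφ' : ∀ x, HasDerivAt
        (fun x => D * (-3 * (U x * U₁ x) + Z x * (a + c * U x - U x ^ 2) + 3 * c * U₁ x)
          + e * (3 * U₁ x + x * (a + c * U x - U x ^ 2)))
        (D * (-3 * U₁ x ^ 2 - 2 * U x * (a + c * U x - U x ^ 2)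
            + Z x * (c * U₁ x - 2 * U x * U₁ x) + 3 * c * (a + c * U x - U x ^ 2))
          + e * (4 * (a + c * U x - U x ^ 2) + x * (c * U₁ x - 2 * U x * U₁ x))) x := by
      intro x
      refine (((((((hU x).mul (hU₁ x)).const_mul (-3)).add ((hZ x).mul (hU₂ x))).add
        ((hU₁ x).const_mul (3 * c))).const_mul D).add
        ((((hU₁ x).const_mul 3).add ((hid x).mul (hU₂ x))).const_mul e)).congr_deriv ?_
      ring
    -- antiderivative of `U ^ 2`
    have hS : ∀ x, HasDerivAt (fun x => a * x + c * Z x - U₁ x) (U x ^ 2) x := by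
      intro x
      refine ((((hid x).const_mul a).add ((hZ x).const_mul c)).sub (hU₁ x)).congr_deriv ?_
      ring
    -- antiderivative of `φ`
    have hA : ∀ x, HasDerivAt (fun x => D * (Z x * U x - 3 * (a * x + c * Z x - U₁ x)
          + 3 * c * Z x + 4 * a * x) + e * (x * U x + Z x - c * x))
        (D * (Z x * U₁ x - 2 * U x ^ 2 + 3 * c * U x + 4 * a)
          + e * (x * U₁ x + 2 * U x - c)) x := by
      intro x
      refine (((((((hZ x).mul (hU x)).sub ((hS x).const_mul 3)).add
        ((hZ x).const_mul (3 * c))).add ((hid x).const_mul (4 * a))).const_mul D).add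
        (((((hid x).mul (hU x)).add (hZ x)).sub ((hid x).const_mul c)).const_mul e)).congr_deriv ?_
      ring
    -- antiderivative of `U * φ`; the term in `3 / 2` is `5 / 2` times an antiderivative of `U ^ 3`
    have hC : ∀ x, HasDerivAt (fun x => D * (Z x * U x ^ 2 / 2
          - 3 / 2 * (2 * E * x + 3 * a * Z x + 2 * c * (a * x + c * Z x - U₁ x) - U x * U₁ x)
          + 3 * c * (a * x + c * Z x - U₁ x) + 4 * a * Z x)
          + e * (x * U x ^ 2 / 2 + 3 / 2 * (a * x + c * Z x - U₁ x) - c * Z x))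
        (U x * (D * (Z x * U₁ x - 2 * U x ^ 2 + 3 * c * U x + 4 * a)
          + e * (x * U₁ x + 2 * U x - c))) x := by
      intro x
      refine ((((((((hZ x).mul (hUsq x)).div_const 2).sub (((((
        ((hid x).const_mul (2 * E)).add ((hZ x).const_mul (3 * a))).add
        ((hS x).const_mul (2 * c))).sub ((hU x).mul (hU₁ x)))).const_mul (3 / 2))).add
        ((hS x).const_mul (3 * c))).add ((hZ x).const_mul (4 * a))).const_mul D).add
        ((((((hid x).mul (hUsq x)).div_const 2).add ((hS x).const_mul (3 / 2))).sub
          ((hZ x).const_mul c)).const_mul e)).congr_deriv ?_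
      linear_combination (3 / 2 * D) * hE x
    -- `φ v' - v φ'` minus an antiderivative of `φ (d₁ + d₃ U)` is constant
    have hF := kdvIdx_const (F := fun x =>
        (D * (Z x * U₁ x - 2 * U x ^ 2 + 3 * c * U x + 4 * a) + e * (x * U₁ x + 2 * U x - c)) * w x
        - v x * (D * (-3 * (U x * U₁ x) + Z x * (a + c * U x - U x ^ 2) + 3 * c * U₁ x)
          + e * (3 * U₁ x + x * (a + c * U x - U x ^ 2)))
        - d₁ * (D * (Z x * U x - 3 * (a * x + c * Z x - U₁ x)
          + 3 * c * Z x + 4 * a * x) + e * (x * U x + Z x - c * x))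
        - d₃ * (D * (Z x * U x ^ 2 / 2
          - 3 / 2 * (2 * E * x + 3 * a * Z x + 2 * c * (a * x + c * Z x - U₁ x) - U x * U₁ x)
          + 3 * c * (a * x + c * Z x - U₁ x) + 4 * a * Z x)
          + e * (x * U x ^ 2 / 2 + 3 / 2 * (a * x + c * Z x - U₁ x) - c * Z x))) (fun x => by
      refine (((((hφ x).mul (hw x)).sub ((hv x).mul (hφ' x))).sub
        ((hA x).const_mul d₁)).sub ((hC x).const_mul d₃)).congr_deriv ?_
      rw [hD, he]
      linear_combination (3 * (4 * a + c^2) * v x) * hE x) T 0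
    simp only [hZT, hZ0, hU0, hUT, hU₁0, hU₁T, hw0, hvT, hwT] at hF
    linear_combination -hF - (D * M + e * T) * hv0
  · -- the same identity for `ω` in place of `φ`, with the extra term `∫ v * (4 a + c ^ 2)`
    have hF := kdvIdx_const (F := fun x =>
        (4 * a + c^2) * N x - (v x * (3 * U₁ x + x * (a + c * U x - U x ^ 2))
          - w x * (2 * U x + x * U₁ x - c))
        - d₁ * (Z x + x * U x - c * x)
        - d₃ * (3 / 2 * (a * x + c * Z x - U₁ x) + x * U x ^ 2 / 2 - c * Z x)) (fun x => by
      refine (((((hN x).const_mul (4 * a + c^2)).sub (((hv x).mul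
        (((hU₁ x).const_mul 3).add ((hid x).mul (hU₂ x)))).sub ((hw x).mul
        ((((hU x).const_mul 2).add ((hid x).mul (hU₁ x))).sub_const c)))).sub
        ((((hZ x).add ((hid x).mul (hU x))).sub ((hid x).const_mul c)).const_mul d₁)).sub
        ((((((((hid x).const_mul a).add ((hZ x).const_mul c)).sub (hU₁ x)).const_mul (3 / 2)).add
          (((hid x).mul (hUsq x)).div_const 2)).sub ((hZ x).const_mul c)).const_mul d₃)).congr_deriv ?_
      simp only [Pi.add_apply, Pi.mul_apply]
      ring) T 0
    simp only [hZT, hZ0, hN0, hU0, hUT, hU₁0, hU₁T, hw0, hvT, hwT] at hF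
    have hNT : N T = ∫ x in (0:ℝ)..T, v x := rfl
    rw [← hNT]
    linear_combination hF + T * hv0

/-! ### Location of the mean and positivity -/

/-- The mean of the profile lies strictly between the two larger roots `β < α` of `E - V`. -/
theorem kdvIdx_bounds {a E c α β γ T M : ℝ} {U U₁ : ℝ → ℝ}
    (hU : ∀ x, HasDerivAt U (U₁ x) x)
    (hU₁ : ∀ x, HasDerivAt U₁ (a + c * U x - U x ^ 2) x)
    (hE : ∀ x, U₁ x ^ 2 = 2 * E + 2 * a * U x + c * U x ^ 2 - 2 / 3 * U x ^ 3)
    (hroots : ∀ s, 2 * E + 2 * a * s + c * s ^ 2 - 2 / 3 * s ^ 3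
      = 2 / 3 * ((s - γ) * (s - β) * (α - s)))
    (hγβ : γ < β) (hβα : β < α) (hW : a + c * β - β ^ 2 ≠ 0)
    (hU0 : U 0 = β) (hU₁0 : U₁ 0 = 0) (hU₁T : U₁ T = 0) (hT : 0 < T)
    (hM : M = ∫ x in (0:ℝ)..T, U x) : β * T < M ∧ M < α * T := by
  have hUc : Continuous U := continuous_iff_continuousAt.2 fun x => (hU x).continuousAt
  have hnn : ∀ x, 0 ≤ (U x - γ) * (U x - β) * (α - U x) := by
    intro x
    have h1 := hE x
    rw [hroots] at h1
    nlinarith [sq_nonneg (U₁ x)]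
  have hle : ∀ x, U x ≤ α := by
    intro x
    by_contra! h
    have := mul_pos (mul_pos (sub_pos.2 (hγβ.trans (hβα.trans h))) (sub_pos.2 (hβα.trans h)))
      (sub_pos.2 h)
    linarith [hnn x]
  have hge : ∀ x, β ≤ U x := by
    intro x
    by_contra! h
    -- otherwise `U` takes a value strictly between `γ` and `β`
    obtain ⟨s, hs1, hs2⟩ := exists_between (max_lt h hγβ)
    have hsm : s ∈ Set.uIcc (U 0) (U x) := by
      rw [hU0, Set.uIcc_of_ge h.le]
      exact ⟨(le_max_left _ _).trans hs1.le, hs2.le⟩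
    obtain ⟨y, -, hy⟩ := intermediate_value_uIcc (hUc.continuousOn) hsm
    have h3 := hnn y
    rw [hy] at h3
    have := mul_pos (mul_pos (sub_pos.2 ((le_max_right _ _).trans_lt hs1)) (sub_pos.2 hs2))
      (sub_pos.2 (hs2.trans hβα))
    nlinarith
  have hconst : ∀ k : ℝ, (∫ _ in (0:ℝ)..T, k) = k * T := fun k => by simp [mul_comm]
  constructor
  · rw [hM, ← hconst β]
    refine intervalIntegral.integral_lt_integral_of_continuousOn_of_le_of_exists_lt hT
      continuousOn_const hUc.continuousOn (fun x _ => hge x) ?_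
    -- a constant profile `β` would give `∫ U² = a T + c ∫ U` and hence `W = 0`
    by_contra! hcon
    have heq : Set.EqOn U (fun _ => β) (Set.uIcc 0 T) := fun x hx => by
      rw [Set.uIcc_of_le hT.le] at hx
      exact le_antisymm (hcon x hx) (hge x)
    have h1 := kdvIdx_momentum hU hU₁ hU₁T hU₁0 rfl
    rw [intervalIntegral.integral_congr heq, hconst,
      intervalIntegral.integral_congr (g := fun _ => β ^ 2)
        (fun x hx => by simp only [heq hx]), hconst] at h1
    exact hW (mul_right_cancel₀ hT.ne' (by linarith))
  · rw [hM, ← hconst α]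
    exact intervalIntegral.integral_lt_integral_of_continuousOn_of_le_of_exists_lt hT
      hUc.continuousOn continuousOn_const (fun x _ => hle x)
      ⟨0, ⟨le_rfl, hT.le⟩, by rw [hU0]; exact hβα⟩

/-- For the periodic (cnoidal) traveling waves of the KdV equation
(`f(u) = u²`), the periodic stability index `{T,M,P}_{a,E,c}` — the Jacobian
determinant of the period, mass, and momentum with respect to `(a,E,c)` — is
strictly positive wherever `(T,M,P)` is differentiable. -/
theorem kdv_stability_index_positive
    (V : ℝ → ℝ → ℝ → ℝ) (hV : ∀ s a c, V s a c = s^3/3 - c/2 * s^2 - a * s)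
    (Ω : Set (ℝ × ℝ × ℝ)) (hΩ : IsOpen Ω)
    (um up : ℝ × ℝ × ℝ → ℝ)
    (hum : ContDiffOn ℝ 1 um Ω) (hup : ContDiffOn ℝ 1 up Ω)
    (horder : ∀ p ∈ Ω, um p < up p)
    (hVm : ∀ a E c : ℝ, (a, E, c) ∈ Ω → V (um (a, E, c)) a c = E)
    (hVp : ∀ a E c : ℝ, (a, E, c) ∈ Ω → V (up (a, E, c)) a c = E)
    (hVm' : ∀ a E c : ℝ, (a, E, c) ∈ Ω → deriv (fun s => V s a c) (um (a, E, c)) < 0)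
    (hVp' : ∀ a E c : ℝ, (a, E, c) ∈ Ω → 0 < deriv (fun s => V s a c) (up (a, E, c)))
    (hbelow : ∀ a E c : ℝ, (a, E, c) ∈ Ω →
      ∀ s ∈ Set.Ioo (um (a, E, c)) (up (a, E, c)), V s a c < E)
    (T : ℝ × ℝ × ℝ → ℝ) (hT : ContDiffOn ℝ 1 T Ω) (hTpos : ∀ p ∈ Ω, 0 < T p)
    (u : ℝ → ℝ → ℝ → ℝ → ℝ)
    (hu : ContDiffOn ℝ 3 (fun q : ℝ × ℝ × ℝ × ℝ => u q.1 q.2.1 q.2.2.1 q.2.2.2)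
      ((Set.univ : Set ℝ) ×ˢ Ω))
    (hprofile : ∀ a E c : ℝ, (a, E, c) ∈ Ω → ∀ x : ℝ,
      deriv (deriv (fun y => u y a E c)) x + (u x a E c)^2 - c * u x a E c = a)
    (henergy : ∀ a E c : ℝ, (a, E, c) ∈ Ω → ∀ x : ℝ,
      1/2 * (deriv (fun y => u y a E c) x)^2 + (u x a E c)^3/3
        - c/2 * (u x a E c)^2 - a * u x a E c = E)
    (hperiodic : ∀ a E c : ℝ, (a, E, c) ∈ Ω → ∀ x : ℝ,
      u (x + T (a, E, c)) a E c = u x a E c)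
    (hinit : ∀ a E c : ℝ, (a, E, c) ∈ Ω → u 0 a E c = um (a, E, c))
    (hinit' : ∀ a E c : ℝ, (a, E, c) ∈ Ω → deriv (fun y => u y a E c) 0 = 0)
    (M P : ℝ × ℝ × ℝ → ℝ)
    (hM : ∀ q : ℝ × ℝ × ℝ, M q = ∫ x in (0:ℝ)..(T q), u x q.1 q.2.1 q.2.2)
    (hP : ∀ q : ℝ × ℝ × ℝ, P q = ∫ x in (0:ℝ)..(T q), (u x q.1 q.2.1 q.2.2)^2) :
    ∀ a E c : ℝ, (a, E, c) ∈ Ω →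
      DifferentiableAt ℝ (fun q : ℝ × ℝ × ℝ => (T q, M q, P q)) (a, E, c) →
      0 < Matrix.det
        !![deriv (fun a' => T (a', E, c)) a, deriv (fun E' => T (a, E', c)) E,
             deriv (fun c' => T (a, E, c')) c;
           deriv (fun a' => M (a', E, c)) a, deriv (fun E' => M (a, E', c)) E,
             deriv (fun c' => M (a, E, c')) c;
           deriv (fun a' => P (a', E, c)) a, deriv (fun E' => P (a, E', c)) E,
             deriv (fun c' => P (a, E, c')) c] := by
  intro a E c hmem _
  obtain ⟨U, hUdef⟩ : ∃ U : ℝ → ℝ, U = fun x => u x a E c := ⟨_, rfl⟩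
  obtain ⟨β, hβ⟩ : ∃ β, β = um (a, E, c) := ⟨_, rfl⟩
  obtain ⟨α, hα⟩ : ∃ α, α = up (a, E, c) := ⟨_, rfl⟩
  have hVd : ∀ s, deriv (fun s => V s a c) s = s ^ 2 - c * s - a := by
    intro s
    have h1 : (fun s => V s a c) = fun s => s^3/3 - c/2 * s^2 - a * s := funext fun s => hV s a c
    rw [h1]
    refine HasDerivAt.deriv ?_
    refine (((((hasDerivAt_id' s).pow 3).div_const 3).sub
      (((hasDerivAt_id' s).pow 2).const_mul (c / 2))).sub
      ((hasDerivAt_id' s).const_mul a)).congr_deriv ?_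
    simp
    ring
  have hEβ := hVm a E c hmem
  have hEα := hVp a E c hmem
  have hβ' := hVm' a E c hmem
  have hα' := hVp' a E c hmem
  rw [hV, ← hβ] at hEβ
  rw [hV, ← hα] at hEα
  rw [hVd, ← hβ] at hβ'
  rw [hVd, ← hα] at hα'
  have hβα : β < α := by rw [hβ, hα]; exact horder _ hmem
  obtain ⟨γ, hγ⟩ : ∃ γ, γ = 3 * c / 2 - α - β := ⟨_, rfl⟩
  -- Vieta's relations for the roots of `E - V`
  have hc : c = 2 / 3 * (α + β + γ) := by rw [hγ]; ring
  have ha : a = -(α * β + α * γ + β * γ) / 3 := by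
    have h : (α - β) * (a + (α * β + α * γ + β * γ) / 3) = 0 := by
      rw [hγ]; linear_combination hEβ - hEα
    rcases mul_eq_zero.1 h with h | h
    · exact absurd h (sub_pos.2 hβα).ne'
    · linarith
  have hEr : E = α * β * γ / 3 := by
    rw [← hEβ, ha, hc]; ring
  have hγβ : γ < β := by
    have h : 0 < (β - γ) * (α - β) := by
      rw [ha, hc] at hβ'; nlinarith
    exact sub_pos.1 (pos_of_mul_pos_left h (sub_pos.2 hβα).le)
  have hroots : ∀ s, 2 * E + 2 * a * s + c * s ^ 2 - 2 / 3 * s ^ 3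
      = 2 / 3 * ((s - γ) * (s - β) * (α - s)) := by
    intro s; rw [hEr, ha, hc]; ring
  have hD : 4 * a + c ^ 2 = 4 / 9 * ((α - β) ^ 2 + (α - β) * (β - γ) + (β - γ) ^ 2) := by
    rw [ha, hc]; ring
  have hDpos : 0 < 4 * a + c ^ 2 := by
    rw [hD]
    have h1 := sub_pos.2 hβα
    have h2 := sub_pos.2 hγβ
    positivity
  have hWr : a + c * β - β ^ 2 = (α - β) * (β - γ) / 3 := by rw [ha, hc]; ring
  have hWpos : 0 < a + c * β - β ^ 2 := by linarith
  have hφ : (4 * a + c^2) * (-2 * β^2 + 3 * c * β + 4 * a) + (6 * E + a * c) * (2 * β - c)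
      = 4 / 9 * (α - γ) ^ 2 * ((α - β) * (β - γ)) := by
    rw [hEr, ha, hc]; ring
  have hφpos : 0 < (4 * a + c^2) * (-2 * β^2 + 3 * c * β + 4 * a)
      + (6 * E + a * c) * (2 * β - c) := by
    rw [hφ]
    have h1 := sub_pos.2 hβα
    have h2 := sub_pos.2 hγβ
    have h3 := sub_pos.2 (hγβ.trans hβα)
    positivity
  -- restriction of the family to a line in parameter space
  have hline : ∀ d₁ d₂ d₃ : ℝ, ∃ (S : Set ℝ), IsOpen S ∧ (0:ℝ) ∈ S ∧
      (∀ t ∈ S, (a + t * d₁, E + t * d₂, c + t * d₃) ∈ Ω) ∧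
      ContDiffOn ℝ 3 (fun q : ℝ × ℝ => u q.1 (a + q.2 * d₁) (E + q.2 * d₂) (c + q.2 * d₃))
        (Set.univ ×ˢ S) := by
    intro d₁ d₂ d₃
    refine ⟨(fun t : ℝ => (a + t * d₁, E + t * d₂, c + t * d₃)) ⁻¹' Ω,
      hΩ.preimage (by fun_prop), by simpa using hmem, fun t ht => ht, ?_⟩
    exact hu.comp (f := fun q : ℝ × ℝ => (q.1, a + q.2 * d₁, E + q.2 * d₂, c + q.2 * d₃))
      (ContDiff.contDiffOn (by fun_prop)) (fun q hq => ⟨Set.mem_univ _, hq.2⟩)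
  -- regularity of the profile
  obtain ⟨U₁, hU₁def⟩ : ∃ U₁ : ℝ → ℝ, U₁ = deriv U := ⟨_, rfl⟩
  have hUcd : ContDiff ℝ 3 U := by
    rw [← contDiffOn_univ, hUdef]
    exact hu.comp (f := fun x : ℝ => (x, a, E, c)) (ContDiff.contDiffOn (by fun_prop))
      (fun x _ => ⟨Set.mem_univ _, hmem⟩)
  have hU : ∀ x, HasDerivAt U (U₁ x) x := fun x => by
    rw [hU₁def]; exact (hUcd.differentiable (by norm_num) x).hasDerivAt
  have hU₁ : ∀ x, HasDerivAt U₁ (a + c * U x - U x ^ 2) x := by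
    intro x
    have h1 : Differentiable ℝ (deriv U) :=
      (ContDiff.iterate_deriv' 2 1 (by exact_mod_cast hUcd)).differentiable (by norm_num)
    have h2 := hprofile a E c hmem x
    rw [hU₁def]
    refine (h1 x).hasDerivAt.congr_deriv ?_
    rw [hUdef]
    linarith
  have hE : ∀ x, U₁ x ^ 2 = 2 * E + 2 * a * U x + c * U x ^ 2 - 2 / 3 * U x ^ 3 := by
    intro x
    have h2 := henergy a E c hmem x
    rw [hU₁def, hUdef]
    linarith
  have hU0 : U 0 = β := by rw [hUdef, hβ]; exact hinit a E c hmem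
  have hper : ∀ x, U (x + T (a, E, c)) = U x := by rw [hUdef]; exact hperiodic a E c hmem
  have hUT : U (T (a, E, c)) = β := by rw [← hU0]; simpa using hper 0
  have hU₁0 : U₁ 0 = 0 := by rw [hU₁def, hUdef]; exact hinit' a E c hmem
  have hU₁T : U₁ (T (a, E, c)) = 0 := by
    have h1 := HasDerivAt.comp_add_const (0:ℝ) (T (a, E, c)) (hU (0 + T (a, E, c)))
    rw [funext hper] at h1
    have := h1.unique (hU 0)
    rw [hU₁0] at this
    simpa using this
  have hMU : M (a, E, c) = ∫ x in (0:ℝ)..T (a, E, c), U x := by rw [hM, hUdef]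
  have hTp := hTpos _ hmem
  obtain ⟨hb1, hb2⟩ := kdvIdx_bounds hU hU₁ hE hroots hγβ hβα hWpos.ne' hU0 hU₁0 hU₁T hTp hMU
  have hPΩ : ∀ q ∈ Ω, P q = q.1 * T q + q.2.2 * M q := by
    rintro ⟨a', E', c'⟩ hq
    have hcd : ContDiff ℝ 3 (fun x => u x a' E' c') := by
      rw [← contDiffOn_univ]
      exact hu.comp (f := fun x : ℝ => (x, a', E', c')) (ContDiff.contDiffOn (by fun_prop))
        (fun x _ => ⟨Set.mem_univ _, hq⟩)
    have hd : ∀ x, HasDerivAt (fun x => u x a' E' c') (deriv (fun x => u x a' E' c') x) x :=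
      fun x => (hcd.differentiable (by norm_num) x).hasDerivAt
    rw [hP]
    refine kdvIdx_momentum hd (fun x => ?_) ?_ (hinit' a' E' c' hq) (hM _)
    · have h1 : Differentiable ℝ (deriv (fun x => u x a' E' c')) :=
        (ContDiff.iterate_deriv' 2 1 (by exact_mod_cast hcd)).differentiable (by norm_num)
      have h2 := hprofile a' E' c' hq x
      refine (h1 x).hasDerivAt.congr_deriv ?_
      linarith
    · have h1 := HasDerivAt.comp_add_const (0:ℝ) (T (a', E', c')) (hd (0 + T (a', E', c')))
      rw [funext (hperiodic a' E' c' hq)] at h1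
      have := h1.unique (hd 0)
      rw [hinit' a' E' c' hq] at this
      simpa using this
  have hTd : DifferentiableAt ℝ T (a, E, c) :=
    (hT.differentiableOn one_ne_zero).differentiableAt (hΩ.mem_nhds hmem)
  -- derivatives of `T`, `M`, `P` along an arbitrary direction; `μ'` stands for `∫₀ᵀ v`
  have key : ∀ d₁ d₂ d₃ : ℝ, ∃ τ' μ' : ℝ,
      HasDerivAt (fun t => T (a + t * d₁, E + t * d₂, c + t * d₃)) τ' 0 ∧
      HasDerivAt (fun t => M (a + t * d₁, E + t * d₂, c + t * d₃)) (β * τ' + μ') 0 ∧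
      HasDerivAt (fun t => P (a + t * d₁, E + t * d₂, c + t * d₃))
        (d₁ * T (a, E, c) + a * τ' + (d₃ * M (a, E, c) + c * (β * τ' + μ'))) 0 ∧
      (((4 * a + c^2) * (-2 * β^2 + 3 * c * β + 4 * a) + (6 * E + a * c) * (2 * β - c))
        * (a + c * β - β ^ 2) * τ' =
      (d₂ + d₁ * β + d₃ * β ^ 2 / 2) * ((4 * a + c^2) * M (a, E, c) + (6 * E + a * c) * T (a, E, c))
      - d₁ * ((4 * a + c^2) * (M (a, E, c) * β - 3 * (a * T (a, E, c) + c * M (a, E, c)) + 3 * c * M (a, E, c) + 4 * a * T (a, E, c))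
          + (6 * E + a * c) * (M (a, E, c) + (β - c) * T (a, E, c)))
      - d₃ * ((4 * a + c^2) * (M (a, E, c) * β^2 / 2
            - 3 / 2 * (2 * E * T (a, E, c) + 3 * a * M (a, E, c) + 2 * c * (a * T (a, E, c) + c * M (a, E, c)))
            + 3 * c * (a * T (a, E, c) + c * M (a, E, c)) + 4 * a * M (a, E, c))
          + (6 * E + a * c) * (3 / 2 * (a * T (a, E, c) + c * M (a, E, c)) + T (a, E, c) * β^2 / 2 - c * M (a, E, c))) ∧
    (4 * a + c^2) * μ' =
      -(d₂ + d₁ * β + d₃ * β ^ 2 / 2) * T (a, E, c) + τ' * (a + c * β - β ^ 2) * (2 * β - c)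
      + d₁ * (M (a, E, c) + (β - c) * T (a, E, c))
      + d₃ * (3 / 2 * (a * T (a, E, c) + c * M (a, E, c)) + T (a, E, c) * β^2 / 2 - c * M (a, E, c))) := by
    intro d₁ d₂ d₃
    obtain ⟨S, hS, h0, hSΩ, hcd⟩ := hline d₁ d₂ d₃
    have hcurve : HasDerivAt (fun t : ℝ => (a + t * d₁, E + t * d₂, c + t * d₃))
        (d₁, d₂, d₃) 0 := by
      have hl : ∀ k d : ℝ, HasDerivAt (fun t : ℝ => k + t * d) d 0 := fun k d => by
        simpa using ((hasDerivAt_id (0:ℝ)).mul_const d).const_add k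
      exact (hl a d₁).prodMk ((hl E d₂).prodMk (hl c d₃))
    have hp0 : (a + 0 * d₁, E + 0 * d₂, c + 0 * d₃) = (a, E, c) := by simp
    have hτ : HasDerivAt (fun t => T (a + t * d₁, E + t * d₂, c + t * d₃))
        (fderiv ℝ T (a, E, c) (d₁, d₂, d₃)) 0 := by
      have hTd' := hTd.hasFDerivAt
      rw [← hp0] at hTd'
      have := hTd'.comp_hasDerivAt (f := fun t : ℝ => (a + t * d₁, E + t * d₂, c + t * d₃)) 0 hcurve
      rwa [hp0] at this
    obtain ⟨v, w, hv, hw, hw0, hvT, hwT, hv0, hM'⟩ := kdvIdx_variation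
      (f := fun x t => u x (a + t * d₁) (E + t * d₂) (c + t * d₃)) hS h0 hcd hτ
      (fun t ht x => hprofile _ _ _ (hSΩ t ht) x) (fun t ht x => henergy _ _ _ (hSΩ t ht) x)
      (fun t ht x => hperiodic _ _ _ (hSΩ t ht) x) (fun t ht => hinit' _ _ _ (hSΩ t ht))
    simp only [zero_mul, add_zero] at hw hvT hwT hv0 hM'
    have hu0 : u 0 a E c = β := by rw [← hU0, hUdef]
    rw [hu0] at hwT hv0 hM'
    have hg := kdvIdx_green hU hU₁ hE hU0 hUT hU₁0 hU₁T hMU hv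
      (fun x => by rw [hUdef]; exact hw x) hw0 hvT hwT hv0
    have hMd : HasDerivAt (fun t => M (a + t * d₁, E + t * d₂, c + t * d₃))
        (β * fderiv ℝ T (a, E, c) (d₁, d₂, d₃) + ∫ x in (0:ℝ)..T (a, E, c), v x) 0 := by
      refine hM'.congr_of_eventuallyEq (Filter.Eventually.of_forall fun t => ?_)
      exact hM _
    refine ⟨_, _, hτ, hMd, ?_, hg⟩
    have hl : ∀ k d : ℝ, HasDerivAt (fun t : ℝ => k + t * d) d 0 := fun k d => by
      simpa using ((hasDerivAt_id (0:ℝ)).mul_const d).const_add k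
    have h1 := ((hl a d₁).mul hτ).add ((hl c d₃).mul hMd)
    simp only [zero_mul, add_zero] at h1
    refine h1.congr_of_eventuallyEq ?_
    filter_upwards [hS.mem_nhds h0] with t ht using hPΩ _ (hSΩ t ht)
  have hshift : ∀ (G : ℝ → ℝ) (k g : ℝ), HasDerivAt (fun t => G (k + t * 1)) g 0 →
      deriv G k = g := by
    intro G k g h
    simp only [mul_one] at h
    have h' := HasDerivAt.comp_const_add (-k) k (f := fun t => G (k + t)) (f' := g) (by simpa using h)
    simpa using h'.deriv
  obtain ⟨Ta, Na, hTa, hMa, hPa, ka, la⟩ := key 1 0 0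
  obtain ⟨TE, NE, hTE, hME, hPE, kE, lE⟩ := key 0 1 0
  obtain ⟨Tc, Nc, hTc, hMc, hPc, kc, lc⟩ := key 0 0 1
  simp only [mul_zero, add_zero] at hTa hMa hPa hTE hME hPE hTc hMc hPc
  rw [hshift (fun s => T (s, E, c)) a _ hTa, hshift (fun s => M (s, E, c)) a _ hMa,
    hshift (fun s => P (s, E, c)) a _ hPa, hshift (fun s => T (a, s, c)) E _ hTE,
    hshift (fun s => M (a, s, c)) E _ hME, hshift (fun s => P (a, s, c)) E _ hPE,
    hshift (fun s => T (a, E, s)) c _ hTc, hshift (fun s => M (a, E, s)) c _ hMc,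
    hshift (fun s => P (a, E, s)) c _ hPc]
  -- from here on everything is algebra in the values of `T`, `M` and their derivatives
  generalize T (a, E, c) = T₀ at *
  generalize M (a, E, c) = M₀ at *
  have hdet : ∀ x₁ x₂ x₃ y₁ y₂ y₃ z₁ z₂ z₃ : ℝ,
      Matrix.det !![x₁, x₂, x₃; y₁, y₂, y₃; z₁, z₂, z₃] =
        x₁ * (y₂ * z₃ - y₃ * z₂) - x₂ * (y₁ * z₃ - y₃ * z₁) + x₃ * (y₁ * z₂ - y₂ * z₁) := by
    intros
    simp [Matrix.det_fin_three]
    ring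
  rw [hdet]
  generalize hΦ : (4 * a + c^2) * (-2 * β^2 + 3 * c * β + 4 * a)
      + (6 * E + a * c) * (2 * β - c) = Φ at *
  -- `3 T³ (E - V(M/T))`, cleared of denominators
  have hEV : 0 < 3 * E * T₀ ^ 3 + 3 * a * T₀ ^ 2 * M₀ + 3 / 2 * c * T₀ * M₀ ^ 2 - M₀ ^ 3 := by
    have h : 3 * E * T₀ ^ 3 + 3 * a * T₀ ^ 2 * M₀ + 3 / 2 * c * T₀ * M₀ ^ 2 - M₀ ^ 3
        = (M₀ - γ * T₀) * (M₀ - β * T₀) * (α * T₀ - M₀) := by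
      rw [hEr, ha, hc]; ring
    rw [h]
    have h1 : γ * T₀ < β * T₀ := mul_lt_mul_of_pos_right hγβ hTp
    exact mul_pos (mul_pos (by linarith) (by linarith)) (by linarith)
  generalize hW : a + c * β - β ^ 2 = W at *
  have hK : 0 < Φ * W * (4 * a + c ^ 2) := by positivity
  refine pos_of_mul_pos_right (b := _) (a := Φ * W * (4 * a + c ^ 2)) ?_ hK.le
  -- the row of `P` is `a` times that of `T` plus `c` times that of `M` plus `(T, 0, M)`
  have hmain : Φ * W * (4 * a + c ^ 2) *
      (T₀ * (TE * Nc - Tc * NE) + M₀ * (Ta * NE - TE * Na)) =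
      (4 * a + c ^ 2) *
      (3 * E * T₀ ^ 3 + 3 * a * T₀ ^ 2 * M₀ + 3 / 2 * c * T₀ * M₀ ^ 2 - M₀ ^ 3) := by
    have e1 : Φ * W * (4 * a + c ^ 2) *
      (T₀ * (TE * Nc - Tc * NE) + M₀ * (Ta * NE - TE * Na)) =
      T₀ * ((Φ * W * TE) * ((4 * a + c ^ 2) * Nc - Tc * (W * (2 * β - c)))
         - (Φ * W * Tc) * ((4 * a + c ^ 2) * NE - TE * (W * (2 * β - c))))
      + M₀ * ((Φ * W * Ta) * ((4 * a + c ^ 2) * NE - TE * (W * (2 * β - c)))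
         - (Φ * W * TE) * ((4 * a + c ^ 2) * Na - Ta * (W * (2 * β - c)))) := by ring
    rw [e1, ka, kE, kc, la, lE, lc]
    ring
  have hpos := mul_pos hDpos hEV
  rw [← hmain] at hpos
  convert hpos using 2
  ring
end

section
/- Let f(s) = s², F(s) = s³/3, and G(s; a, c) = s³/3 − ((c−1)/2)s² − a·s, and let u(x; a, E, c) be a periodic traveling wave family of the BBM equation: Ω ⊆ ℝ³ open with c > 1 on Ω; u_− < u_+ C¹ on Ω simple roots of E = G(·; a, c) with G(·; a, c) < E on (u_−, u_+); T(a,E,c) > 0 C¹; u jointly C³, nonconstant in x, satisfying c·u_xx = (c−1)u − u² + a, (c/2)u_x² + G(u; a, c) = E, u(x + T) = u(x), u(0) = u_−, u_x(0) = 0; M(a,E,c) = ∫₀^T u dx. Then at every (a, E, c) ∈ Ω at which the partial derivatives of T and M with respect to a and E exist, the Jacobian determinant {T,M}_{a,E} = (∂T/∂a)(∂M/∂E) − (∂T/∂E)(∂M/∂a) is strictly positive. -/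
/-!
Write `m = c - 1` and `L v = c v'' + (2u - m) v`, the linearization of the profile equation. With
`c` fixed, differentiating the profile equation in the parameters gives `L u_E = 0` and `L u_a = 1`
(`parameter_variation`); differentiating periodicity shows that over one period `u_E` and `u_a`
return to their initial values, while their `x`-derivatives jump by `-T_E u''(0)` and `-T_a u''(0)`.

For the cubic potential these equations have explicit solutions `u' θ + q(u)` with
`θ(x) = α x + β ∫₀ˣ u` and `q` quadratic (`particular_solution`). Wronskian identities
(`wronskian_identity`) identify the jumps of the explicit solutions with those of `u_E` and `u_a`,
so `T_E` and `T_a` are linear combinations of `T` and `M`. The same identities give the Maxwell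
relation `M_E = T_a` and express `M_a` in the same way. With
`Δ = (4a + m²)(6Em - 4a²) + (6E + am)²`, a negative multiple of the discriminant of `E - G`, the
Jacobian becomes
  `T_a M_E - T_E M_a = (M² - m M T - a T²) / Δ = T² G'(M/T) / Δ`.
The numerator is negative by the strict Jensen inequality (`jensen_gap`), and `Δ < 0` because
`E - G` has three distinct real roots (`disc_neg`).
-/

open MeasureTheory intervalIntegral

/-- Lagrange's identity, integrated over a period, for two solutions of the linearized profile
equation `c v'' + (2 y - m) v = r` with constant right-hand sides `r₁` and `r₂`. -/
theorem wronskian_identity {c m T : ℝ} {y v w φ ψ : ℝ → ℝ} {r₁ r₂ : ℝ} (hc : c ≠ 0)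
    (hv : ∀ x, HasDerivAt v (w x) x)
    (hw : ∀ x, HasDerivAt w ((r₁ + (m - 2 * y x) * v x) / c) x)
    (hφ : ∀ x, HasDerivAt φ (ψ x) x)
    (hψ : ∀ x, HasDerivAt ψ ((r₂ + (m - 2 * y x) * φ x) / c) x) :
    r₂ * (∫ x in (0:ℝ)..T, v x) - r₁ * (∫ x in (0:ℝ)..T, φ x)
      = c * (v T * ψ T - w T * φ T) - c * (v 0 * ψ 0 - w 0 * φ 0) := by
  have hvc : Continuous v := continuous_iff_continuousAt.2 fun x => (hv x).continuousAt
  have hφc : Continuous φ := continuous_iff_continuousAt.2 fun x => (hφ x).continuousAt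
  rw [← intervalIntegral.integral_const_mul, ← intervalIntegral.integral_const_mul,
    ← intervalIntegral.integral_sub (Continuous.intervalIntegrable (by fun_prop) _ _)
      (Continuous.intervalIntegrable (by fun_prop) _ _)]
  refine integral_eq_sub_of_hasDerivAt (f := fun x => c * (v x * ψ x - w x * φ x)) (fun x _ => ?_)
    (Continuous.intervalIntegrable (by fun_prop) _ _)
  refine HasDerivAt.congr_deriv ((((hv x).mul (hψ x)).sub ((hw x).mul (hφ x))).const_mul c) ?_
  field_simp
  ring

/-- For `α`, `β` satisfying one linear relation, the ansatz `φ = z θ + q(y)` with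
`θ(x) = α x + β ∫₀ˣ y` and `q` a quadratic polynomial solves the linearized profile equation
`c φ'' + (2 y - m) φ = r`. The coefficients of `q` come from comparing powers of `y` after
eliminating `z²` through the energy. Here `n` is the primitive of `y` vanishing at `0`. The value of
`G'(p) φ(0)` is what matches `φ` with a parameter derivative of the wave, and `ψ(T)` records the
failure of periodicity of `φ'`. -/
theorem particular_solution {c m a E p T α β r : ℝ} {y z n : ℝ → ℝ} (hc : c ≠ 0)
    (hy : ∀ x, HasDerivAt y (z x) x)
    (hz : ∀ x, HasDerivAt z ((m * y x - y x ^ 2 + a) / c) x)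
    (hn : ∀ x, HasDerivAt n (y x) x)
    (hE : ∀ x, c / 2 * z x ^ 2 + (y x ^ 3 / 3 - m / 2 * y x ^ 2 - a * y x) = E)
    (hn0 : n 0 = 0) (hy0 : y 0 = p) (hyT : y T = p) (hz0 : z 0 = 0) (hzT : z T = 0)
    (hr : α * (4 * a + m ^ 2) - β * (6 * E + a * m) = r) :
    ∃ φ ψ : ℝ → ℝ, (∀ x, HasDerivAt φ (ψ x) x) ∧
      (∀ x, HasDerivAt ψ ((r + (m - 2 * y x) * φ x) / c) x) ∧
      φ T = φ 0 ∧ ψ 0 = 0 ∧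
      ψ T = (m * p - p ^ 2 + a) / c * (α * T + β * n T) ∧
      (p ^ 2 - m * p - a) * φ 0 = α * (6 * E + a * m) + β * (6 * E * m - 4 * a ^ 2) + r * p ∧
      (∫ x in (0:ℝ)..T, φ x)
        = p * (α * T + β * n T) + (a * β - m * α) * T + α * n T := by
  have hth : ∀ x, HasDerivAt (fun x => α * x + β * n x) (α * 1 + β * y x) x := fun x =>
    ((hasDerivAt_id' x).const_mul α).add ((hn x).const_mul β)
  have hφ : ∀ x, HasDerivAt (fun x => z x * (α * x + β * n x) +
      ((4 * a * β - m * α) + (2 * α + 3 * m * β) * y x - 2 * β * y x ^ 2))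
      ((m * y x - y x ^ 2 + a) / c * (α * x + β * n x) + z x * (α + β * y x)
        + ((2 * α + 3 * m * β) - 4 * β * y x) * z x) x := by
    intro x
    refine HasDerivAt.congr_deriv (((hz x).mul (hth x)).add
      ((((hy x).const_mul (2 * α + 3 * m * β)).const_add (4 * a * β - m * α)).sub
        (((hy x).pow 2).const_mul (2 * β)))) ?_
    push_cast
    ring
  have hφc : Continuous (fun x => z x * (α * x + β * n x) +
      ((4 * a * β - m * α) + (2 * α + 3 * m * β) * y x - 2 * β * y x ^ 2)) :=
    continuous_iff_continuousAt.2 fun x => (hφ x).continuousAt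
  refine ⟨_, _, hφ, fun x => ?_, ?_, ?_, ?_, ?_, ?_⟩
  · have hz' : HasDerivAt (fun x => (m * y x - y x ^ 2 + a) / c)
        ((m * z x - ↑(2 : ℕ) * y x ^ (2 - 1) * z x) / c) x :=
      ((((hy x).const_mul m).sub ((hy x).pow 2)).add_const a).div_const c
    refine HasDerivAt.congr_deriv
      (((hz'.mul (hth x)).add ((hz x).mul (((hy x).const_mul β).const_add α))).add
      ((((hy x).const_mul (4 * β)).const_sub (2 * α + 3 * m * β)).mul (hz x))) ?_
    have hE' := hE x
    -- the energy integral eliminates `z ^ 2`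
    have e2 : z x ^ 2 = 2 * (E - (y x ^ 3 / 3 - m / 2 * y x ^ 2 - a * y x)) / c := by
      field_simp
      linarith
    rw [← hr]
    field_simp
    ring_nf
    rw [e2]
    field_simp
    ring
  · simp only [hyT, hzT, hy0, hz0]; ring
  · simp only [hz0, hn0]; ring
  · simp only [hzT, hyT]; ring
  · simp only [hz0, hy0]
    have := hE 0
    rw [hz0, hy0] at this
    rw [← hr, ← this]
    ring
  -- an antiderivative of `φ`: `(y θ)' = z θ + y θ'`, and `y ^ 2` is `m y + a - c z'`
  · rw [integral_eq_sub_of_hasDerivAt (f := fun x => y x * (α * x + β * n x)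
      + (a * β - m * α) * x + α * n x + 3 * c * β * z x) (fun x _ => ?_)
      (hφc.intervalIntegrable _ _)]
    · simp only [hyT, hzT, hy0, hz0, hn0]; ring
    · refine HasDerivAt.congr_deriv (((((hy x).mul (hth x)).add
        ((hasDerivAt_id' x).const_mul (a * β - m * α))).add ((hn x).const_mul α)).add
        ((hz x).const_mul (3 * c * β))) ?_
      field_simp
      ring

/-- Strict Jensen inequality `T² G'(M/T) < 0` with `M = n T`, in the form of the positivity of the
variance of `y` over a period; the second moment of `y` is reduced to `T` and `M` by
integrating the profile equation. -/
theorem jensen_gap {c m a T : ℝ} {y z n : ℝ → ℝ} (hc : c ≠ 0) (hTpos : 0 < T)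
    (hy : ∀ x, HasDerivAt y (z x) x)
    (hz : ∀ x, HasDerivAt z ((m * y x - y x ^ 2 + a) / c) x)
    (hn : ∀ x, HasDerivAt n (y x) x) (hn0 : n 0 = 0)
    (hz0 : z 0 = 0) (hzT : z T = 0)
    (hper : ∀ x, y (x + T) = y x) (hnc : ∃ x x', y x ≠ y x') :
    n T ^ 2 - m * n T * T - a * T ^ 2 < 0 := by
  have hyc : Continuous y := continuous_iff_continuousAt.2 fun x => (hy x).continuousAt
  have hpos : 0 < ∫ x in (0:ℝ)..T, (y x - n T / T) ^ 2 := by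
    refine intervalIntegral.integral_pos hTpos (by fun_prop) (fun x _ => sq_nonneg _) ?_
    by_contra! hcon
    have hconst : ∀ x, y x = n T / T := by
      intro x
      obtain ⟨x', hx', e⟩ := Function.Periodic.exists_mem_Ico₀ (f := y) hper hTpos x
      have := hcon x' ⟨hx'.1, hx'.2.le⟩
      have h2 : (y x' - n T / T) ^ 2 = 0 := le_antisymm this (sq_nonneg _)
      rw [e]
      linarith [pow_eq_zero_iff (two_ne_zero) |>.1 h2]
    obtain ⟨x, x', h⟩ := hnc
    exact h ((hconst x).trans (hconst x').symm)
  rw [integral_eq_sub_of_hasDerivAt (f := fun x => (m - 2 * (n T / T)) * n x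
      + (a + (n T / T) ^ 2) * x - c * z x) (fun x _ => ?_)
      (Continuous.intervalIntegrable (by fun_prop) _ _)] at hpos
  · simp only [hz0, hzT, hn0] at hpos
    have e : (n T ^ 2 - m * n T * T - a * T ^ 2) =
        -T * ((m - 2 * (n T / T)) * n T + (a + (n T / T) ^ 2) * T - c * 0
          - ((m - 2 * (n T / T)) * 0 + (a + (n T / T) ^ 2) * 0 - c * 0)) := by
      field_simp
      ring
    rw [e]
    nlinarith
  · refine HasDerivAt.congr_deriv ((((hn x).const_mul (m - 2 * (n T / T))).add
      ((hasDerivAt_id' x).const_mul (a + (n T / T) ^ 2))).sub ((hz x).const_mul c)) ?_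
    field_simp
    ring

/-- If `E - G` has two distinct simple real roots `p < q`, then its third root is real and differs
from both, so its discriminant is positive; the left-hand side is a negative multiple of that
discriminant. -/
theorem disc_neg {m a E p q : ℝ} (hpq : p < q)
    (hp : p ^ 3 / 3 - m / 2 * p ^ 2 - a * p = E) (hq : q ^ 3 / 3 - m / 2 * q ^ 2 - a * q = E)
    (hp' : p ^ 2 - m * p - a ≠ 0) (hq' : q ^ 2 - m * q - a ≠ 0) :
    (4 * a + m ^ 2) * (6 * E * m - 4 * a ^ 2) + (6 * E + a * m) ^ 2 < 0 := by
  have hne : p - q ≠ 0 := (sub_neg.2 hpq).ne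
  -- by Vieta, `a` and `E` are symmetric functions of the roots; subtracting `hp` and `hq` gives `a`
  have ha : a = (p ^ 2 + p * q + q ^ 2) / 3 - m / 2 * (p + q) := by
    have : (p - q) * (a - ((p ^ 2 + p * q + q ^ 2) / 3 - m / 2 * (p + q))) = 0 := by
      linear_combination hq - hp
    have := (mul_eq_zero.1 this).resolve_left hne
    linarith
  have key : (4 * a + m ^ 2) * (6 * E * m - 4 * a ^ 2) + (6 * E + a * m) ^ 2
      = -12 * ((p ^ 2 - m * p - a) * (q ^ 2 - m * q - a) / (p - q)) ^ 2 := by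
    rw [← hp]
    subst ha
    field_simp
    ring
  rw [key]
  have : 0 < ((p ^ 2 - m * p - a) * (q ^ 2 - m * q - a) / (p - q)) ^ 2 := by
    positivity
  linarith

/-- Positivity of the Jacobian for a single profile `y`, given the two parameter derivatives `v`
(with respect to `E`) and `V` (with respect to `a`) of the wave as solutions of the linearized
equations; `TE` and `Ta` are the derivatives of the period. The Jacobian is
`T² G'(M/T) / Δ` with `Δ < 0` the expression in `hΔ` and `M = n T`. -/
theorem jacobian_pos {c m a E p T : ℝ} {y z n : ℝ → ℝ} (hc : c ≠ 0) (hTpos : 0 < T)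
    (hy : ∀ x, HasDerivAt y (z x) x)
    (hz : ∀ x, HasDerivAt z ((m * y x - y x ^ 2 + a) / c) x)
    (hn : ∀ x, HasDerivAt n (y x) x)
    (hE : ∀ x, c / 2 * z x ^ 2 + (y x ^ 3 / 3 - m / 2 * y x ^ 2 - a * y x) = E)
    (hn0 : n 0 = 0) (hy0 : y 0 = p) (hz0 : z 0 = 0) (hzT : z T = 0)
    (hper : ∀ x, y (x + T) = y x) (hnc : ∃ x x', y x ≠ y x')
    (hp' : p ^ 2 - m * p - a ≠ 0)
    (hΔ : (4 * a + m ^ 2) * (6 * E * m - 4 * a ^ 2) + (6 * E + a * m) ^ 2 < 0)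
    {v w : ℝ → ℝ} {TE : ℝ}
    (hv : ∀ x, HasDerivAt v (w x) x)
    (hw : ∀ x, HasDerivAt w ((0 + (m - 2 * y x) * v x) / c) x)
    (hvT : v T = v 0) (hw0 : w 0 = 0) (hwT : w T + TE * ((m * p - p ^ 2 + a) / c) = 0)
    (hv0 : (p ^ 2 - m * p - a) * v 0 = 1)
    {V W : ℝ → ℝ} {Ta : ℝ}
    (hV : ∀ x, HasDerivAt V (W x) x)
    (hW : ∀ x, HasDerivAt W ((1 + (m - 2 * y x) * V x) / c) x)
    (hVT : V T = V 0) (hW0 : W 0 = 0) (hWT : W T + Ta * ((m * p - p ^ 2 + a) / c) = 0)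
    (hV0 : (p ^ 2 - m * p - a) * V 0 = p) :
    0 < Ta * ((∫ x in (0:ℝ)..T, v x) + TE * p) - TE * ((∫ x in (0:ℝ)..T, V x) + Ta * p) := by
  have hyT : y T = p := by simpa [hy0] using hper 0
  have hJ := jensen_gap hc hTpos hy hz hn hn0 hz0 hzT hper hnc
  obtain ⟨Δ, hΔd⟩ : ∃ Δ, Δ = (4 * a + m ^ 2) * (6 * E * m - 4 * a ^ 2) + (6 * E + a * m) ^ 2 :=
    ⟨_, rfl⟩
  rw [← hΔd] at hΔ
  have hΔ0 := hΔ.ne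
  -- `φ` and `Φ` are explicit forms of `v` and `V`: `α`, `β` solve the two linear conditions
  -- prescribing the right-hand side and the value at `0`
  obtain ⟨φ, ψ, hφ, hψ, hφT, hψ0, hψT, hφ0, -⟩ := particular_solution
    (α := (6 * E + a * m) / Δ) (β := (4 * a + m ^ 2) / Δ) (r := 0) hc hy hz hn hE hn0 hy0 hyT
    hz0 hzT (by ring)
  obtain ⟨Φ, Ψ, hΦ, hΨ, hΦT, hΨ0, hΨT, hΦ0, hΦI⟩ := particular_solution
    (α := (6 * E * m - 4 * a ^ 2) / Δ) (β := -(6 * E + a * m) / Δ) (r := 1) hc hy hz hn hE hn0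
    hy0 hyT hz0 hzT (by field_simp; linear_combination -hΔd)
  have hφ1 : (p ^ 2 - m * p - a) * φ 0 = 1 := by
    rw [hφ0]; field_simp; linear_combination -hΔd
  have hΦ1 : (p ^ 2 - m * p - a) * Φ 0 = p := by
    rw [hΦ0]; ring
  have hv00 : v 0 ≠ 0 := by rintro h; simp [h] at hv0
  have e1 : φ 0 = v 0 := mul_left_cancel₀ hp' (hφ1.trans hv0.symm)
  have e2 : Φ 0 = V 0 := mul_left_cancel₀ hp' (hΦ1.trans hV0.symm)
  have hk : (m * p - p ^ 2 + a) / c ≠ 0 :=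
    div_ne_zero (by intro h; apply hp'; linarith) hc
  have W1 := wronskian_identity (T := T) hc hv hw hφ hψ
  have W2 := wronskian_identity (T := T) hc hv hw hΦ hΨ
  have W3 := wronskian_identity (T := T) hc hv hw hV hW
  have W4 := wronskian_identity (T := T) hc hV hW hΦ hΨ
  rw [hvT, hφT, hw0, hψ0, e1] at W1
  rw [hvT, hΦT, hw0, hΨ0, e2] at W2
  rw [hvT, hVT, hw0, hW0] at W3
  rw [hVT, hΦT, hW0, hΨ0, e2] at W4
  -- equal values at `0` and `T` leave only the difference of the derivatives in the Wronskians
  have w1 : w T = ψ T := by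
    have : c * v 0 * (ψ T - w T) = 0 := by linear_combination -W1
    have := (mul_eq_zero.1 this).resolve_left (mul_ne_zero hc hv00)
    linarith
  have w2 : W T = Ψ T := by
    have : c * v 0 * (Ψ T - W T) = 0 := by linear_combination W3 - W2
    have := (mul_eq_zero.1 this).resolve_left (mul_ne_zero hc hv00)
    linarith
  have hIV : ∫ x in (0:ℝ)..T, V x = ∫ x in (0:ℝ)..T, Φ x := by
    rw [w2] at W4
    linear_combination W4
  have hTE : TE = -((6 * E + a * m) / Δ * T + (4 * a + m ^ 2) / Δ * n T) := by
    rw [w1, hψT] at hwT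
    apply mul_left_cancel₀ hk
    linear_combination hwT
  have hTa : Ta = -((6 * E * m - 4 * a ^ 2) / Δ * T + -(6 * E + a * m) / Δ * n T) := by
    rw [w2, hΨT] at hWT
    apply mul_left_cancel₀ hk
    linear_combination hWT
  -- the Maxwell relation `∂M/∂E = ∂T/∂a`, from the symmetry of the linearized operator
  have hME : (∫ x in (0:ℝ)..T, v x) + TE * p = Ta := by
    have hcw : c * w T = TE * (p ^ 2 - m * p - a) := by
      have : w T = - (TE * ((m * p - p ^ 2 + a) / c)) := by linarith
      rw [this]; field_simp; ring
    have hcW : c * W T = Ta * (p ^ 2 - m * p - a) := by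
      have : W T = - (Ta * ((m * p - p ^ 2 + a) / c)) := by linarith
      rw [this]; field_simp; ring
    linear_combination W3 + v 0 * hcW - V 0 * hcw + Ta * hv0 - TE * hV0
  rw [hME, hIV, hΦI]
  have hfin : Ta * Ta - TE * (p * ((6 * E * m - 4 * a ^ 2) / Δ * T + -(6 * E + a * m) / Δ * n T)
      + (a * (-(6 * E + a * m) / Δ) - m * ((6 * E * m - 4 * a ^ 2) / Δ)) * T
      + (6 * E * m - 4 * a ^ 2) / Δ * n T + Ta * p)
      = (n T ^ 2 - m * n T * T - a * T ^ 2) / Δ := by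
    rw [hTE, hTa]
    have : (n T ^ 2 - m * n T * T - a * T ^ 2) / Δ
      = (n T ^ 2 - m * n T * T - a * T ^ 2) * Δ / Δ ^ 2 := by field_simp
    rw [this]
    field_simp
    rw [hΔd]
    ring
  rw [hfin]
  exact div_pos_of_neg_of_neg hJ hΔ

open Topology Filter in
/-- Leibniz rule with a moving endpoint. -/
theorem hasDerivAt_integral_param {f : ℝ × ℝ → ℝ} {S : Set ℝ} (hS : IsOpen S)
    (hf : ContDiffOn ℝ 1 f (Set.univ ×ˢ S)) {t₀ : ℝ} (ht₀ : t₀ ∈ S) {τ : ℝ → ℝ} {τ' : ℝ}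
    (hτ : HasDerivAt τ τ' t₀) :
    HasDerivAt (fun t => ∫ x in (0:ℝ)..τ t, f (x, t))
      ((∫ x in (0:ℝ)..τ t₀, fderiv ℝ f (x, t₀) (0, 1)) + τ' * f (τ t₀, t₀)) t₀ := by
  have hO : IsOpen ((Set.univ : Set ℝ) ×ˢ S) := isOpen_univ.prod hS
  have hfc := hf.continuousOn
  have hslice : ∀ t ∈ S, Continuous fun x => f (x, t) := fun t ht =>
    hfc.comp_continuous (by fun_prop) fun x => ⟨trivial, ht⟩
  have hdiff : ∀ x, ∀ t ∈ S, HasDerivAt (fun s => f (x, s)) (fderiv ℝ f (x, t) (0, 1)) t := by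
    intro x t ht
    have h1 := ((hf.differentiableOn (by norm_num)).differentiableAt
      (hO.mem_nhds (Set.mk_mem_prod (Set.mem_univ x) ht))).hasFDerivAt
    exact h1.comp_hasDerivAt t ((hasDerivAt_const t x).prodMk (hasDerivAt_id' t))
  have hdc : ContinuousOn (fun q => fderiv ℝ f q (0, 1)) (Set.univ ×ˢ S) :=
    (hf.continuousOn_fderiv_of_isOpen hO le_rfl).clm_apply continuousOn_const
  -- differentiation under the integral sign, endpoint frozen
  have h1 : HasDerivAt (fun t => ∫ x in (0:ℝ)..τ t₀, f (x, t))
      (∫ x in (0:ℝ)..τ t₀, fderiv ℝ f (x, t₀) (0, 1)) t₀ := by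
    obtain ⟨ε, hε, hball⟩ := Metric.nhds_basis_closedBall.mem_iff.1 (hS.mem_nhds ht₀)
    have hK : IsCompact (Set.uIcc 0 (τ t₀) ×ˢ Metric.closedBall t₀ ε) :=
      isCompact_uIcc.prod (isCompact_closedBall _ _)
    obtain ⟨C, hC⟩ := hK.exists_bound_of_continuousOn
      (hdc.mono (Set.prod_mono (Set.subset_univ _) hball))
    have hSev : ∀ᶠ t in 𝓝 t₀, t ∈ S := hS.mem_nhds ht₀
    refine (intervalIntegral.hasDerivAt_integral_of_dominated_loc_of_deriv_le
      (F := fun t x => f (x, t)) (F' := fun t x => fderiv ℝ f (x, t) (0, 1)) (bound := fun _ => C)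
      (Metric.closedBall_mem_nhds t₀ hε) ?_ ((hslice t₀ ht₀).intervalIntegrable _ _) ?_ ?_
      (by simp) ?_).2
    · filter_upwards [hSev] with t ht using (hslice t ht).aestronglyMeasurable
    · exact (hdc.comp_continuous (by fun_prop) fun x => ⟨trivial, ht₀⟩ :
        Continuous fun x : ℝ => fderiv ℝ f (x, t₀) (0, 1)).aestronglyMeasurable
    · exact .of_forall fun x hx t ht => hC (x, t) ⟨Set.uIoc_subset_uIcc hx, ht⟩
    · exact .of_forall fun x hx t ht => hdiff x t (hball ht)
  -- the endpoint moves; continuity of `f` at `(τ t₀, t₀)` controls the error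
  have h2 : HasDerivAt (fun t => ∫ x in (τ t₀)..τ t, f (x, t)) (τ' * f (τ t₀, t₀)) t₀ := by
    rw [hasDerivAt_iff_isLittleO]
    have hlin := (hasDerivAt_iff_isLittleO.1 (hτ.mul_const (f (τ t₀, t₀))))
    have hO1 : (fun t => τ t - τ t₀) =O[𝓝 t₀] fun t => t - t₀ := hτ.isBigO_sub
    have key : (fun t => (∫ x in (τ t₀)..τ t, f (x, t)) - (τ t - τ t₀) * f (τ t₀, t₀))
        =o[𝓝 t₀] fun t => τ t - τ t₀ := by
      rw [Asymptotics.isLittleO_iff]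
      intro ε hε
      have hcont : ContinuousAt f (τ t₀, t₀) := hfc.continuousAt (hO.mem_nhds ⟨trivial, ht₀⟩)
      obtain ⟨δ, hδ, hclose⟩ := Metric.continuousAt_iff.1 hcont ε hε
      have hτc := Metric.continuousAt_iff.1 hτ.continuousAt δ hδ
      obtain ⟨η, hη, hτc⟩ := hτc
      filter_upwards [hS.mem_nhds ht₀, Metric.ball_mem_nhds t₀ hη, Metric.ball_mem_nhds t₀ hδ]
        with t ht htη htδ
      have hconst : (τ t - τ t₀) * f (τ t₀, t₀) = ∫ x in (τ t₀)..τ t, f (τ t₀, t₀) := by simp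
      rw [hconst, ← intervalIntegral.integral_sub ((hslice t ht).intervalIntegrable _ _)
        (by simp), Real.norm_eq_abs (τ t - τ t₀)]
      refine intervalIntegral.norm_integral_le_of_norm_le_const fun x hx => ?_
      have hxd : dist x (τ t₀) < δ := by
        refine lt_of_le_of_lt ?_ (hτc htη)
        rw [Real.dist_eq, Real.dist_eq]
        exact Set.abs_sub_left_of_mem_uIcc (Set.uIoc_subset_uIcc hx)
      have := hclose (x := (x, t)) (by rw [Prod.dist_eq]; exact max_lt hxd htδ)
      rw [Real.dist_eq] at this
      exact this.le
    refine ((key.trans_isBigO hO1).add hlin).congr_left fun t => ?_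
    simp
    ring
  refine (h1.add h2).congr_of_eventuallyEq ?_
  filter_upwards [hS.mem_nhds ht₀] with t ht
  exact (intervalIntegral.integral_add_adjacent_intervals
    ((hslice t ht).intervalIntegrable _ _) ((hslice t ht).intervalIntegrable _ _)).symm

/-- If `g = ∂₁f` and `f` is `C^(k+1)` with `k ≥ 1`, then `g` is `C^k` and `∂₁∂₂f = ∂₂g`. -/
theorem mixed_partials {f g : ℝ × ℝ → ℝ} {S : Set ℝ} (hS : IsOpen S) {k : ℕ} (hk : 1 ≤ k)
    (hf : ContDiffOn ℝ (k + 1) f (Set.univ ×ˢ S))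
    (hg : ∀ x, ∀ t ∈ S, HasDerivAt (fun y => f (y, t)) (g (x, t)) x) :
    ContDiffOn ℝ k g (Set.univ ×ˢ S) ∧ ∀ x, ∀ t ∈ S,
      HasDerivAt (fun y => fderiv ℝ f (y, t) (0, 1)) (fderiv ℝ g (x, t) (0, 1)) x := by
  have hO : IsOpen ((Set.univ : Set ℝ) ×ˢ S) := isOpen_univ.prod hS
  have hk0 : (k : WithTop ℕ∞) ≠ 0 := by exact_mod_cast (by omega : k ≠ 0)
  have hF : ContDiffOn ℝ k (fderiv ℝ f) (Set.univ ×ˢ S) := hf.fderiv_of_isOpen hO le_rfl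
  have hFd : ∀ q ∈ (Set.univ : Set ℝ) ×ˢ S, HasFDerivAt (fderiv ℝ f) (fderiv ℝ (fderiv ℝ f) q) q :=
    fun q hq => ((hF.differentiableOn hk0).differentiableAt (hO.mem_nhds hq)).hasFDerivAt
  have hgF : ∀ q ∈ (Set.univ : Set ℝ) ×ˢ S, g q = fderiv ℝ f q (1, 0) := by
    rintro ⟨x, t⟩ ⟨-, ht⟩
    have h1 := ((hf.differentiableOn (by simp)).differentiableAt
      (hO.mem_nhds (Set.mk_mem_prod (Set.mem_univ x) ht))).hasFDerivAt
    exact (hg x t ht).unique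
      (h1.comp_hasDerivAt x ((hasDerivAt_id' x).prodMk (hasDerivAt_const x t)))
  refine ⟨(hF.clm_apply contDiffOn_const).congr hgF, fun x t ht => ?_⟩
  have hq : (x, t) ∈ (Set.univ : Set ℝ) ×ˢ S := ⟨trivial, ht⟩
  have hgd : fderiv ℝ g (x, t) (0, 1) = fderiv ℝ (fderiv ℝ f) (x, t) (0, 1) (1, 0) := by
    have h1 : HasFDerivAt (fun q => fderiv ℝ f q (1, 0)) _ (x, t) :=
      (hFd _ hq).clm_apply (hasFDerivAt_const (1, 0) (x, t))
    have h2 := h1.congr_of_eventuallyEq (Filter.eventuallyEq_of_mem (hO.mem_nhds hq) hgF)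
    rw [h2.fderiv]
    simp
  have hsymm : IsSymmSndFDerivAt ℝ f (x, t) := by
    refine (hf.contDiffAt (hO.mem_nhds hq)).isSymmSndFDerivAt ?_
    simp only [minSmoothness_of_isRCLikeNormedField]
    exact_mod_cast (by omega : 2 ≤ k + 1)
  rw [hgd, hsymm.eq]
  have h3 : HasFDerivAt (fun q => fderiv ℝ f q (0, 1)) _ (x, t) :=
      (hFd _ hq).clm_apply (hasFDerivAt_const (0, 1) (x, t))
  refine (h3.comp_hasDerivAt x ((hasDerivAt_id' x).prodMk (hasDerivAt_const x t))).congr_deriv ?_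
  simp

open Topology Filter in
/-- Differentiation of a one-parameter family of profiles `U(·, t)` at `t₀`: the parameter
derivative `v` solves the linearized equation, its jumps over a period and its value at `0` are
obtained by differentiating periodicity and energy, and the derivative of the mass is expressed
through `v`. The parameters `a`, `E` and the period are the functions `A`, `En`, `τ` of `t`. -/
theorem parameter_variation {U Z : ℝ × ℝ → ℝ} {S : Set ℝ} (hS : IsOpen S) {c m : ℝ}
    {A En τ : ℝ → ℝ} {A' En' τ' t₀ p : ℝ} (ht₀ : t₀ ∈ S)
    (hU : ContDiffOn ℝ 3 U (Set.univ ×ˢ S))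
    (hA : HasDerivAt A A' t₀) (hEn : HasDerivAt En En' t₀) (hτ : HasDerivAt τ τ' t₀)
    (hUx : ∀ x, ∀ t ∈ S, HasDerivAt (fun y => U (y, t)) (Z (x, t)) x)
    (hZx : ∀ x, ∀ t ∈ S,
      HasDerivAt (fun y => Z (y, t)) ((m * U (x, t) - U (x, t) ^ 2 + A t) / c) x)
    (henergy : ∀ x, ∀ t ∈ S, c / 2 * Z (x, t) ^ 2
      + (U (x, t) ^ 3 / 3 - m / 2 * U (x, t) ^ 2 - A t * U (x, t)) = En t)
    (hper : ∀ x, ∀ t ∈ S, U (x + τ t, t) = U (x, t))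
    (hp : U (0, t₀) = p) (hZ0 : ∀ t ∈ S, Z (0, t) = 0) :
    ∃ v w : ℝ → ℝ, (∀ x, HasDerivAt v (w x) x) ∧
      (∀ x, HasDerivAt w ((A' + (m - 2 * U (x, t₀)) * v x) / c) x) ∧
      v (τ t₀) = v 0 ∧ w 0 = 0 ∧
      w (τ t₀) + τ' * ((m * p - p ^ 2 + A t₀) / c) = 0 ∧
      (p ^ 2 - m * p - A t₀) * v 0 = En' + A' * p ∧
      HasDerivAt (fun t => ∫ x in (0:ℝ)..τ t, U (x, t))
        ((∫ x in (0:ℝ)..τ t₀, v x) + τ' * p) t₀ := by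
  have hO : IsOpen ((Set.univ : Set ℝ) ×ˢ S) := isOpen_univ.prod hS
  have hSev : ∀ᶠ t in 𝓝 t₀, t ∈ S := hS.mem_nhds ht₀
  obtain ⟨hZ, hv⟩ := mixed_partials (k := 2) hS (by norm_num) (by norm_num; exact hU) hUx
  obtain ⟨hR, hw⟩ := mixed_partials (k := 1) hS le_rfl (by norm_num; exact hZ)
    (g := fun q => (m * U q - U q ^ 2 + A q.2) / c) hZx
  have hd : ∀ {F : ℝ × ℝ → ℝ}, ContDiffOn ℝ 1 F (Set.univ ×ˢ S) → ∀ x,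
      HasFDerivAt F (fderiv ℝ F (x, t₀)) (x, t₀) := fun hF x =>
    ((hF.differentiableOn (by norm_num)).differentiableAt
      (hO.mem_nhds (Set.mk_mem_prod (Set.mem_univ x) ht₀))).hasFDerivAt
  have ht : ∀ {F : ℝ × ℝ → ℝ}, ContDiffOn ℝ 1 F (Set.univ ×ˢ S) → ∀ x,
      HasDerivAt (fun t => F (x, t)) (fderiv ℝ F (x, t₀) (0, 1)) t₀ := fun hF x =>
    (hd hF x).comp_hasDerivAt t₀ ((hasDerivAt_const t₀ x).prodMk (hasDerivAt_id' t₀))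
  have hU1 : ContDiffOn ℝ 1 U (Set.univ ×ˢ S) := hU.of_le (by norm_num)
  have hZ1 : ContDiffOn ℝ 1 Z (Set.univ ×ˢ S) := hZ.of_le (by norm_num)
  have hR1 : ContDiffOn ℝ 1 (fun q : ℝ × ℝ => (m * U q - U q ^ 2 + A q.2) / c)
    (Set.univ ×ˢ S) := by exact_mod_cast hR
  -- total derivative along the curve `t ↦ (τ t, t)`
  have hcurve : ∀ {F : ℝ × ℝ → ℝ} {d : ℝ}, ContDiffOn ℝ 1 F (Set.univ ×ˢ S) →
      HasDerivAt (fun x => F (x, t₀)) d (τ t₀) →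
      HasDerivAt (fun t => F (τ t, t)) (τ' * d + fderiv ℝ F (τ t₀, t₀) (0, 1)) t₀ := by
    intro F d hF hFx
    have h1 := (hd hF (τ t₀)).comp_hasDerivAt (τ t₀)
      ((hasDerivAt_id' (τ t₀)).prodMk (hasDerivAt_const (τ t₀) t₀))
    have hd' := h1.unique hFx
    have h2 := HasFDerivAt.comp_hasDerivAt (f := fun t => (τ t, t)) t₀ (hd hF (τ t₀))
      (hτ.prodMk (hasDerivAt_id' t₀))
    refine h2.congr_deriv ?_
    rw [← hd', ← smul_eq_mul, ← map_smul, ← map_add]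
    simp
  have hZper : ∀ x, ∀ t ∈ S, Z (x + τ t, t) = Z (x, t) := fun x t ht =>
    (((hUx (x + τ t) t ht).comp_add_const x (τ t)).congr_of_eventuallyEq
      (.of_forall fun y => (hper y t ht).symm)).unique (hUx x t ht)
  have hUT : U (τ t₀, t₀) = p := by rw [← hp]; simpa using hper 0 t₀ ht₀
  have hZT : Z (τ t₀, t₀) = 0 := by rw [← hZ0 t₀ ht₀]; simpa using hZper 0 t₀ ht₀
  refine ⟨fun x => fderiv ℝ U (x, t₀) (0, 1), fun x => fderiv ℝ Z (x, t₀) (0, 1),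
    fun x => hv x t₀ ht₀, fun x => ?_, ?_, ?_, ?_, ?_, ?_⟩
  · refine (hw x t₀ ht₀).congr_deriv ((ht hR1 x).unique ?_)
    refine (((((ht hU1 x).const_mul m).sub ((ht hU1 x).pow 2)).add hA).div_const c).congr_deriv ?_
    norm_num
    ring
  · have h1 := hcurve hU1 (hUx (τ t₀) t₀ ht₀)
    have h2 : HasDerivAt (fun t => U (τ t, t)) _ t₀ := (ht hU1 0).congr_of_eventuallyEq (by
      filter_upwards [hSev] with t ht
      simpa using hper 0 t ht)
    simpa [hZT] using h1.unique h2
  · refine (ht hZ1 0).unique ((hasDerivAt_const t₀ (0:ℝ)).congr_of_eventuallyEq ?_)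
    filter_upwards [hSev] with t ht using hZ0 t ht
  · have h1 := hcurve hZ1 (hZx (τ t₀) t₀ ht₀)
    have h2 : HasDerivAt (fun t => Z (τ t, t)) 0 t₀ :=
      (hasDerivAt_const t₀ (0:ℝ)).congr_of_eventuallyEq (by
        filter_upwards [hSev] with t ht
        rw [← hZ0 t ht]
        simpa using hZper 0 t ht)
    rw [hUT] at h1
    linear_combination h1.unique h2
  · have hu := ht hU1 0
    have h1 : HasDerivAt (fun t => U (0, t) ^ 3 / 3 - m / 2 * U (0, t) ^ 2 - A t * U (0, t)) _ t₀ :=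
      (((hu.pow 3).div_const 3).sub ((hu.pow 2).const_mul (m / 2))).sub (hA.mul hu)
    have h2 : HasDerivAt (fun t => U (0, t) ^ 3 / 3 - m / 2 * U (0, t) ^ 2 - A t * U (0, t))
        En' t₀ := by
      refine hEn.congr_of_eventuallyEq ?_
      filter_upwards [hSev] with t ht
      have := henergy 0 t ht
      rw [hZ0 t ht] at this
      linarith
    have := h1.unique h2
    rw [hp] at this
    push_cast at this
    linear_combination this
  · have := hasDerivAt_integral_param hS hU1 ht₀ hτ
    rwa [hUT] at this

/-- For periodic traveling waves of the BBM equation (`f(u) = u²`),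
the transverse instability index `{T,M}_{a,E}` — the Jacobian of period and mass
with respect to `(a,E)` at fixed speed `c > 1` — is strictly positive wherever the
relevant partial derivatives exist. -/
theorem bbm_transverse_index_positive
    (G : ℝ → ℝ → ℝ → ℝ) (hG : ∀ s a c, G s a c = s^3/3 - (c - 1)/2 * s^2 - a * s)
    (Ω : Set (ℝ × ℝ × ℝ)) (hΩ : IsOpen Ω)
    (hc : ∀ p ∈ Ω, 1 < p.2.2)
    (um up : ℝ × ℝ × ℝ → ℝ)
    (hum : ContDiffOn ℝ 1 um Ω) (hup : ContDiffOn ℝ 1 up Ω)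
    (horder : ∀ p ∈ Ω, um p < up p)
    (hGm : ∀ a E c : ℝ, (a, E, c) ∈ Ω → G (um (a, E, c)) a c = E)
    (hGp : ∀ a E c : ℝ, (a, E, c) ∈ Ω → G (up (a, E, c)) a c = E)
    (hGm' : ∀ a E c : ℝ, (a, E, c) ∈ Ω → deriv (fun s => G s a c) (um (a, E, c)) ≠ 0)
    (hGp' : ∀ a E c : ℝ, (a, E, c) ∈ Ω → deriv (fun s => G s a c) (up (a, E, c)) ≠ 0)
    (hbelow : ∀ a E c : ℝ, (a, E, c) ∈ Ω →
      ∀ s ∈ Set.Ioo (um (a, E, c)) (up (a, E, c)), G s a c < E)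
    (T : ℝ × ℝ × ℝ → ℝ) (hT : ContDiffOn ℝ 1 T Ω) (hTpos : ∀ p ∈ Ω, 0 < T p)
    (u : ℝ → ℝ → ℝ → ℝ → ℝ)
    (hu : ContDiffOn ℝ 3 (fun q : ℝ × ℝ × ℝ × ℝ => u q.1 q.2.1 q.2.2.1 q.2.2.2)
      ((Set.univ : Set ℝ) ×ˢ Ω))
    (hnc : ∀ a E c : ℝ, (a, E, c) ∈ Ω → ∃ x y : ℝ, u x a E c ≠ u y a E c)
    (hprofile : ∀ a E c : ℝ, (a, E, c) ∈ Ω → ∀ x : ℝ,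
      c * deriv (deriv (fun y => u y a E c)) x
        = (c - 1) * u x a E c - (u x a E c)^2 + a)
    (henergy : ∀ a E c : ℝ, (a, E, c) ∈ Ω → ∀ x : ℝ,
      c/2 * (deriv (fun y => u y a E c) x)^2 + G (u x a E c) a c = E)
    (hperiodic : ∀ a E c : ℝ, (a, E, c) ∈ Ω → ∀ x : ℝ,
      u (x + T (a, E, c)) a E c = u x a E c)
    (hinit : ∀ a E c : ℝ, (a, E, c) ∈ Ω → u 0 a E c = um (a, E, c))
    (hinit' : ∀ a E c : ℝ, (a, E, c) ∈ Ω → deriv (fun y => u y a E c) 0 = 0)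
    (M : ℝ × ℝ × ℝ → ℝ)
    (hM : ∀ q : ℝ × ℝ × ℝ, M q = ∫ x in (0:ℝ)..(T q), u x q.1 q.2.1 q.2.2) :
    ∀ a E c : ℝ, (a, E, c) ∈ Ω →
      DifferentiableAt ℝ (fun a' => T (a', E, c)) a →
      DifferentiableAt ℝ (fun E' => T (a, E', c)) E →
      DifferentiableAt ℝ (fun a' => M (a', E, c)) a →
      DifferentiableAt ℝ (fun E' => M (a, E', c)) E →
      0 < deriv (fun a' => T (a', E, c)) a * deriv (fun E' => M (a, E', c)) E
        - deriv (fun E' => T (a, E', c)) E * deriv (fun a' => M (a', E, c)) a := by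
  intro a E c hp hTa hTE _ _
  have hc0 : c ≠ 0 := (zero_lt_one.trans (hc _ hp)).ne'
  have hO : IsOpen ((Set.univ : Set ℝ) ×ˢ Ω) := isOpen_univ.prod hΩ
  have hux : ∀ a E c, (a, E, c) ∈ Ω → ContDiff ℝ 3 fun x => u x a E c := fun a E c h => by
    have : ContDiff ℝ 3 fun x : ℝ => ((x, a, E, c) : ℝ × ℝ × ℝ × ℝ) := by fun_prop
    exact contDiffOn_univ.1 (hu.comp this.contDiffOn fun x _ => ⟨trivial, h⟩)
  have hy : ∀ a E c, (a, E, c) ∈ Ω → ∀ x,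
      HasDerivAt (fun y => u y a E c) (deriv (fun y => u y a E c) x) x := fun a E c h x =>
    ((hux a E c h).differentiable (by norm_num) x).hasDerivAt
  have hz : ∀ a E, (a, E, c) ∈ Ω → ∀ x, HasDerivAt (deriv fun y => u y a E c)
      (((c - 1) * u x a E c - u x a E c ^ 2 + a) / c) x := fun a E h x => by
    have h2 : ContDiff ℝ (2 + 1) fun x => u x a E c := by norm_num; exact hux a E c h
    have h3 := (((contDiff_succ_iff_deriv.1 h2).2.2.differentiable (by norm_num)) x).hasDerivAt
    refine h3.congr_deriv ?_
    rw [← hprofile a E c h x]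
    field_simp
  have hen : ∀ a E, (a, E, c) ∈ Ω → ∀ x, c / 2 * deriv (fun y => u y a E c) x ^ 2
      + (u x a E c ^ 3 / 3 - (c - 1) / 2 * u x a E c ^ 2 - a * u x a E c) = E := fun a E h x => by
    rw [← hG]; exact henergy a E c h x
  have hG' : ∀ s, deriv (fun s => G s a c) s = s ^ 2 - (c - 1) * s - a := fun s => by
    have e : (fun s => G s a c) = fun s => s ^ 3 / 3 - (c - 1) / 2 * s ^ 2 - a * s :=
      funext fun s => hG s a c
    rw [e]
    have := ((((hasDerivAt_id' s).pow 3).div_const 3).sub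
      (((hasDerivAt_id' s).pow 2).const_mul ((c - 1) / 2))).sub ((hasDerivAt_id' s).const_mul a)
    refine (this.congr_deriv ?_).deriv
    push_cast
    ring
  have hp' := hGm' a E c hp
  have hq' := hGp' a E c hp
  rw [hG'] at hp' hq'
  have hΔ := disc_neg (E := E) (horder _ hp) (by rw [← hG]; exact hGm a E c hp)
    (by rw [← hG]; exact hGp a E c hp) hp' hq'
  obtain ⟨v, w, hv, hw, hvT, hw0, hwT, hv0, hME⟩ := parameter_variation
    (U := fun q => u q.1 a q.2 c) (Z := fun q => deriv (fun y => u y a q.2 c) q.1)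
    (S := {t | (a, t, c) ∈ Ω}) (hΩ.preimage (by fun_prop)) (m := c - 1) (A := fun _ => a)
    (En := fun t => t) (τ := fun t => T (a, t, c)) (t₀ := E) hp
    (hu.comp (g := fun q : ℝ × ℝ × ℝ × ℝ => u q.1 q.2.1 q.2.2.1 q.2.2.2)
      (f := fun q : ℝ × ℝ => (q.1, a, q.2, c))
      (ContDiff.contDiffOn (by fun_prop)) fun q hq => ⟨trivial, hq.2⟩)
    (hasDerivAt_const _ _) (hasDerivAt_id' _) hTE.hasDerivAt
    (fun x t h => hy _ _ _ h x) (fun x t h => hz _ _ h x) (fun x t h => hen _ _ h x)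
    (fun x t h => hperiodic _ _ _ h x) (hinit a E c hp) (fun t h => hinit' _ _ _ h)
  obtain ⟨V, W, hV, hW, hVT, hW0, hWT, hV0, hMa⟩ := parameter_variation
    (U := fun q => u q.1 q.2 E c) (Z := fun q => deriv (fun y => u y q.2 E c) q.1)
    (S := {t | (t, E, c) ∈ Ω}) (hΩ.preimage (by fun_prop)) (m := c - 1) (A := fun t => t)
    (En := fun _ => E) (τ := fun t => T (t, E, c)) (t₀ := a) hp
    (hu.comp (g := fun q : ℝ × ℝ × ℝ × ℝ => u q.1 q.2.1 q.2.2.1 q.2.2.2)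
      (f := fun q : ℝ × ℝ => (q.1, q.2, E, c))
      (ContDiff.contDiffOn (by fun_prop)) fun q hq => ⟨trivial, hq.2⟩)
    (hasDerivAt_id' _) (hasDerivAt_const _ _) hTa.hasDerivAt
    (fun x t h => hy _ _ _ h x) (fun x t h => hz _ _ h x) (fun x t h => hen _ _ h x)
    (fun x t h => hperiodic _ _ _ h x) (hinit a E c hp) (fun t h => hinit' _ _ _ h)
  simp only [hM]
  rw [hME.deriv, hMa.deriv]
  have hcont : Continuous fun x => u x a E c := (hux a E c hp).continuous
  have hz0 := hinit' a E c hp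
  have hzT : deriv (fun y => u y a E c) (T (a, E, c)) = 0 := by
    rw [← hz0]
    have h1 := (hy a E c hp (0 + T (a, E, c))).comp_add_const 0 (T (a, E, c))
    have h2 := (h1.congr_of_eventuallyEq
      (.of_forall fun y => (hperiodic a E c hp y).symm)).unique (hy a E c hp 0)
    simpa using h2
  exact jacobian_pos (c := c) (m := c - 1) (a := a) (E := E) (y := fun x => u x a E c)
    (n := fun x => ∫ s in (0:ℝ)..x, u s a E c) hc0
    (hTpos _ hp) (hy a E c hp) (hz a E hp)
    (fun x => hcont.integral_hasStrictDerivAt 0 x |>.hasDerivAt) (hen a E hp)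
    (by simp) (hinit a E c hp) hz0 hzT (hperiodic a E c hp) (hnc a E c hp) hp' hΔ
    hv hw hvT hw0 hwT (by simpa using hv0) hV hW hVT hW0 hWT (by simpa using hV0)
end
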